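/- Let k be a field of characteristic p > 0 with at least 3 elements, K* = k(x,y), u = x^p(1+y), v = y^p + x, K = k(u,v), B = k[x,y]_{(x,y)}, A = k[u,v]_{(u,v)}. Then there exists an additive valuation ν* : (K*)^× → ℝ, trivial on k^× (ν*(c) = 0 for all nonzero c ∈ k), with ν*(x) = 1, whose value group ν*((K*)^×) equals ℤ[1/p] = { m/p^j : m ∈ ℤ, j ∈ ℕ }, whose valuation ring V* = {0} ∪ {f ∈ K* : ν*(f) ≥ 0} dominates B and has residue field V*/m_{V*} = k, such that the restriction of ν* to K satisfies ν*(u) = p and ν*(K^×) = ℤ[1/p], and such that there do NOT exist regular algebraic local rings A' of K over k and B' of K* over k with V* dominating B', B' dominating A', A' dominating A, B' dominating B, and A' → B' a monomial extension. -/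

import Mathlib

/-! Counterexample to local and weak local monomialization in positive
characteristic (Cutkosky).  Statement 2: the valuation `ν*` of the
counterexample, with value group `ℤ[1/p]` and residue field `k`. -/

open MvPolynomial

section Defs

variable {F : Type} [Field F]

/-- `V` is a valuation ring of the field `F`: a proper subring such that for
every nonzero `f ∈ F`, either `f ∈ V` or `f⁻¹ ∈ V`. -/
def IsValuationSubring (V : Subring F) : Prop :=
  V ≠ ⊤ ∧ ∀ z : F, z ≠ 0 → z ∈ V ∨ z⁻¹ ∈ V

/-- `S` dominates `R`: `R ⊆ S` and `m_S ∩ R = m_R`, i.e. an element of `R` is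
a non-unit of `S` if and only if it is a non-unit of `R`. -/
def Dominates (S R : Subring F) : Prop :=
  ∃ _ : R ≤ S, ∀ (z : F) (hR : z ∈ R) (hS : z ∈ S),
    (¬ IsUnit (⟨z, hS⟩ : S) ↔ ¬ IsUnit (⟨z, hR⟩ : R))

/-- `A` is a regular local ring of Krull dimension `n`: a Noetherian local
ring whose maximal ideal (= the ideal of non-units) is generated by
`n = dim A` elements (a regular system of parameters). -/
def IsRegularLocalOfDim (A : Subring F) (n : ℕ) : Prop :=
  IsNoetherianRing A ∧ IsLocalRing A ∧ ringKrullDim A = n ∧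
  ∃ s : Fin n → A, ∀ z : A, z ∈ Ideal.span (Set.range s) ↔ ¬ IsUnit z

/-- `A → B` is a monomial extension: `A` and `B` are regular local rings of a
common dimension `n` and there are regular systems of parameters
`x₁, …, xₙ` of `A` and `y₁, …, yₙ` of `B`, units `δ₁, …, δₙ` of `B` and an
`n × n` matrix `(a_{ij})` of natural numbers with nonzero determinant such
that `xᵢ = δᵢ ∏_j y_j^(a_{ij})` for all `i`. -/
def IsMonomialExtension (A B : Subring F) : Prop :=
  ∃ (n : ℕ) (hAB : A ≤ B),
    IsRegularLocalOfDim A n ∧ IsRegularLocalOfDim B n ∧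
    ∃ (xs : Fin n → A) (ys : Fin n → B) (δ : Fin n → B)
      (M : Matrix (Fin n) (Fin n) ℕ),
      (∀ z : A, z ∈ Ideal.span (Set.range xs) ↔ ¬ IsUnit z) ∧
      (∀ z : B, z ∈ Ideal.span (Set.range ys) ↔ ¬ IsUnit z) ∧
      (∀ i, IsUnit (δ i)) ∧
      (M.map ((↑·) : ℕ → ℚ)).det ≠ 0 ∧
      (∀ i, Subring.inclusion hAB (xs i) = δ i * ∏ j, (ys j) ^ (M i j))

variable (k : Type) [Field k] [Algebra k F]

/-- `A` is an algebraic local ring of `L` over `k`: a local domain with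
quotient field `L` which is essentially of finite type over `k`, i.e. a
localization of a finitely generated `k`-subalgebra `C` of `L` at a prime
ideal (necessarily `C ∩ m_A`): every element of `A` can be written as `a/b`
with `a, b ∈ C` and `b` a unit of `A`. -/
def IsAlgebraicLocalRingOf (L : IntermediateField k F) (A : Subring F) : Prop :=
  (A : Set F) ⊆ L ∧
  IsLocalRing A ∧
  (∀ z ∈ L, ∃ a ∈ A, ∃ b ∈ A, b ≠ 0 ∧ z * b = a) ∧
  ∃ C : Subalgebra k F, C.FG ∧ (C : Set F) ⊆ A ∧
    ∀ z ∈ A, ∃ a ∈ C, ∃ b ∈ C, (∃ b' ∈ A, b * b' = 1) ∧ z * b = a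

/-- The image in `F` of the localization of `k[x,y]` at the maximal ideal
`(x,y)` under a ring homomorphism `φ : k[x,y] →+* F`: the set of all
`z ∈ F` of the form `φ(f)/φ(g)` with `f, g ∈ k[x,y]` and `g(0,0) ≠ 0`.
For `φ` the canonical map into `F = k(x,y)` this is `k[x,y]_(x,y)`, and for
`φ = evaluation at (u,v)` (with `u, v` algebraically independent) it is
`k[u,v]_(u,v)`. -/
def localSubring {k : Type} [Field k] (φ : MvPolynomial (Fin 2) k →+* F) :
    Subring F where
  carrier := {z | ∃ f g : MvPolynomial (Fin 2) k,
    constantCoeff g ≠ 0 ∧ z * φ g = φ f}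
  zero_mem' := ⟨0, 1, by simp⟩
  one_mem' := ⟨1, 1, by simp⟩
  add_mem' := by
    rintro z₁ z₂ ⟨f₁, g₁, hg₁, h₁⟩ ⟨f₂, g₂, hg₂, h₂⟩
    refine ⟨f₁ * g₂ + f₂ * g₁, g₁ * g₂, by simp [mul_ne_zero hg₁ hg₂], ?_⟩
    rw [map_mul, map_add, map_mul, map_mul, ← h₁, ← h₂]
    ring
  mul_mem' := by
    rintro z₁ z₂ ⟨f₁, g₁, hg₁, h₁⟩ ⟨f₂, g₂, hg₂, h₂⟩
    refine ⟨f₁ * f₂, g₁ * g₂, by simp [mul_ne_zero hg₁ hg₂], ?_⟩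
    rw [map_mul, map_mul, ← h₁, ← h₂]
    ring
  neg_mem' := by
    rintro z ⟨f, g, hg, h⟩
    exact ⟨-f, g, hg, by rw [map_neg, ← h]; ring⟩

end Defs

/-!
Fix nonzero `α n ∈ k` and put `Z 0 = x`, `Z 1 = y`, `Z n = Z (n + 1) ^ p * (α n + Z (n + 2))`. Each
such substitution divides a degree of a given polynomial by `p`, so every nonzero element of `K*`
eventually becomes a power of some `Z N` times a unit; this determines a valuation `ν` with
`ν (Z n) = 1 / p ^ n` and residue field `k`.

The shape `u = x ^ p * unit`, `v = y ^ p * unit + x * unit` reproduces itself: `v` is `y ^ p` times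
a unit as long as `t + α s ≠ 0`, where `t`, `s` are the residues of the two units, and `v` and
`u / v ^ p` minus its residue have the same shape over the next pair `Z 1`, `Z 2`. An `α n` avoiding
`0` and `-t / s` exists because `k` has three elements. So `u`, `v` start a chain `U` of the same
kind as `Z`, with `ν (U n) = p / p ^ n`.

Regular local rings of dimension two along `ν` arise by blowing up, hence are localizations of
`k[Z m / Z (m + 1) ^ j, Z (m + 1)]` with `j < p`, respectively of the analogous rings for `U`.
Suppose some such extension `A' → B'` is monomial. Blowing up preserves monomial form, so `U m`,
`U (m + 1)` also have parameters that are monomials in parameters of `B'`; the shape then forces one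
of these monomials to be `ε * d ^ (p ^ 2)` with `ε` a unit. In characteristic `p` the factor
`d ^ (p ^ 2)` passes through derivations, so it divides the Jacobian of `U m`, `U (m + 1)`. For
`z = Z m / Z (m + 1) ^ j` and `w = Z (m + 1)` that Jacobian is, up to a unit,
`z ^ p * w ^ (j * p + j)` times the one of `z` and `w`; as `p` and `j * p + j` are less than
`p ^ 2`, no power `d ^ (p ^ 2)` of a prime `d` divides `z ^ p * w ^ (j * p + j)`.
-/

section RegularLocalDimTwo

open IsLocalRing

theorem exists_isUnit_eq_mul_pow_of_maximalIdeal_eq_span_singleton {R : Type*} [CommRing R]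
    [IsLocalRing R] [IsNoetherianRing R] {d : R} (hd : maximalIdeal R = Ideal.span {d}) {z : R}
    (hz : z ≠ 0) : ∃ (ε : R) (n : ℕ), IsUnit ε ∧ z = ε * d ^ n := by
  have hfin : FiniteMultiplicity d z := by
    by_contra hn
    refine hz (Ideal.mem_bot.1 ?_)
    rw [← Ideal.iInf_pow_eq_bot_of_isLocalRing _ (maximalIdeal.isMaximal R).ne_top, hd]
    simpa only [Ideal.mem_iInf, Ideal.span_singleton_pow, Ideal.mem_span_singleton] using
      FiniteMultiplicity.not_iff_forall.1 hn
  obtain ⟨ε, hε, hdε⟩ := hfin.exists_eq_pow_mul_and_not_dvd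
  refine ⟨ε, multiplicity d z, ?_, hε.trans (mul_comm _ _)⟩
  rwa [← notMem_maximalIdeal, hd, Ideal.mem_span_singleton]

variable {S : Type*} [CommRing S] [IsLocalRing S] {c d : S}

theorem maximalIdeal_quotient_span_singleton_eq [IsLocalRing (S ⧸ Ideal.span {c})]
    (hcd : maximalIdeal S = Ideal.span {c, d}) :
    maximalIdeal (S ⧸ Ideal.span {c}) = Ideal.span {Ideal.Quotient.mk _ d} := by
  have hc : Ideal.Quotient.mk (Ideal.span {c}) c = 0 :=
    Ideal.Quotient.eq_zero_iff_mem.2 (Ideal.mem_span_singleton_self c)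
  rw [← map_maximalIdeal_of_surjective _ Ideal.Quotient.mk_surjective, hcd, Ideal.map_span,
    Set.image_pair, hc, Ideal.span_insert_zero]

variable [IsNoetherianRing S]

theorem not_dvd_pow_of_maximalIdeal_eq_span_pair (hdim : ringKrullDim S = 2)
    (hcd : maximalIdeal S = Ideal.span {c, d}) (N : ℕ) : ¬ c ∣ d ^ N := by
  intro hdvd
  have hmin : maximalIdeal S ∈ (Ideal.span {c}).minimalPrimes := by
    refine ⟨⟨inferInstance, hcd ▸ Ideal.span_mono (by simp)⟩, ?_⟩
    rintro q ⟨hq, hcq⟩ -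
    have hc : c ∈ q := hcq (Ideal.mem_span_singleton_self c)
    have hd : d ∈ q := hq.mem_of_pow_mem N (Ideal.mem_of_dvd q hdvd hc)
    rw [hcd, Ideal.span_le]
    exact Set.pair_subset hc hd
  have hle : ((maximalIdeal S).height : WithBot ℕ∞) ≤ (1 : ℕ∞) := by
    exact_mod_cast Ideal.height_le_one_of_isPrincipal_of_mem_minimalPrimes _ _ hmin
  rw [maximalIdeal_height_eq_ringKrullDim, hdim] at hle
  exact absurd hle (by decide)

theorem exists_eq_unit_mul_pow_add (hcd : maximalIdeal S = Ideal.span {c, d}) {z : S}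
    (hz : ¬ c ∣ z) : ∃ (ε h : S) (n : ℕ), IsUnit ε ∧ z = ε * d ^ n + c * h := by
  have hc : Ideal.span {c} ≠ ⊤ := fun h => hz (Ideal.span_singleton_eq_top.1 h).dvd
  have : Nontrivial (S ⧸ Ideal.span {c}) := Ideal.Quotient.nontrivial_iff.2 hc
  have : IsLocalRing (S ⧸ Ideal.span {c}) := .of_surjective' _ Ideal.Quotient.mk_surjective
  have hz' : Ideal.Quotient.mk (Ideal.span {c}) z ≠ 0 := by
    rwa [Ne, Ideal.Quotient.eq_zero_iff_mem, Ideal.mem_span_singleton]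
  obtain ⟨η, n, hη, hzη⟩ := exists_isUnit_eq_mul_pow_of_maximalIdeal_eq_span_singleton
    (maximalIdeal_quotient_span_singleton_eq hcd) hz'
  obtain ⟨ε, rfl⟩ := Ideal.Quotient.mk_surjective η
  have : IsLocalHom (Ideal.Quotient.mk (Ideal.span {c})) :=
    .of_surjective _ Ideal.Quotient.mk_surjective
  rw [← map_pow, ← map_mul, Ideal.Quotient.mk_eq_mk_iff_sub_mem, Ideal.mem_span_singleton] at hzη
  obtain ⟨h, hh⟩ := hzη
  exact ⟨ε, h, n, hη.of_map, by rw [← hh]; ring⟩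

theorem prime_of_maximalIdeal_eq_span_pair (hdim : ringKrullDim S = 2)
    (hcd : maximalIdeal S = Ideal.span {c, d}) : Prime c := by
  refine ⟨?_, (mem_maximalIdeal c).1 (hcd ▸ Ideal.subset_span (by simp)), ?_⟩
  · rintro rfl
    have hdc : maximalIdeal S = Ideal.span {d, 0} := by rw [hcd, Set.pair_comm]
    exact not_dvd_pow_of_maximalIdeal_eq_span_pair hdim hdc 1 (by simp)
  · intro a b hab
    by_contra! hn
    obtain ⟨ε, h, n, hε, rfl⟩ := exists_eq_unit_mul_pow_add hcd hn.1
    obtain ⟨ε', h', n', hε', rfl⟩ := exists_eq_unit_mul_pow_add hcd hn.2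
    apply not_dvd_pow_of_maximalIdeal_eq_span_pair hdim hcd (n + n')
    rw [← (hε.mul hε').dvd_mul_left]
    obtain ⟨t, ht⟩ := hab
    exact ⟨t - h * (ε' * d ^ n' + c * h') - ε * d ^ n * h', by linear_combination ht⟩

theorem exists_mem_forall_dvd_sub_of_prime (hc : Prime c)
    (hcd : maximalIdeal S = Ideal.span {c, d}) (P : Ideal S) :
    ∃ g ∈ P, ∀ f ∈ P, ∃ s, c ∣ f - s * g := by
  have : (Ideal.span {c}).IsPrime := (Ideal.span_singleton_prime hc.ne_zero).2 hc
  have : IsLocalRing (S ⧸ Ideal.span {c}) := .of_surjective' _ Ideal.Quotient.mk_surjective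
  have hprincipal : (maximalIdeal (S ⧸ Ideal.span {c})).IsPrincipal :=
    ⟨_, maximalIdeal_quotient_span_singleton_eq hcd⟩
  have : IsPrincipalIdealRing (S ⧸ Ideal.span {c}) :=
    ((tfae_of_isNoetherianRing_of_isLocalRing_of_isDomain _).out 4 0).1 hprincipal
  obtain ⟨γ, hγ⟩ :=
    (IsPrincipalIdealRing.principal (P.map (Ideal.Quotient.mk (.span {c})))).principal
  obtain ⟨g, hg, rfl⟩ := (Ideal.mem_map_iff_of_surjective _ Ideal.Quotient.mk_surjective).1
    (hγ ▸ Submodule.mem_span_singleton_self γ)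
  refine ⟨g, hg, fun f hf => ?_⟩
  obtain ⟨σ, hσ⟩ := Submodule.mem_span_singleton.1 (hγ ▸ Ideal.mem_map_of_mem _ hf)
  obtain ⟨s, rfl⟩ := Ideal.Quotient.mk_surjective σ
  refine ⟨s, ?_⟩
  rw [← Ideal.mem_span_singleton, ← Ideal.Quotient.eq_zero_iff_mem, map_sub, map_mul, ← hσ,
    smul_eq_mul, sub_self]

theorem eq_span_singleton_of_forall_dvd_sub {P : Ideal S} [hP : P.IsPrime]
    (hc : c ∈ maximalIdeal S) (hcP : c ∉ P) {g : S} (hg : g ∈ P)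
    (h : ∀ f ∈ P, ∃ s, c ∣ f - s * g) : P = Ideal.span {g} := by
  refine le_antisymm ?_ ((Ideal.span_singleton_le_iff_mem P).2 hg)
  refine Submodule.le_of_le_smul_of_le_jacobson_bot (IsNoetherian.noetherian P)
    (maximalIdeal_le_jacobson _) fun f hf => ?_
  obtain ⟨s, t, hst⟩ := h f hf
  have hct : c * t ∈ P := hst ▸ P.sub_mem hf (P.mul_mem_left s hg)
  rw [show f = s * g + c * t by linear_combination hst]
  exact Submodule.add_mem_sup (Ideal.mem_span_singleton'.2 ⟨s, rfl⟩)
    (Ideal.mul_mem_mul hc ((hP.mem_or_mem hct).resolve_left hcP))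

theorem uniqueFactorizationMonoid_of_maximalIdeal_eq_span_pair [IsDomain S]
    (hdim : ringKrullDim S = 2) (hcd : maximalIdeal S = Ideal.span {c, d}) :
    UniqueFactorizationMonoid S := by
  have hc := prime_of_maximalIdeal_eq_span_pair hdim hcd
  refine UniqueFactorizationMonoid.iff_exists_prime_mem_of_isPrime.2 fun P hP hPp => ?_
  by_cases hcP : c ∈ P
  · exact ⟨c, hcP, hc⟩
  obtain ⟨g, hg, hgP⟩ := exists_mem_forall_dvd_sub_of_prime hc hcd P
  have hPg := eq_span_singleton_of_forall_dvd_sub (hcd ▸ Ideal.subset_span (by simp)) hcP hg hgP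
  have hg0 : g ≠ 0 := by
    rintro rfl
    exact hP (by simpa using hPg)
  exact ⟨g, hg, (Ideal.span_singleton_prime hg0).1 (hPg ▸ hPp)⟩

end RegularLocalDimTwo

section BirationalFactorization

open IsLocalRing

theorem span_pair_pow_le {R : Type*} [CommRing R] (a b : R) (e : ℕ) :
    Ideal.span {a, b} ^ e ≤
      Ideal.span (Set.range fun i : Fin (e + 1) => a ^ (i : ℕ) * b ^ (e - i)) := by
  induction e with
  | zero => simp
  | succ e ih =>
    rw [pow_succ']
    refine (Ideal.mul_mono_right ih).trans ?_
    rw [Ideal.span_mul_span', Ideal.span_le]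
    rintro _ ⟨_, rfl | rfl, _, ⟨i, rfl⟩, rfl⟩
    · refine Ideal.subset_span ⟨i.succ, ?_⟩
      simp only [Fin.val_succ, Nat.add_sub_add_right]
      ring
    · refine Ideal.subset_span ⟨i.castSucc, ?_⟩
      simp only [Fin.val_castSucc, Nat.succ_sub (Nat.lt_succ_iff.1 i.2), pow_succ]
      ring

theorem isPrimitive_C_mul_X_sub_C {R : Type*} [CommRing R] {r s : R} (hrs : IsRelPrime r s) :
    (Polynomial.C s * Polynomial.X - Polynomial.C r).IsPrimitive := by
  intro a ha
  rw [Polynomial.C_dvd_iff_dvd_coeff] at ha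
  exact hrs (by simpa using ha 0) (by simpa using ha 1)

variable {k : Type*} [Field k] {S : Type*} [CommRing S] [IsLocalRing S]

theorem X_mem_idealOfVars {σ : Type*} (i : σ) : X i ∈ idealOfVars σ k :=
  Ideal.subset_span ⟨i, rfl⟩

theorem mem_idealOfVars_iff_constantCoeff {σ : Type*} (P : MvPolynomial σ k) :
    P ∈ idealOfVars σ k ↔ constantCoeff P = 0 := by
  rw [← pow_one (idealOfVars σ k), mem_pow_idealOfVars_iff']
  simp [constantCoeff_eq, Finsupp.degree_eq_zero_iff]

theorem idealOfVars_fin_two_eq (k : Type*) [Field k] :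
    idealOfVars (Fin 2) k = Ideal.span {X 0, X 1} := by
  rw [idealOfVars, show Set.range X = {(X 0 : MvPolynomial (Fin 2) k), X 1} by
    ext; simp [Fin.exists_fin_two, eq_comm]]

theorem isMaximal_idealOfVars (σ k : Type*) [Field k] : (idealOfVars σ k).IsMaximal := by
  rw [show idealOfVars σ k = RingHom.ker constantCoeff from
    Ideal.ext mem_idealOfVars_iff_constantCoeff]
  exact RingHom.ker_isMaximal_of_surjective _ fun c => ⟨C c, constantCoeff_C _ c⟩

theorem mem_maximalIdeal_iff_constantCoeff {φ : MvPolynomial (Fin 2) k →+* S}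
    (h0 : φ (X 0) ∈ maximalIdeal S) (h1 : φ (X 1) ∈ maximalIdeal S) (P : MvPolynomial (Fin 2) k) :
    φ P ∈ maximalIdeal S ↔ constantCoeff P = 0 := by
  have hle : idealOfVars (Fin 2) k ≤ (maximalIdeal S).comap φ := by
    rw [idealOfVars_fin_two_eq, Ideal.span_le]
    exact Set.pair_subset h0 h1
  rw [← mem_idealOfVars_iff_constantCoeff,
    (isMaximal_idealOfVars _ _).eq_of_le
      (Ideal.comap_ne_top _ (maximalIdeal.isMaximal S).ne_top) hle, Ideal.mem_comap]

theorem eq_of_isRelPrime_of_mem_of_height_le_two {R : Type*} [CommRing R] [IsDomain R]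
    [UniqueFactorizationMonoid R] {𝔭 𝔪 : Ideal R} [h𝔭 : 𝔭.IsPrime] [𝔪.IsPrime]
    (hle : 𝔭 ≤ 𝔪) (h𝔪 : 𝔪.height ≤ 2) {P Q : R} (hPQ : IsRelPrime P Q) (hQ0 : Q ≠ 0)
    (hP : P ∈ 𝔭) (hQ : Q ∈ 𝔭) : 𝔭 = 𝔪 := by
  by_contra hne
  obtain ⟨f, hf𝔭, hf⟩ := h𝔭.exists_mem_prime_of_ne_bot (Submodule.ne_bot_iff _ |>.2 ⟨Q, hQ, hQ0⟩)
  have : (Ideal.span {f}).IsPrime := (Ideal.span_singleton_prime hf.ne_zero).2 hf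
  have hbot : ⊥ < Ideal.span {f} := bot_lt_iff_ne_bot.2 (by simpa using hf.ne_zero)
  have hlt : Ideal.span {f} < 𝔭 := by
    refine lt_of_le_of_ne ((Ideal.span_singleton_le_iff_mem 𝔭).2 hf𝔭) ?_
    rintro rfl
    exact hf.not_isUnit (hPQ (Ideal.mem_span_singleton.1 hP) (Ideal.mem_span_singleton.1 hQ))
  have hheight : (0 + 1 + 1 + 1 : ℕ∞) ≤ 2 := calc
    (0 + 1 + 1 + 1 : ℕ∞) ≤ (⊥ : Ideal R).height + 1 + 1 + 1 := by gcongr; exact zero_le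
    _ ≤ (Ideal.span {f}).height + 1 + 1 := by
      gcongr; exact Ideal.height_add_one_le_of_lt_of_isPrime hbot
    _ ≤ 𝔭.height + 1 := by gcongr; exact Ideal.height_add_one_le_of_lt_of_isPrime hlt
    _ ≤ 𝔪.height := Ideal.height_add_one_le_of_lt_of_isPrime (lt_of_le_of_ne hle hne)
    _ ≤ 2 := h𝔪
  exact absurd hheight (by decide)

theorem height_idealOfVars_fin_two_le : (idealOfVars (Fin 2) k).height ≤ 2 := by
  have hle := Ideal.height_le_ringKrullDim_of_ne_top (isMaximal_idealOfVars (Fin 2) k).ne_top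
  rw [MvPolynomial.ringKrullDim_of_isNoetherianRing, ringKrullDim_eq_zero_of_field] at hle
  have hle' : ((idealOfVars (Fin 2) k).height : WithBot ℕ∞) ≤ (2 : ℕ∞) := by simpa using hle
  exact_mod_cast hle'

theorem exists_mem_pow_idealOfVars {σ : Type*} [Finite σ] {Q : MvPolynomial σ k} (hQ : Q ≠ 0) :
    ∃ e, Q ∈ idealOfVars σ k ^ e ∧ Q ∉ idealOfVars σ k ^ (e + 1) := by
  by_contra! hn
  have hall : ∀ e, Q ∈ idealOfVars σ k ^ e := by
    intro e
    induction e with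
    | zero => simp
    | succ e ih => exact hn e ih
  have hinf := Ideal.iInf_pow_eq_bot_of_isDomain _ (isMaximal_idealOfVars σ k).ne_top
  exact hQ (Ideal.mem_bot.1 (hinf ▸ Ideal.mem_iInf.2 hall))

variable [IsDomain S] [UniqueFactorizationMonoid S] {r s : S}

theorem coeff_mem_maximalIdeal_of_aeval_div_eq_zero (hr : r ∈ maximalIdeal S)
    (hs : s ∈ maximalIdeal S) (hs0 : s ≠ 0) (hrs : IsRelPrime r s) {f : Polynomial S}
    (hf : Polynomial.aeval (algebraMap S (FractionRing S) r / algebraMap S _ s) f = 0) (i : ℕ) :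
    f.coeff i ∈ maximalIdeal S := by
  have hs0' : algebraMap S (FractionRing S) s ≠ 0 := by simpa using hs0
  have hlin : (Polynomial.C s * Polynomial.X - Polynomial.C r).map (algebraMap S (FractionRing S)) =
      Polynomial.C (algebraMap S _ s) *
        (Polynomial.X - Polynomial.C (algebraMap S _ r / algebraMap S _ s)) := by
    rw [mul_sub, ← Polynomial.C_mul, mul_div_cancel₀ _ hs0']
    simp
  have hdvd : Polynomial.C s * Polynomial.X - Polynomial.C r ∣ f := by
    refine (isPrimitive_C_mul_X_sub_C hrs).dvd_of_fraction_map_dvd_fraction_map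
      (K := FractionRing S) ?_
    rw [hlin, (Polynomial.isUnit_C.2 hs0'.isUnit).mul_left_dvd, Polynomial.dvd_iff_isRoot,
      Polynomial.IsRoot.def, Polynomial.eval_map_algebraMap, hf]
  obtain ⟨t, rfl⟩ := hdvd
  rw [← residue_eq_zero_iff, ← Polynomial.coeff_map, Polynomial.map_mul]
  simp [(residue_eq_zero_iff _).2 hr, (residue_eq_zero_iff _).2 hs]

theorem mem_maximalIdeal_of_sum_eq_zero (hr : r ∈ maximalIdeal S) (hs : s ∈ maximalIdeal S)
    (hs0 : s ≠ 0) (hrs : IsRelPrime r s) {e : ℕ} {c : Fin (e + 1) → S}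
    (h : ∑ i, c i * (r ^ (i : ℕ) * s ^ (e - i)) = 0) (i : Fin (e + 1)) : c i ∈ maximalIdeal S := by
  classical
  have hroot : Polynomial.aeval (algebraMap S (FractionRing S) r / algebraMap S _ s)
      (Polynomial.ofFn (e + 1) c) = 0 := by
    have hs0' : algebraMap S (FractionRing S) s ≠ 0 := by simpa using hs0
    refine mul_left_cancel₀ (pow_ne_zero e hs0') ?_
    rw [mul_zero, ← map_zero (algebraMap S (FractionRing S)), ← h, Polynomial.ofFn_eq_sum_monomial,
      map_sum, map_sum, Finset.mul_sum]
    refine Finset.sum_congr rfl fun i _ => ?_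
    rw [Polynomial.aeval_monomial, map_mul, map_mul, map_pow, map_pow, div_pow,
      pow_sub₀ _ hs0' (Nat.lt_succ_iff.1 i.2)]
    ring
  rw [← Polynomial.ofFn_coeff_eq_val_of_lt c i.2]
  exact coeff_mem_maximalIdeal_of_aeval_div_eq_zero hr hs hs0 hrs hroot i

variable {φ : MvPolynomial (Fin 2) k →+* S} {g : S}

theorem mem_pow_succ_idealOfVars_of_map_eq_mul (hg : g ≠ 0) (hr : r ∈ maximalIdeal S)
    (hs : s ∈ maximalIdeal S) (hs0 : s ≠ 0) (hrs : IsRelPrime r s) (h0 : φ (X 0) = g * r)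
    (h1 : φ (X 1) = g * s) {P Q : MvPolynomial (Fin 2) k} {e : ℕ}
    (hP : P ∈ idealOfVars (Fin 2) k ^ e) (hQ : Q ∈ idealOfVars (Fin 2) k ^ e) {z : S}
    (hz : z ∈ maximalIdeal S) (h : φ P = φ Q * z) : P ∈ idealOfVars (Fin 2) k ^ (e + 1) := by
  have h0' : φ (X 0) ∈ maximalIdeal S := h0 ▸ (maximalIdeal S).mul_mem_left g hr
  have h1' : φ (X 1) ∈ maximalIdeal S := h1 ▸ (maximalIdeal S).mul_mem_left g hs
  rw [idealOfVars_fin_two_eq] at hP hQ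
  obtain ⟨a, rfl⟩ := Ideal.mem_span_range_iff_exists_fun.1 (span_pair_pow_le _ _ e hP)
  obtain ⟨b, rfl⟩ := Ideal.mem_span_range_iff_exists_fun.1 (span_pair_pow_le _ _ e hQ)
  have hsum : ∑ i, (φ (a i) - φ (b i) * z) * (r ^ (i : ℕ) * s ^ (e - i)) = 0 := by
    refine mul_left_cancel₀ (pow_ne_zero e hg) ?_
    rw [map_sum, map_sum, Finset.sum_mul, ← sub_eq_zero, ← Finset.sum_sub_distrib] at h
    rw [mul_zero, Finset.mul_sum, ← h]
    refine Finset.sum_congr rfl fun i _ => ?_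
    have hge : g ^ e = g ^ (i : ℕ) * g ^ (e - i) := by
      rw [← pow_add, Nat.add_sub_cancel' (Nat.lt_succ_iff.1 i.2)]
    simp only [map_mul, map_pow, h0, h1, mul_pow, hge]
    ring
  refine Ideal.sum_mem _ fun i _ => ?_
  have hai : a i ∈ idealOfVars (Fin 2) k := by
    rw [mem_idealOfVars_iff_constantCoeff, ← mem_maximalIdeal_iff_constantCoeff h0' h1']
    simpa using (maximalIdeal S).add_mem (mem_maximalIdeal_of_sum_eq_zero hr hs hs0 hrs hsum i)
      ((maximalIdeal S).mul_mem_left (φ (b i)) hz)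
  have hmon : X 0 ^ (i : ℕ) * X 1 ^ (e - i) ∈ idealOfVars (Fin 2) k ^ ((i : ℕ) + (e - i)) := by
    rw [pow_add]
    exact Ideal.mul_mem_mul (Ideal.pow_mem_pow (X_mem_idealOfVars 0) _)
      (Ideal.pow_mem_pow (X_mem_idealOfVars 1) _)
  rw [Nat.add_sub_cancel' (Nat.lt_succ_iff.1 i.2)] at hmon
  rw [pow_succ']
  exact Ideal.mul_mem_mul hai hmon

theorem mem_pow_idealOfVars_of_map_eq_mul (hg : g ≠ 0) (hr : r ∈ maximalIdeal S)
    (hs : s ∈ maximalIdeal S) (hs0 : s ≠ 0) (hrs : IsRelPrime r s) (h0 : φ (X 0) = g * r)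
    (h1 : φ (X 1) = g * s) {P Q : MvPolynomial (Fin 2) k} {d : ℕ}
    (hQ : Q ∈ idealOfVars (Fin 2) k ^ d) {z : S} (hz : z ∈ maximalIdeal S) (h : φ P = φ Q * z) :
    P ∈ idealOfVars (Fin 2) k ^ (d + 1) := by
  suffices hP : ∀ e ≤ d + 1, P ∈ idealOfVars (Fin 2) k ^ e from hP _ le_rfl
  intro e he
  induction e with
  | zero => simp
  | succ e ih =>
    exact mem_pow_succ_idealOfVars_of_map_eq_mul hg hr hs hs0 hrs h0 h1 (ih (by omega))
      (Ideal.pow_le_pow_right (by omega) hQ) hz h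

theorem exists_constantCoeff_ne_zero_of_isRelPrime (h0 : φ (X 0) ∈ maximalIdeal S)
    (h1 : φ (X 1) ∈ maximalIdeal S) (h01 : IsRelPrime (φ (X 0)) (φ (X 1))) {z : S}
    (hz : ∃ P Q, φ Q ≠ 0 ∧ z * φ Q = φ P) : ∃ P Q, constantCoeff Q ≠ 0 ∧ z * φ Q = φ P := by
  obtain ⟨P, Q, hQ, hPQ⟩ := hz
  obtain ⟨Q', P', c, hrel, rfl, rfl⟩ := UniqueFactorizationMonoid.exists_reduced_factors Q
    (by rintro rfl; simp at hQ) P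
  rw [map_mul] at hQ
  have hQ' : φ Q' ≠ 0 := right_ne_zero_of_mul hQ
  have hPQ' : z * φ Q' = φ P' := by
    refine mul_left_cancel₀ (left_ne_zero_of_mul hQ) ?_
    simp only [map_mul] at hPQ
    linear_combination hPQ
  refine ⟨P', Q', fun hQ0 => ?_, hPQ'⟩
  rw [← mem_maximalIdeal_iff_constantCoeff h0 h1, mem_maximalIdeal] at hQ0
  obtain ⟨π, hπ, hπQ⟩ := WfDvdMonoid.exists_irreducible_factor hQ0 hQ'
  have hπ' : (Ideal.span {π}).IsPrime := (Ideal.span_singleton_prime hπ.ne_zero).2 hπ.prime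
  have hle : (Ideal.span {π}).comap φ ≤ idealOfVars (Fin 2) k := by
    intro T hT
    rw [mem_idealOfVars_iff_constantCoeff, ← mem_maximalIdeal_iff_constantCoeff h0 h1]
    exact Ideal.mem_of_dvd _ (Ideal.mem_span_singleton.1 hT) ((mem_maximalIdeal π).2 hπ.not_isUnit)
  have := (isMaximal_idealOfVars (Fin 2) k).isPrime
  have heq := eq_of_isRelPrime_of_mem_of_height_le_two hle height_idealOfVars_fin_two_le hrel.symm
    (by rintro rfl; simp at hQ')
    (Ideal.mem_comap.2 (Ideal.mem_span_singleton.2 (hPQ' ▸ hπQ.mul_left z)))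
    (Ideal.mem_comap.2 (Ideal.mem_span_singleton.2 hπQ))
  have hdvd (i : Fin 2) : π ∣ φ (X i) :=
    Ideal.mem_span_singleton.1 (Ideal.mem_comap.1 (heq ▸ X_mem_idealOfVars i))
  exact hπ.not_isUnit (h01 (hdvd 0) (hdvd 1))

theorem mem_pow_idealOfVars_of_X_mul_mem {σ : Type*} {i : σ} {P : MvPolynomial σ k} {e : ℕ}
    (h : X i * P ∈ idealOfVars σ k ^ (e + 1)) : P ∈ idealOfVars σ k ^ e := by
  rw [mem_pow_idealOfVars_iff'] at h ⊢
  intro m hm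
  rw [← coeff_X_mul m i P]
  exact h _ (by rw [map_add, Finsupp.degree_single]; omega)

theorem isUnit_of_map_X_eq_mul (hφ : ∃ P Q, φ Q ≠ 0 ∧ g * φ Q = φ P) (hg : g ≠ 0)
    (hr : r ∈ maximalIdeal S) (hs : s ∈ maximalIdeal S) (hs0 : s ≠ 0) (hrs : IsRelPrime r s)
    (h0 : φ (X 0) = g * r) (h1 : φ (X 1) = g * s) : IsUnit g := by
  obtain ⟨P, Q, hQ, hPQ⟩ := hφ
  obtain ⟨e, he, he'⟩ := exists_mem_pow_idealOfVars (Q := Q) (by rintro rfl; simp at hQ)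
  by_contra hgu
  have hP : P ∈ idealOfVars (Fin 2) k ^ (e + 1) :=
    mem_pow_idealOfVars_of_map_eq_mul hg hr hs hs0 hrs h0 h1 he ((mem_maximalIdeal g).2 hgu)
      (by rw [← hPQ, mul_comm])
  have hXQ : X 1 * Q ∈ idealOfVars (Fin 2) k ^ (e + 1 + 1) :=
    mem_pow_idealOfVars_of_map_eq_mul hg hr hs hs0 hrs h0 h1 hP hs
      (by rw [map_mul, h1, ← hPQ]; ring)
  exact he' (mem_pow_idealOfVars_of_X_mul_mem hXQ)

theorem dvd_or_dvd_or_exists_constantCoeff_ne_zero (h0 : φ (X 0) ∈ maximalIdeal S)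
    (h1 : φ (X 1) ∈ maximalIdeal S) (hφ : ∀ z : S, ∃ P Q, φ Q ≠ 0 ∧ z * φ Q = φ P) :
    φ (X 0) ∣ φ (X 1) ∨ φ (X 1) ∣ φ (X 0) ∨
      ∀ z : S, ∃ P Q, constantCoeff Q ≠ 0 ∧ z * φ Q = φ P := by
  by_contra! hn
  obtain ⟨hn1, hn2, z, hz⟩ := hn
  have hX0 : φ (X 0) ≠ 0 := fun h => hn2 (h ▸ dvd_zero _)
  obtain ⟨r, s, g, hrs, hr, hs⟩ := UniqueFactorizationMonoid.exists_reduced_factors _ hX0 (φ (X 1))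
  have hg : g ≠ 0 := by rintro rfl; simp [← hr] at hX0
  have hrm : r ∈ maximalIdeal S :=
    (mem_maximalIdeal r).2 fun hu => hn1 (hs ▸ hr ▸ mul_dvd_mul_left g hu.dvd)
  have hsm : s ∈ maximalIdeal S :=
    (mem_maximalIdeal s).2 fun hu => hn2 (hs ▸ hr ▸ mul_dvd_mul_left g hu.dvd)
  have hs0 : s ≠ 0 := by rintro rfl; exact hn1 (by simp [← hs])
  have hgu : IsUnit g := isUnit_of_map_X_eq_mul (hφ g) hg hrm hsm hs0 hrs hr.symm hs.symm
  have hX : IsRelPrime (φ (X 0)) (φ (X 1)) := by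
    rw [← hr, ← hs]
    exact (isRelPrime_mul_unit_left hgu).2 hrs
  obtain ⟨P, Q, hQ, hPQ⟩ := exists_constantCoeff_ne_zero_of_isRelPrime h0 h1 hX (hφ z)
  exact hz P Q hQ hPQ

end BirationalFactorization

section Dimension

variable {k F : Type*} [Field k] [Field F] [Algebra k F]

theorem ringKrullDim_le_of_finiteType {k R S : Type*} [Field k] [CommRing R] [Nontrivial R]
    [Algebra k R] [Algebra.FiniteType k R] [CommRing S] [Algebra k S] (f : R →ₐ[k] S)
    (hf : Function.Injective f) {d : ℕ} (hd : Algebra.trdeg k S ≤ d) : ringKrullDim R ≤ d := by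
  obtain ⟨s, g, hg, hinteg⟩ := exists_integral_inj_algHom_of_fg k R
  have hs : s ≤ d := by
    have hindep : AlgebraicIndependent k fun i => f (g (X i)) := by
      have h : Function.Injective (f.comp g) := hf.comp hg
      rw [AlgebraicIndependent]
      convert h using 2
      ext i
      simp
    simpa using hindep.lift_cardinalMk_le_trdeg.trans (Cardinal.lift_le.2 hd)
  let := g.toRingHom.toAlgebra
  have : Algebra.IsIntegral (MvPolynomial (Fin s) k) R := ⟨hinteg⟩
  have hle : ringKrullDim R ≤ ringKrullDim (MvPolynomial (Fin s) k) :=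
    Order.krullDim_le_of_strictMono
      (PrimeSpectrum.comap (algebraMap (MvPolynomial (Fin s) k) R))
      fun I J hIJ => Ideal.IsIntegral.comap_lt_comap (R := MvPolynomial (Fin s) k)
        (I := I.asIdeal) (J := J.asIdeal) hIJ
  rw [MvPolynomial.ringKrullDim_of_isNoetherianRing, ringKrullDim_eq_zero_of_field] at hle
  refine hle.trans ?_
  simp only [Nat.card_eq_fintype_card, Fintype.card_fin, zero_add]
  exact_mod_cast hs

theorem ringKrullDim_le_of_essFiniteType (T : Subring F) (C : Subalgebra k F) (hC : C.FG)
    (hCT : (C : Set F) ⊆ T)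
    (h : ∀ z ∈ T, ∃ a ∈ C, ∃ b ∈ C, (∃ b' ∈ T, b * b' = 1) ∧ z * b = a) {d : ℕ}
    (hd : Algebra.trdeg k F ≤ d) : ringKrullDim T ≤ d := by
  have : Algebra.FiniteType k C := C.fg_iff_finiteType.1 hC
  refine le_trans ?_ (ringKrullDim_le_of_finiteType C.val Subtype.val_injective hd)
  let ι : C →+* T := (algebraMap C F).codRestrict T fun c => hCT c.2
  refine Order.krullDim_le_of_strictMono (PrimeSpectrum.comap ι) ?_
  refine Monotone.strictMono_of_injective (fun I J hIJ => Ideal.comap_mono hIJ) ?_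
  have le_of_comap_eq : ∀ I J : PrimeSpectrum T,
      PrimeSpectrum.comap ι I = PrimeSpectrum.comap ι J → I.asIdeal ≤ J.asIdeal := by
    intro I J hIJ z hz
    obtain ⟨a, ha, b, hb, ⟨b', hb', hbb⟩, hab⟩ := h z z.2
    have ha_eq : ι ⟨a, ha⟩ = z * ι ⟨b, hb⟩ := Subtype.ext hab.symm
    have hz_eq : z = ι ⟨a, ha⟩ * ⟨b', hb'⟩ := by
      refine Subtype.ext ?_
      rw [ha_eq]
      change (z : F) = z * b * b'
      rw [mul_assoc, hbb, mul_one]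
    have haI : (⟨a, ha⟩ : C) ∈ (PrimeSpectrum.comap ι I).asIdeal := by
      change ι ⟨a, ha⟩ ∈ I.asIdeal
      rw [ha_eq]
      exact I.asIdeal.mul_mem_right _ hz
    rw [hIJ] at haI
    rw [hz_eq]
    exact J.asIdeal.mul_mem_right _ haI
  exact fun I J hIJ =>
    PrimeSpectrum.ext (le_antisymm (le_of_comap_eq I J hIJ) (le_of_comap_eq J I hIJ.symm))

theorem algebraicIndependent_pair_of_adjoin_eq_top {r s : F} (htr : 2 ≤ Algebra.trdeg k F)
    (h : IntermediateField.adjoin k {r, s} = ⊤) : AlgebraicIndependent k ![r, s] := by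
  have hrange : Set.range ![r, s] = {r, s} := by simp [Matrix.range_cons, Set.pair_comm]
  have : Algebra.IsAlgebraic (Algebra.adjoin k (Set.range ![r, s])) F := by
    rw [hrange]
    constructor
    intro z
    have hz : z ∈ IntermediateField.adjoin k {r, s} := h ▸ IntermediateField.mem_top
    rw [IntermediateField.mem_adjoin_iff_div] at hz
    obtain ⟨a, ha, b, hb, rfl⟩ := hz
    rw [div_eq_mul_inv]
    exact (isAlgebraic_algebraMap (A := F) (⟨a, ha⟩ : Algebra.adjoin k {r, s})).mul
      (isAlgebraic_algebraMap (A := F) (⟨b, hb⟩ : Algebra.adjoin k {r, s})).inv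
  exact (Algebra.IsAlgebraic.isTranscendenceBasis_of_lift_le_trdeg_of_finite k _ (by
    simpa using htr)).1

theorem trdeg_fractionRing_mvPolynomial_fin_two :
    Algebra.trdeg k (FractionRing (MvPolynomial (Fin 2) k)) = 2 := by
  have : Algebra.IsAlgebraic (MvPolynomial (Fin 2) k) (FractionRing (MvPolynomial (Fin 2) k)) :=
    IsLocalization.isAlgebraic _ (nonZeroDivisors (MvPolynomial (Fin 2) k))
  rw [← trdeg_add_eq k (MvPolynomial (Fin 2) k), MvPolynomial.trdeg_of_isDomain,
    trdeg_eq_zero_iff.2 this]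
  simp

end Dimension

section PairLocal

variable {k F : Type} [Field k] [Field F] [Algebra k F]

variable (k) in
/-- The image in `F` of the localization of `k[X, Y]` at the origin under `X ↦ r`, `Y ↦ s`; for
algebraically independent `r, s` this is `k[r, s]_(r, s)`. -/
abbrev pairLocal (r s : F) : Subring F :=
  localSubring (aeval ![r, s] : MvPolynomial (Fin 2) k →ₐ[k] F).toRingHom

theorem mem_pairLocal_iff {r s z : F} : z ∈ pairLocal k r s ↔
    ∃ f g : MvPolynomial (Fin 2) k, constantCoeff g ≠ 0 ∧ z * aeval ![r, s] g = aeval ![r, s] f :=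
  Iff.rfl

theorem aeval_mem_pairLocal (r s : F) (f : MvPolynomial (Fin 2) k) :
    aeval ![r, s] f ∈ pairLocal k r s := ⟨f, 1, by simp⟩

theorem algebraMap_mem_pairLocal (r s : F) (c : k) : algebraMap k F c ∈ pairLocal k r s := by
  simpa using aeval_mem_pairLocal r s (C c)

theorem left_mem_pairLocal (r s : F) : r ∈ pairLocal k r s := by
  simpa using aeval_mem_pairLocal (k := k) r s (X 0)

theorem right_mem_pairLocal (r s : F) : s ∈ pairLocal k r s := by
  simpa using aeval_mem_pairLocal (k := k) r s (X 1)

theorem pairLocal_le_pairLocal {r s r' s' : F} {f g : MvPolynomial (Fin 2) k}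
    (hf : constantCoeff f = 0) (hg : constantCoeff g = 0) (hr : r = aeval ![r', s'] f)
    (hs : s = aeval ![r', s'] g) : pairLocal k r s ≤ pairLocal k r' s' := by
  rintro z ⟨P, Q, hQ, h⟩
  have haeval (P : MvPolynomial (Fin 2) k) :
      aeval ![r', s'] (bind₁ ![f, g] P) = aeval ![r, s] P := by
    rw [aeval_bind₁]
    congr 2
    ext i
    fin_cases i <;> simp [hr, hs]
  have hconst : (constantCoeff.comp (bind₁ ![f, g]).toRingHom :
      MvPolynomial (Fin 2) k →+* k) = constantCoeff := by
    ext i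
    · simp
    · fin_cases i <;> simp [hf, hg]
  refine ⟨bind₁ ![f, g] P, bind₁ ![f, g] Q, ?_, by simpa [haeval] using h⟩
  rwa [← hconst] at hQ

theorem pairLocal_comm (r s : F) : pairLocal k r s = pairLocal k s r := by
  have hle (r s : F) : pairLocal k r s ≤ pairLocal k s r :=
    pairLocal_le_pairLocal (f := X 1) (g := X 0) (by simp) (by simp) (by simp) (by simp)
  exact le_antisymm (hle r s) (hle s r)

theorem inv_aeval_mem_pairLocal {r s : F} {f : MvPolynomial (Fin 2) k}
    (hf : constantCoeff f ≠ 0) (h0 : aeval ![r, s] f ≠ 0) :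
    (aeval ![r, s] f)⁻¹ ∈ pairLocal k r s :=
  ⟨1, f, hf, by simp [h0]⟩

theorem inv_left_notMem_pairLocal {r s : F} (h : AlgebraicIndependent k ![r, s]) :
    r⁻¹ ∉ pairLocal k r s := by
  intro hmem
  obtain ⟨f, g, hg, hfg⟩ := mem_pairLocal_iff.1 hmem
  have hr : r ≠ 0 := h.ne_zero 0
  have hgf : aeval ![r, s] g = aeval ![r, s] (X 0 * f) := by
    rw [map_mul, ← hfg]
    simp [hr]
  rw [show g = X 0 * f from h hgf] at hg
  simp at hg

end PairLocal

section QuadraticSubst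

open Polynomial (aeval_C aeval_X coeff_X_pow_mul coeff_X_pow_mul'
  coeff_eq_zero_of_lt_natTrailingDegree eval₂RingHom evalRingHom mapRingHom natDegree_add_le
  natDegree_mul_le natTrailingDegree)

open scoped Polynomial

variable {R : Type*} [CommRing R]

theorem exists_eq_X_pow_natTrailingDegree_mul (P : R[X]) :
    ∃ Q, P = Polynomial.X ^ P.natTrailingDegree * Q ∧ Q.coeff 0 = P.trailingCoeff := by
  obtain ⟨Q, hQ⟩ := Polynomial.X_pow_dvd_iff.2
    fun d (hd : d < P.natTrailingDegree) => coeff_eq_zero_of_lt_natTrailingDegree hd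
  have hcoeff := coeff_X_pow_mul Q P.natTrailingDegree 0
  rw [zero_add, ← hQ] at hcoeff
  exact ⟨Q, hQ, hcoeff.symm⟩

variable (R) in
/-- The bivariate polynomials in which the coefficient of `X ^ m` has degree at most `m / p`. It
contains the range of `quadraticSubst`, which is how the degree drops in
`exists_quadraticSubst_eq`. -/
def weightedSubring (p : ℕ) : Subring R[X][X] where
  carrier := {Q | ∀ m, p * (Q.coeff m).natDegree ≤ m}
  zero_mem' := by simp
  one_mem' := by
    intro m
    rw [Polynomial.coeff_one]
    split_ifs <;> simp
  add_mem' := by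
    intro P Q hP hQ m
    rw [Polynomial.coeff_add]
    refine (Nat.mul_le_mul_left p (natDegree_add_le _ _)).trans ?_
    rw [← Nat.mul_max_mul_left]
    exact max_le (hP m) (hQ m)
  mul_mem' := by
    intro P Q hP hQ m
    rw [Polynomial.coeff_mul]
    obtain rfl | hp := p.eq_zero_or_pos
    · simp
    rw [mul_comm, ← Nat.le_div_iff_mul_le hp]
    refine Polynomial.natDegree_sum_le_of_forall_le _ _ fun ij hij => ?_
    rw [Nat.le_div_iff_mul_le hp, mul_comm]
    refine (Nat.mul_le_mul_left p natDegree_mul_le).trans ?_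
    rw [mul_add, ← Finset.HasAntidiagonal.mem_antidiagonal.1 hij]
    exact add_le_add (hP _) (hQ _)
  neg_mem' := by
    intro P hP m
    simpa using hP m

/-- The substitution `X ↦ X ^ p * (α + Y)`, `Y ↦ X` on `R[Y][X]`, which expresses the parameters
`Z n`, `Z (n + 1)` of an `IsQuadraticChain` through `Z (n + 1)`, `Z (n + 2)`. -/
noncomputable def quadraticSubst (p : ℕ) (α : R) : R[X][X] →+* R[X][X] :=
  eval₂RingHom (mapRingHom Polynomial.C)
    (Polynomial.X ^ p * Polynomial.C (Polynomial.C α + Polynomial.X))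

theorem quadraticSubst_mem_weightedSubring (p : ℕ) (α : R) (P : R[X][X]) :
    quadraticSubst p α P ∈ weightedSubring R p := by
  have hmap (g : R[X]) : g.map Polynomial.C ∈ weightedSubring R p := fun m => by simp
  have hlin : (Polynomial.X ^ p * Polynomial.C (Polynomial.C α + Polynomial.X) : R[X][X]) ∈
      weightedSubring R p := by
    intro m
    rw [coeff_X_pow_mul', Polynomial.coeff_C]
    split_ifs with hpm
    · have hdeg : (Polynomial.C α + Polynomial.X).natDegree ≤ 1 :=
        Polynomial.natDegree_add_le_of_degree_le (by simp) Polynomial.natDegree_X_le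
      exact (Nat.mul_le_mul_left p hdeg).trans (by omega)
    · simp
    · simp
  rw [quadraticSubst, Polynomial.coe_eval₂RingHom, Polynomial.eval₂_eq_sum, Polynomial.sum]
  exact Subring.sum_mem _ fun i _ => Subring.mul_mem _ (hmap _) (Subring.pow_mem _ hlin i)

theorem map_evalRingHom_neg_quadraticSubst (p : ℕ) (α : R) (P : R[X][X]) :
    (quadraticSubst p α P).map (evalRingHom (-α)) = P.coeff 0 := by
  have hcomp : (mapRingHom (evalRingHom (-α))).comp (quadraticSubst p α) =
      Polynomial.constantCoeff := by
    refine Polynomial.ringHom_ext' (Polynomial.ringHom_ext' ?_ ?_) ?_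
    · ext c
      simp [quadraticSubst]
    all_goals simp [quadraticSubst]
  exact DFunLike.congr_fun hcomp P

theorem exists_quadraticSubst_eq (p : ℕ) (α : R) {P : R[X][X]} (hP : P.coeff 0 ≠ 0) :
    ∃ (m : ℕ) (Q : R[X][X]), quadraticSubst p α P = Polynomial.X ^ m * Q ∧ Q.coeff 0 ≠ 0 ∧
      p * (Q.coeff 0).natDegree ≤ (P.coeff 0).natDegree := by
  have hcoeff : (quadraticSubst p α P).coeff (P.coeff 0).natDegree ≠ 0 := by
    intro h
    have hlead := congr_arg (Polynomial.coeff · (P.coeff 0).natDegree)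
      (map_evalRingHom_neg_quadraticSubst p α P)
    simp only [Polynomial.coeff_map, h, map_zero] at hlead
    exact hP (Polynomial.leadingCoeff_eq_zero.1 hlead.symm)
  have hne : quadraticSubst p α P ≠ 0 := fun h => hcoeff (by rw [h, Polynomial.coeff_zero])
  obtain ⟨Q, hQ, hQ0⟩ := exists_eq_X_pow_natTrailingDegree_mul (quadraticSubst p α P)
  refine ⟨_, Q, hQ, ?_, ?_⟩
  · rw [hQ0]
    exact Polynomial.trailingCoeff_nonzero_iff_nonzero.2 hne
  · rw [hQ0]
    exact (quadraticSubst_mem_weightedSubring p α P _).trans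
      (Polynomial.natTrailingDegree_le_of_ne_zero hcoeff)

variable (R) in
/-- The identification of `R[Y][X]` with `R[X, Y]`. -/
noncomputable def bivariateToMvPolynomial : R[X][X] →+* MvPolynomial (Fin 2) R :=
  eval₂RingHom (Polynomial.aeval (X 1) : R[X] →ₐ[R] MvPolynomial (Fin 2) R).toRingHom (X 0)

theorem constantCoeff_bivariateToMvPolynomial (P : R[X][X]) :
    constantCoeff (bivariateToMvPolynomial R P) = (P.coeff 0).coeff 0 := by
  have hcomp : constantCoeff.comp (bivariateToMvPolynomial R) =
      Polynomial.constantCoeff.comp Polynomial.constantCoeff := by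
    refine Polynomial.ringHom_ext' (Polynomial.ringHom_ext' ?_ ?_) ?_
    · ext c
      simp [bivariateToMvPolynomial]
    all_goals simp [bivariateToMvPolynomial]
  exact DFunLike.congr_fun hcomp P

theorem bivariateToMvPolynomial_surjective :
    Function.Surjective (bivariateToMvPolynomial R) := by
  intro Q
  refine ⟨aeval ![Polynomial.X, Polynomial.C Polynomial.X] Q, ?_⟩
  have hcomp : (bivariateToMvPolynomial R).comp
      (aeval ![Polynomial.X, Polynomial.C Polynomial.X] :
        MvPolynomial (Fin 2) R →ₐ[R] R[X][X]).toRingHom = RingHom.id _ := by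
    refine MvPolynomial.ringHom_ext (fun c => by simp [bivariateToMvPolynomial]) fun i => ?_
    fin_cases i <;> simp [bivariateToMvPolynomial]
  exact DFunLike.congr_fun hcomp Q

end QuadraticSubst

section Chain

variable {k F : Type} [Field k] [Field F] [Algebra k F]

/-- `Z n = Z (n + 1) ^ p * (α n + Z (n + 2))` with `α n ≠ 0` and all `Z n` nonzero: the successive
regular parameters along a sequence of quadratic transforms. -/
structure IsQuadraticChain (p : ℕ) (α : ℕ → k) (Z : ℕ → F) : Prop where
  one_lt : 1 < p
  coeff_ne_zero : ∀ n, α n ≠ 0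
  ne_zero : ∀ n, Z n ≠ 0
  eq_mul : ∀ n, Z n = Z (n + 1) ^ p * (algebraMap k F (α n) + Z (n + 2))

variable (k) in
/-- `f` is the `m`-th power of `Z N` times a unit of `k[Z N, Z (N + 1)]` localized at the origin. -/
def IsPowMulUnit (Z : ℕ → F) (f : F) (N : ℕ) (m : ℤ) : Prop :=
  ∃ ε ∈ pairLocal k (Z N) (Z (N + 1)), ε ≠ 0 ∧ ε⁻¹ ∈ pairLocal k (Z N) (Z (N + 1)) ∧
    f = Z N ^ m * ε

variable {p : ℕ} {α : ℕ → k} {Z : ℕ → F} {f g : F} {N : ℕ} {m n : ℤ}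

namespace IsPowMulUnit

theorem mul (hf : IsPowMulUnit k Z f N m) (hg : IsPowMulUnit k Z g N n) (hN : Z N ≠ 0) :
    IsPowMulUnit k Z (f * g) N (m + n) := by
  obtain ⟨ε, hε, hε0, hε', rfl⟩ := hf
  obtain ⟨η, hη, hη0, hη', rfl⟩ := hg
  refine ⟨ε * η, Subring.mul_mem _ hε hη, mul_ne_zero hε0 hη0, ?_, ?_⟩
  · rw [mul_inv]
    exact Subring.mul_mem _ hε' hη'
  · rw [zpow_add₀ hN]
    ring

theorem inv (hf : IsPowMulUnit k Z f N m) : IsPowMulUnit k Z f⁻¹ N (-m) := by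
  obtain ⟨ε, hε, hε0, hε', rfl⟩ := hf
  exact ⟨ε⁻¹, hε', inv_ne_zero hε0, by simpa using hε, by rw [mul_inv, zpow_neg]⟩

theorem self_zpow (n : ℕ) (m : ℤ) : IsPowMulUnit k Z (Z n ^ m) n m :=
  ⟨1, Subring.one_mem _, one_ne_zero, by simp, by simp⟩

theorem ne_zero (hf : IsPowMulUnit k Z f N m) (hN : Z N ≠ 0) : f ≠ 0 := by
  obtain ⟨ε, -, hε0, -, rfl⟩ := hf
  exact mul_ne_zero (zpow_ne_zero _ hN) hε0

theorem nonneg_of_mem (hind : AlgebraicIndependent k ![Z N, Z (N + 1)])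
    (hf : IsPowMulUnit k Z f N m) (hmem : f ∈ pairLocal k (Z N) (Z (N + 1))) : 0 ≤ m := by
  by_contra! hm
  obtain ⟨ε, -, hε0, hε', h⟩ := hf
  obtain ⟨j, rfl⟩ : ∃ j : ℕ, m = -((j : ℤ) + 1) := ⟨(-m - 1).toNat, by omega⟩
  have h0 : Z N ≠ 0 := hind.ne_zero 0
  have hinv : (Z N)⁻¹ = Z N ^ j * (f * ε⁻¹) := by
    rw [h, zpow_neg, zpow_add₀ h0, zpow_natCast, zpow_one]
    field_simp
  refine inv_left_notMem_pairLocal hind ?_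
  rw [hinv]
  exact Subring.mul_mem _ (Subring.pow_mem _ (left_mem_pairLocal _ _) _)
    (Subring.mul_mem _ hmem hε')

theorem unique (hind : AlgebraicIndependent k ![Z N, Z (N + 1)]) (hm : IsPowMulUnit k Z f N m)
    (hn : IsPowMulUnit k Z f N n) : m = n := by
  have h0 : Z N ≠ 0 := hind.ne_zero 0
  have hle {m n : ℤ} (hm : IsPowMulUnit k Z f N m) (hn : IsPowMulUnit k Z f N n) : n ≤ m := by
    have hone := hm.mul hn.inv h0
    rw [mul_inv_cancel₀ (hm.ne_zero h0)] at hone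
    linarith [hone.nonneg_of_mem hind (Subring.one_mem _)]
  exact le_antisymm (hle hn hm) (hle hm hn)

end IsPowMulUnit

namespace IsQuadraticChain

theorem pairLocal_le_succ (hZ : IsQuadraticChain p α Z) (n : ℕ) :
    pairLocal k (Z n) (Z (n + 1)) ≤ pairLocal k (Z (n + 1)) (Z (n + 2)) := by
  have hp : p ≠ 0 := hZ.one_lt.ne_bot
  exact pairLocal_le_pairLocal (f := X 0 ^ p * (C (α n) + X 1)) (g := X 0) (by simp [hp])
    (by simp) (by simpa using hZ.eq_mul n) (by simp)

theorem coeff_add_ne_zero (hZ : IsQuadraticChain p α Z) (n : ℕ) :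
    algebraMap k F (α n) + Z (n + 2) ≠ 0 :=
  right_ne_zero_of_mul (hZ.eq_mul n ▸ hZ.ne_zero n)

theorem coeff_add_zpow_mem (hZ : IsQuadraticChain p α Z) (n : ℕ) (m : ℤ) :
    (algebraMap k F (α n) + Z (n + 2)) ^ m ∈ pairLocal k (Z (n + 1)) (Z (n + 2)) := by
  have hunit : algebraMap k F (α n) + Z (n + 2) =
      aeval ![Z (n + 1), Z (n + 2)] (C (α n) + X 1 : MvPolynomial (Fin 2) k) := by simp
  have hne := hZ.coeff_add_ne_zero n
  rw [hunit] at hne ⊢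
  rcases Int.eq_nat_or_neg m with ⟨m, rfl | rfl⟩
  · rw [zpow_natCast]
    exact Subring.pow_mem _ (aeval_mem_pairLocal _ _ _) m
  · rw [zpow_neg, zpow_natCast, ← inv_pow]
    exact Subring.pow_mem _ (inv_aeval_mem_pairLocal (by simpa using hZ.coeff_ne_zero n) hne) m

theorem isPowMulUnit_succ (hZ : IsQuadraticChain p α Z) (h : IsPowMulUnit k Z f N m) :
    IsPowMulUnit k Z f (N + 1) (p * m) := by
  obtain ⟨ε, hε, hε0, hε', rfl⟩ := h
  refine ⟨(algebraMap k F (α N) + Z (N + 2)) ^ m * ε,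
    Subring.mul_mem _ (hZ.coeff_add_zpow_mem N m) (hZ.pairLocal_le_succ N hε),
    mul_ne_zero (zpow_ne_zero _ (hZ.coeff_add_ne_zero N)) hε0, ?_, ?_⟩
  · rw [mul_inv, ← zpow_neg]
    exact Subring.mul_mem _ (hZ.coeff_add_zpow_mem N _) (hZ.pairLocal_le_succ N hε')
  · conv_lhs => rw [hZ.eq_mul N]
    rw [mul_zpow, zpow_mul, zpow_natCast, mul_assoc]

theorem isPowMulUnit_add (hZ : IsQuadraticChain p α Z) (h : IsPowMulUnit k Z f N m) (j : ℕ) :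
    IsPowMulUnit k Z f (N + j) (p ^ j * m) := by
  induction j with
  | zero => simpa using h
  | succ j ih =>
    rw [pow_succ', mul_assoc]
    exact hZ.isPowMulUnit_succ ih

theorem exists_isPowMulUnit_mul (hZ : IsQuadraticChain p α Z)
    (hf : ∃ N m, IsPowMulUnit k Z f N m) (hg : ∃ N m, IsPowMulUnit k Z g N m) :
    ∃ N m, IsPowMulUnit k Z (f * g) N m := by
  obtain ⟨M, m, hf⟩ := hf
  obtain ⟨N, n, hg⟩ := hg
  exact ⟨_, _, (hZ.isPowMulUnit_add hf N).mul (add_comm N M ▸ hZ.isPowMulUnit_add hg M)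
    (hZ.ne_zero _)⟩

open scoped Polynomial

theorem aeval_bivariateToMvPolynomial_quadraticSubst (hZ : IsQuadraticChain p α Z) (n : ℕ)
    (P : k[X][X]) :
    aeval ![Z (n + 1), Z (n + 2)] (bivariateToMvPolynomial k (quadraticSubst p (α n) P)) =
      aeval ![Z n, Z (n + 1)] (bivariateToMvPolynomial k P) := by
  have hcomp : ((aeval ![Z (n + 1), Z (n + 2)]).toRingHom.comp (bivariateToMvPolynomial k)).comp
      (quadraticSubst p (α n)) =
      (aeval ![Z n, Z (n + 1)]).toRingHom.comp (bivariateToMvPolynomial k) := by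
    refine Polynomial.ringHom_ext' (Polynomial.ringHom_ext' ?_ ?_) ?_
    · ext c
      simp [bivariateToMvPolynomial, quadraticSubst]
    · simp [bivariateToMvPolynomial, quadraticSubst]
    · simpa [bivariateToMvPolynomial, quadraticSubst] using (hZ.eq_mul n).symm
  exact DFunLike.congr_fun hcomp P

-- Each substitution divides the degree of the coefficient of `X ^ 0` by `p`; once that degree is
-- `0`, the polynomial has a nonzero constant term and so evaluates to a unit.
theorem exists_isPowMulUnit_bivariate_of_coeff_ne_zero (hZ : IsQuadraticChain p α Z)
    (hind : ∀ n, AlgebraicIndependent k ![Z n, Z (n + 1)]) (d n : ℕ) (P : k[X][X])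
    (hP : P.coeff 0 ≠ 0) (hd : (P.coeff 0).natDegree ≤ d) :
    ∃ N m, IsPowMulUnit k Z (aeval ![Z n, Z (n + 1)] (bivariateToMvPolynomial k P)) N m := by
  induction d using Nat.strong_induction_on generalizing n P with
  | _ d ih =>
    obtain hdeg | hdeg := (P.coeff 0).natDegree.eq_zero_or_pos
    · have hconst : constantCoeff (bivariateToMvPolynomial k P) ≠ 0 := by
        rw [constantCoeff_bivariateToMvPolynomial]
        intro h
        rw [Polynomial.eq_C_of_natDegree_eq_zero hdeg, h, map_zero] at hP
        exact hP rfl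
      have hne : aeval ![Z n, Z (n + 1)] (bivariateToMvPolynomial k P) ≠ 0 := by
        rw [Ne, map_eq_zero_iff _ (hind n)]
        exact fun h => hconst (by rw [h, map_zero])
      exact ⟨n, 0, _, aeval_mem_pairLocal _ _ _, hne, inv_aeval_mem_pairLocal hconst hne, by simp⟩
    · obtain ⟨m, Q, hQ, hQ0, hle⟩ := exists_quadraticSubst_eq p (α n) hP
      have hlt : (Q.coeff 0).natDegree < d := by
        have := hZ.one_lt
        nlinarith
      have hfactor : aeval ![Z n, Z (n + 1)] (bivariateToMvPolynomial k P) = Z (n + 1) ^ (m : ℤ) *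
          aeval ![Z (n + 1), Z (n + 2)] (bivariateToMvPolynomial k Q) := by
        rw [← hZ.aeval_bivariateToMvPolynomial_quadraticSubst, hQ]
        simp [bivariateToMvPolynomial]
      rw [hfactor]
      exact hZ.exists_isPowMulUnit_mul ⟨_, _, IsPowMulUnit.self_zpow (n + 1) _⟩
        (ih _ hlt (n + 1) Q hQ0 le_rfl)

theorem exists_isPowMulUnit_aeval (hZ : IsQuadraticChain p α Z)
    (hind : ∀ n, AlgebraicIndependent k ![Z n, Z (n + 1)]) (Q : MvPolynomial (Fin 2) k)
    (hQ : aeval ![Z 0, Z 1] Q ≠ 0) : ∃ N m, IsPowMulUnit k Z (aeval ![Z 0, Z 1] Q) N m := by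
  obtain ⟨P, rfl⟩ := bivariateToMvPolynomial_surjective Q
  have hP : P ≠ 0 := by
    rintro rfl
    exact hQ (by rw [map_zero, map_zero])
  obtain ⟨R, hR, hR0⟩ := exists_eq_X_pow_natTrailingDegree_mul P
  have hfactor : aeval ![Z 0, Z 1] (bivariateToMvPolynomial k P) =
      Z 0 ^ (P.natTrailingDegree : ℤ) * aeval ![Z 0, Z 1] (bivariateToMvPolynomial k R) := by
    conv_lhs => rw [hR]
    simp [bivariateToMvPolynomial]
  rw [hfactor]
  refine hZ.exists_isPowMulUnit_mul ⟨_, _, IsPowMulUnit.self_zpow 0 _⟩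
    (hZ.exists_isPowMulUnit_bivariate_of_coeff_ne_zero hind _ 0 R ?_ le_rfl)
  rw [hR0]
  exact Polynomial.trailingCoeff_nonzero_iff_nonzero.2 hP

theorem exists_isPowMulUnit (hZ : IsQuadraticChain p α Z)
    (hind : ∀ n, AlgebraicIndependent k ![Z n, Z (n + 1)])
    (hgen : ∀ f : F, ∃ P Q : MvPolynomial (Fin 2) k, aeval ![Z 0, Z 1] Q ≠ 0 ∧
      f * aeval ![Z 0, Z 1] Q = aeval ![Z 0, Z 1] P) (hf : f ≠ 0) :
    ∃ N m, IsPowMulUnit k Z f N m := by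
  obtain ⟨P, Q, hQ, h⟩ := hgen f
  obtain ⟨M, n, hQinv⟩ := hZ.exists_isPowMulUnit_aeval hind Q hQ
  rw [(eq_mul_inv_iff_mul_eq₀ hQ).2 h]
  exact hZ.exists_isPowMulUnit_mul (hZ.exists_isPowMulUnit_aeval hind P (h ▸ mul_ne_zero hf hQ))
    ⟨_, _, hQinv.inv⟩

end IsQuadraticChain

end Chain

section AdditiveValuation

variable {F : Type*} [Field F]

/-- A real-valued additive valuation of the field `F`; its value at `0` is irrelevant. -/
structure IsAdditiveValuation (ν : F → ℝ) : Prop where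
  map_mul : ∀ a b, a ≠ 0 → b ≠ 0 → ν (a * b) = ν a + ν b
  min_le_map_add : ∀ a b, a ≠ 0 → b ≠ 0 → a + b ≠ 0 → min (ν a) (ν b) ≤ ν (a + b)

namespace IsAdditiveValuation

variable {ν : F → ℝ}

theorem map_one (h : IsAdditiveValuation ν) : ν 1 = 0 := by
  simpa using h.map_mul 1 1 one_ne_zero one_ne_zero

theorem map_inv (h : IsAdditiveValuation ν) {a : F} (ha : a ≠ 0) : ν a⁻¹ = -ν a := by
  have hmul := h.map_mul a a⁻¹ ha (inv_ne_zero ha)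
  rw [mul_inv_cancel₀ ha, h.map_one] at hmul
  linarith

theorem map_neg (h : IsAdditiveValuation ν) {a : F} (ha : a ≠ 0) : ν (-a) = ν a := by
  have hneg_one : ν (-1) = 0 := by
    have hmul := h.map_mul (-1) (-1) (by simp) (by simp)
    rw [neg_mul_neg, mul_one, h.map_one] at hmul
    linarith
  rw [← neg_one_mul, h.map_mul _ _ (by simp) ha, hneg_one, zero_add]

theorem map_pow (h : IsAdditiveValuation ν) {a : F} (ha : a ≠ 0) (n : ℕ) :
    ν (a ^ n) = n * ν a := by
  induction n with
  | zero => simpa using h.map_one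
  | succ n ih =>
    rw [pow_succ, h.map_mul _ _ (pow_ne_zero n ha) ha, ih]
    push_cast
    ring

theorem map_zpow (h : IsAdditiveValuation ν) {a : F} (ha : a ≠ 0) (n : ℤ) :
    ν (a ^ n) = n * ν a := by
  rcases Int.eq_nat_or_neg n with ⟨n, rfl | rfl⟩
  · simpa using h.map_pow ha n
  · rw [zpow_neg, h.map_inv (zpow_ne_zero _ ha), zpow_natCast, h.map_pow ha]
    simp

/-- The valuation ring of a real-valued additive valuation. -/
def valuationSubring (h : IsAdditiveValuation ν) : ValuationSubring F where
  carrier := {z | z = 0 ∨ (z ≠ 0 ∧ 0 ≤ ν z)}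
  zero_mem' := Or.inl rfl
  one_mem' := Or.inr ⟨one_ne_zero, h.map_one.ge⟩
  mul_mem' := by
    rintro a b (rfl | ⟨ha, hνa⟩) (rfl | ⟨hb, hνb⟩)
    · simp
    · simp
    · simp
    · exact Or.inr ⟨mul_ne_zero ha hb, by rw [h.map_mul a b ha hb]; positivity⟩
  add_mem' := by
    rintro a b (rfl | ⟨ha, hνa⟩) (rfl | ⟨hb, hνb⟩)
    · simp
    · simpa using Or.inr ⟨hb, hνb⟩
    · simpa using Or.inr ⟨ha, hνa⟩
    · by_cases hab : a + b = 0
      · exact Or.inl hab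
      · exact Or.inr ⟨hab, (le_min hνa hνb).trans (h.min_le_map_add a b ha hb hab)⟩
  neg_mem' := by
    rintro a (rfl | ⟨ha, hνa⟩)
    · simp
    · exact Or.inr ⟨neg_ne_zero.2 ha, (h.map_neg ha).symm ▸ hνa⟩
  mem_or_inv_mem' := by
    intro a
    by_cases ha : a = 0
    · exact Or.inl (Or.inl ha)
    rcases le_total 0 (ν a) with hνa | hνa
    · exact Or.inl (Or.inr ⟨ha, hνa⟩)
    · exact Or.inr (Or.inr ⟨inv_ne_zero ha, by rw [h.map_inv ha]; linarith⟩)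

theorem mem_valuationSubring_iff (h : IsAdditiveValuation ν) {z : F} :
    z ∈ h.valuationSubring ↔ z = 0 ∨ (z ≠ 0 ∧ 0 ≤ ν z) :=
  Iff.rfl

theorem valuation_lt_one_iff (h : IsAdditiveValuation ν) {z : F} :
    h.valuationSubring.valuation z < 1 ↔ z = 0 ∨ (z ≠ 0 ∧ 0 < ν z) := by
  by_cases hz : z = 0
  · simp [hz]
  have hinv : z⁻¹ ∈ h.valuationSubring ↔ ν z ≤ 0 := by
    simp [mem_valuationSubring_iff, hz, h.map_inv hz]
  rw [← ValuationSubring.valuation_le_one_iff, map_inv₀,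
    inv_le_one₀ (by simpa [zero_lt_iff] using hz)] at hinv
  rw [← not_le, hinv]
  simp [hz]

end IsAdditiveValuation

end AdditiveValuation

section ChainValuation

variable {k F : Type} [Field k] [Field F] [Algebra k F] {p : ℕ} {α : ℕ → k} {Z : ℕ → F}
  {f g : F} {M N : ℕ} {m n : ℤ}

namespace IsQuadraticChain

theorem pairLocal_le_add (hZ : IsQuadraticChain p α Z) (i j : ℕ) :
    pairLocal k (Z i) (Z (i + 1)) ≤ pairLocal k (Z (i + j)) (Z (i + j + 1)) :=
  (monotone_nat_of_le_succ (f := fun n => pairLocal k (Z n) (Z (n + 1)))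
    hZ.pairLocal_le_succ) (Nat.le_add_right i j)

theorem nonneg_of_mem_pairLocal (hZ : IsQuadraticChain p α Z)
    (hind : ∀ n, AlgebraicIndependent k ![Z n, Z (n + 1)])
    (hmem : f ∈ pairLocal k (Z M) (Z (M + 1))) (h : IsPowMulUnit k Z f N m) : 0 ≤ m := by
  have hp : (0 : ℤ) < p := by exact_mod_cast hZ.one_lt.trans' zero_lt_one
  refine nonneg_of_mul_nonneg_right ?_ (pow_pos hp M)
  exact (hZ.isPowMulUnit_add h M).nonneg_of_mem (hind _)
    (add_comm M N ▸ hZ.pairLocal_le_add M N hmem)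

theorem div_pow_eq_div_pow (hZ : IsQuadraticChain p α Z)
    (hind : ∀ n, AlgebraicIndependent k ![Z n, Z (n + 1)]) (hm : IsPowMulUnit k Z f M m)
    (hn : IsPowMulUnit k Z f N n) : (m / p ^ M : ℝ) = n / p ^ N := by
  have hp : (0 : ℝ) < p := by exact_mod_cast hZ.one_lt.trans' zero_lt_one
  have heq : (p : ℤ) ^ N * m = p ^ M * n :=
    (hZ.isPowMulUnit_add hm N).unique (hind _) (add_comm N M ▸ hZ.isPowMulUnit_add hn M)
  rw [div_eq_div_iff (pow_pos hp _).ne' (pow_pos hp _).ne', mul_comm, mul_comm (n : ℝ)]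
  exact_mod_cast heq

theorem exists_isPowMulUnit_add (hZ : IsQuadraticChain p α Z)
    (hex : ∀ f : F, f ≠ 0 → ∃ N m, IsPowMulUnit k Z f N m)
    (hind : ∀ n, AlgebraicIndependent k ![Z n, Z (n + 1)]) (hmn : m ≤ n)
    (hf : IsPowMulUnit k Z f M m) (hg : IsPowMulUnit k Z g M n) (hfg : f + g ≠ 0) :
    ∃ N l, IsPowMulUnit k Z (f + g) N l ∧ (m / p ^ M : ℝ) ≤ l / p ^ N := by
  have hp : (0 : ℝ) < p := by exact_mod_cast hZ.one_lt.trans' zero_lt_one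
  obtain ⟨ε, hε, -, -, rfl⟩ := hf
  obtain ⟨η, hη, -, -, rfl⟩ := hg
  obtain ⟨t, rfl⟩ := Int.le.dest hmn
  have hfactor : Z M ^ m * ε + Z M ^ (m + t) * η = Z M ^ m * (ε + Z M ^ t * η) := by
    rw [zpow_add₀ (hZ.ne_zero M), zpow_natCast]
    ring
  rw [hfactor] at hfg ⊢
  have hmem : ε + Z M ^ t * η ∈ pairLocal k (Z M) (Z (M + 1)) :=
    Subring.add_mem _ hε (Subring.mul_mem _ (Subring.pow_mem _ (left_mem_pairLocal _ _) _) hη)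
  obtain ⟨N, l, hl⟩ := hex _ (right_ne_zero_of_mul hfg)
  refine ⟨M + N, _, (hZ.isPowMulUnit_add (IsPowMulUnit.self_zpow M m) N).mul
    (add_comm N M ▸ hZ.isPowMulUnit_add hl M) (hZ.ne_zero _), ?_⟩
  have hl0 : (0 : ℝ) ≤ l := by exact_mod_cast hZ.nonneg_of_mem_pairLocal hind hmem hl
  rw [div_le_div_iff₀ (pow_pos hp _) (pow_pos hp _), pow_add]
  push_cast
  nlinarith [mul_nonneg (pow_pos hp M).le (mul_nonneg (pow_pos hp M).le hl0)]

theorem exists_isAdditiveValuation (hZ : IsQuadraticChain p α Z)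
    (hind : ∀ n, AlgebraicIndependent k ![Z n, Z (n + 1)])
    (hex : ∀ f : F, f ≠ 0 → ∃ N m, IsPowMulUnit k Z f N m) :
    ∃ ν : F → ℝ, IsAdditiveValuation ν ∧ ∀ f N m, IsPowMulUnit k Z f N m → ν f = m / p ^ N := by
  choose! N m hNm using hex
  let ν (f : F) : ℝ := m f / p ^ N f
  have hν {f : F} {M : ℕ} {l : ℤ} (hf : IsPowMulUnit k Z f M l) : ν f = l / p ^ M :=
    hZ.div_pow_eq_div_pow hind (hNm f (hf.ne_zero (hZ.ne_zero M))) hf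
  have hcommon (a b : F) (ha : a ≠ 0) (hb : b ≠ 0) :
      ∃ M i j, IsPowMulUnit k Z a M i ∧ IsPowMulUnit k Z b M j :=
    ⟨N a + N b, _, _, hZ.isPowMulUnit_add (hNm a ha) (N b),
      add_comm (N b) (N a) ▸ hZ.isPowMulUnit_add (hNm b hb) (N a)⟩
  have hle {a b : F} {M : ℕ} {i j : ℤ} (hij : i ≤ j) (ha : IsPowMulUnit k Z a M i)
      (hb : IsPowMulUnit k Z b M j) (hab : a + b ≠ 0) : ν a ≤ ν (a + b) := by
    obtain ⟨L, l, hl, hle⟩ := hZ.exists_isPowMulUnit_add (fun f hf => ⟨_, _, hNm f hf⟩) hind hij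
      ha hb hab
    rwa [hν ha, hν hl]
  refine ⟨ν, ⟨fun a b ha hb => ?_, fun a b ha hb hab => ?_⟩, fun f M l => hν⟩
  · obtain ⟨M, i, j, hi, hj⟩ := hcommon a b ha hb
    rw [hν hi, hν hj, hν (hi.mul hj (hZ.ne_zero M))]
    push_cast
    ring
  · obtain ⟨M, i, j, hi, hj⟩ := hcommon a b ha hb
    rcases le_total i j with hij | hij
    · exact (min_le_left _ _).trans (hle hij hi hj hab)
    · rw [add_comm] at hab ⊢
      exact (min_le_right _ _).trans (hle hij hj hi hab)

end IsQuadraticChain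

end ChainValuation

theorem associated_or_associated_of_prime_dvd_unit_mul {S : Type*} [CommRing S] [IsDomain S]
    {q c d ε : S} (hq : Prime q) (hc : Prime c) (hd : Prime d) (hε : IsUnit ε) {m n : ℕ}
    (h : q ∣ ε * c ^ m * d ^ n) : Associated q c ∨ Associated q d := by
  rw [mul_assoc, hε.dvd_mul_left] at h
  rcases hq.dvd_or_dvd h with h | h
  · exact Or.inl (hq.associated_of_dvd hc (hq.dvd_of_dvd_pow h))
  · exact Or.inr (hq.associated_of_dvd hd (hq.dvd_of_dvd_pow h))

section MonomialsInRegularLocalRing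

open IsLocalRing

theorem maximalIdeal_eq_span_pair_comm {S : Type*} [CommRing S] [IsLocalRing S] {c d : S}
    (hcd : maximalIdeal S = Ideal.span {c, d}) : maximalIdeal S = Ideal.span {d, c} := by
  rw [hcd, Set.pair_comm]

theorem maximalIdeal_eq_span_pow_mul_add_mul {S : Type*} [CommRing S] [IsLocalRing S]
    {z w e₁ e₂ : S} {n : ℕ} (hzw : maximalIdeal S = Ideal.span {z, w}) (he₂ : IsUnit e₂)
    (hn : n ≠ 0) : maximalIdeal S = Ideal.span {w ^ n * e₁ + z * e₂, w} := by
  obtain ⟨n, rfl⟩ := Nat.exists_eq_add_one_of_ne_zero hn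
  have hcomm : w ^ (n + 1) * e₁ + z * e₂ = w ^ n * e₁ * w + z * e₂ := by ring
  rw [hzw, hcomm, Ideal.span_pair_mul_right_add, Ideal.span_insert, Ideal.span_insert,
    Ideal.span_singleton_mul_right_unit he₂]

variable {S : Type*} [CommRing S] [IsLocalRing S] [IsNoetherianRing S]

theorem not_dvd_of_maximalIdeal_eq_span_pair (hdim : ringKrullDim S = 2) {c d : S}
    (hcd : maximalIdeal S = Ideal.span {c, d}) : ¬ c ∣ d := by
  simpa using not_dvd_pow_of_maximalIdeal_eq_span_pair hdim hcd 1

theorem exponent_le_of_unit_mul_pow_eq [IsDomain S] (hdim : ringKrullDim S = 2) {c d : S}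
    (hcd : maximalIdeal S = Ideal.span {c, d}) {ε q : S} (hε : IsUnit ε) {a b a' b' : ℕ}
    (h : ε * c ^ a * d ^ b = q * (c ^ a' * d ^ b')) : a' ≤ a := by
  have hc := prime_of_maximalIdeal_eq_span_pair hdim hcd
  have hdvd : c ^ a' ∣ c ^ a * d ^ b := by
    rw [← hε.dvd_mul_left (u := ε), ← mul_assoc, h]
    exact ⟨q * d ^ b', by ring⟩
  have hdvd_pow : c ^ a' ∣ c ^ a := hc.pow_dvd_of_dvd_mul_right _
    (not_dvd_pow_of_maximalIdeal_eq_span_pair hdim hcd b) hdvd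
  exact (pow_dvd_pow_iff hc.ne_zero hc.not_isUnit).1 hdvd_pow

theorem not_pow_mul_add_mul_dvd_monomial (hdim : ringKrullDim S = 2) {z w e₁ e₂ : S} {n : ℕ}
    (hzw : maximalIdeal S = Ideal.span {z, w}) (he₁ : IsUnit e₁) (he₂ : IsUnit e₂) (hn : n ≠ 0)
    (i j : ℕ) : ¬ w ^ n * e₁ + z * e₂ ∣ z ^ i * w ^ j := by
  have hqw := maximalIdeal_eq_span_pow_mul_add_mul (e₁ := e₁) hzw he₂ hn
  have hprime := prime_of_maximalIdeal_eq_span_pair hdim hqw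
  have hndvd := not_dvd_pow_of_maximalIdeal_eq_span_pair hdim hqw
  intro h
  rcases hprime.dvd_or_dvd h with hz | hw
  · have hdvd := dvd_sub (dvd_refl _) ((hprime.dvd_of_dvd_pow hz).mul_right e₂)
    rw [add_sub_cancel_right, he₁.dvd_mul_right] at hdvd
    exact hndvd n hdvd
  · exact hndvd j hw

theorem eq_of_dvd_unit_mul_pow_sub (hdim : ringKrullDim S = 2) {q w : S}
    (hqw : maximalIdeal S = Ideal.span {q, w}) {ε η : S} (hε : IsUnit ε) (hη : IsUnit η) {m n : ℕ}
    (h : q ∣ ε * w ^ m - η * w ^ n) : m = n := by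
  have hprime := prime_of_maximalIdeal_eq_span_pair hdim hqw
  have hw : w ∈ maximalIdeal S := hqw ▸ Ideal.subset_span (by simp)
  have hlt {ε η : S} {m n : ℕ} (hε : IsUnit ε) (hmn : m < n) : ¬ q ∣ ε * w ^ m - η * w ^ n := by
    intro h
    obtain ⟨t, rfl⟩ := Nat.exists_eq_add_of_lt hmn
    have hfactor : ε * w ^ m - η * w ^ (m + t + 1) = w ^ m * (ε - η * w ^ t * w) := by ring
    rw [hfactor] at h
    rcases hprime.dvd_or_dvd h with h | h
    · exact not_dvd_pow_of_maximalIdeal_eq_span_pair hdim hqw m h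
    · have hmem := (maximalIdeal S).add_mem
        (Ideal.mem_of_dvd _ h (hqw ▸ Ideal.subset_span (by simp)))
        ((maximalIdeal S).mul_mem_left (η * w ^ t) hw)
      rw [sub_add_cancel] at hmem
      exact (mem_maximalIdeal _).1 hmem hε
  rcases lt_trichotomy m n with hmn | hmn | hmn
  · exact absurd h (hlt hε hmn)
  · exact hmn
  · exact absurd (by rwa [← dvd_neg, neg_sub] at h) (hlt (η := ε) hη hmn)

theorem exists_unit_dvd_sub_mul (hdim : ringKrullDim S = 2) {q w d : S}
    (hqw : maximalIdeal S = Ideal.span {q, w}) (hqd : maximalIdeal S = Ideal.span {q, d}) :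
    ∃ μ, IsUnit μ ∧ q ∣ d - μ * w := by
  obtain ⟨h, μ, hμ⟩ : ∃ h μ, h * q + μ * w = d := by
    rw [← Ideal.mem_span_pair, ← hqw, hqd]
    exact Ideal.subset_span (by simp)
  obtain ⟨h', ν, hν⟩ : ∃ h' ν, h' * q + ν * d = w := by
    rw [← Ideal.mem_span_pair, ← hqd, hqw]
    exact Ideal.subset_span (by simp)
  refine ⟨μ, ?_, ⟨h, by rw [← hμ]; ring⟩⟩
  by_contra hu
  have hdvd : q ∣ (1 - ν * μ) * w := ⟨h' + ν * h, by linear_combination -hν - ν * hμ⟩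
  rcases (prime_of_maximalIdeal_eq_span_pair hdim hqw).dvd_or_dvd hdvd with hq | hq
  · have hone := (maximalIdeal S).add_mem
      (Ideal.mem_of_dvd _ hq (hqw ▸ Ideal.subset_span (by simp)))
      ((maximalIdeal S).mul_mem_left ν ((mem_maximalIdeal μ).2 hu))
    rw [sub_add_cancel] at hone
    exact (mem_maximalIdeal _).1 hone isUnit_one
  · exact not_dvd_of_maximalIdeal_eq_span_pair hdim hqw hq

theorem not_pow_dvd_mul_pow [IsDomain S] (hdim : ringKrullDim S = 2) {z w d : S}
    (hzw : maximalIdeal S = Ideal.span {z, w}) (hd : Prime d) {i j N : ℕ} (hi : i < N)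
    (hj : j < N) : ¬ d ^ N ∣ z ^ i * w ^ j := by
  have hz := prime_of_maximalIdeal_eq_span_pair hdim hzw
  have hw := prime_of_maximalIdeal_eq_span_pair hdim (maximalIdeal_eq_span_pair_comm hzw)
  have hndvd {t : S} {i : ℕ} (ht : Prime t) (hi : i < N) (hdt : d ∣ t) : ¬ d ^ N ∣ t ^ i := by
    rw [((hd.associated_of_dvd ht hdt).pow_pow (n := N)).dvd_iff_dvd_left,
      pow_dvd_pow_iff ht.ne_zero ht.not_isUnit]
    omega
  intro h
  have hN : N ≠ 0 := by omega
  by_cases hdz : d ∣ z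
  · have hdw : ¬ d ∣ w := fun hdw => not_dvd_of_maximalIdeal_eq_span_pair hdim hzw
      ((hd.associated_of_dvd hz hdz).symm.dvd.trans hdw)
    exact hndvd hz hi hdz (hd.pow_dvd_of_dvd_mul_right _ (fun h' => hdw (hd.dvd_of_dvd_pow h')) h)
  · have hdvd := hd.pow_dvd_of_dvd_mul_left _ (fun h' => hdz (hd.dvd_of_dvd_pow h')) h
    exact hndvd hw hj (hd.dvd_of_dvd_pow ((dvd_pow_self d hN).trans hdvd)) hdvd

-- Modulo `q`, the relation `q = 0` turns `z ^ p * w ^ (j * p)` into a unit times `w ^ (p ^ 2)`.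
theorem exponent_eq_sq_of_dvd_sub (hdim : ringKrullDim S = 2) {z w q d : S}
    (hzw : maximalIdeal S = Ideal.span {z, w}) {p j : ℕ} (hj : j < p) {e₁ e₂ ε η : S}
    (he₁ : IsUnit e₁) (he₂ : IsUnit e₂) (hε : IsUnit ε) (hη : IsUnit η)
    (hq : q = w ^ (p - j) * e₁ + z * e₂) (hqd : maximalIdeal S = Ideal.span {q, d}) {n : ℕ}
    (h : q ∣ ε * d ^ n - η * (z ^ p * w ^ (j * p))) : n = p ^ 2 := by
  have hqw : maximalIdeal S = Ideal.span {q, w} :=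
    hq ▸ maximalIdeal_eq_span_pow_mul_add_mul hzw he₂ (by omega)
  obtain ⟨μ, hμ, hdμ⟩ := exists_unit_dvd_sub_mul hdim hqw hqd
  obtain ⟨f, hf⟩ := he₂.exists_right_inv
  have hz : q ∣ z - -(e₁ * f) * w ^ (p - j) := ⟨f, by rw [hq]; linear_combination -z * hf⟩
  have hzp := hz.trans (sub_dvd_pow_sub_pow z (-(e₁ * f) * w ^ (p - j)) p)
  have hdn := hdμ.trans (sub_dvd_pow_sub_pow d (μ * w) n)
  have hpow : (w ^ (p - j)) ^ p * w ^ (j * p) = w ^ (p ^ 2) := by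
    rw [← pow_mul, ← pow_add, ← add_mul, Nat.sub_add_cancel hj.le, sq]
  have hdvd : q ∣ ε * μ ^ n * w ^ n - η * (-(e₁ * f)) ^ p * w ^ (p ^ 2) := by
    have heq : ε * μ ^ n * w ^ n - η * (-(e₁ * f)) ^ p * w ^ (p ^ 2) =
        ε * d ^ n - η * (z ^ p * w ^ (j * p)) - ε * (d ^ n - (μ * w) ^ n) +
          η * w ^ (j * p) * (z ^ p - (-(e₁ * f) * w ^ (p - j)) ^ p) := by
      rw [mul_pow, mul_pow]
      linear_combination η * (-(e₁ * f)) ^ p * hpow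
    rw [heq]
    exact dvd_add (dvd_sub h (hdn.mul_left _)) (hzp.mul_left _)
  have hf_unit : IsUnit f := IsUnit.of_mul_eq_one e₂ (by rw [mul_comm]; exact hf)
  exact eq_of_dvd_unit_mul_pow_sub hdim hqw (hε.mul (hμ.pow n))
    (hη.mul ((he₁.mul hf_unit).neg.pow p)) hdvd

theorem exists_eq_unit_mul_pow_sq_of_monomial_curve [IsDomain S] (hdim : ringKrullDim S = 2)
    {z w c d : S} (hzw : maximalIdeal S = Ideal.span {z, w})
    (hcd : maximalIdeal S = Ideal.span {c, d}) {p j : ℕ} (hp : 1 < p) (hj : j < p)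
    {e₁ e₂ h η ε₁ ε₂ a b : S} (he₁ : IsUnit e₁) (he₂ : IsUnit e₂) (hη : IsUnit η)
    (hε₁ : IsUnit ε₁) (hε₂ : IsUnit ε₂) (ha : a = w ^ j * (w ^ (p - j) * e₁ + z * e₂))
    (hb : b = h * a + η * (z ^ p * w ^ (j * p))) {m₁₁ m₁₂ m₂₁ m₂₂ : ℕ}
    (ha' : a = ε₁ * c ^ m₁₁ * d ^ m₁₂) (hb' : b = ε₂ * c ^ m₂₁ * d ^ m₂₂) :
    ∃ d' : S, b = ε₂ * d' ^ (p ^ 2) ∧ ¬ d' ^ (p ^ 2) ∣ z ^ p * w ^ (j * p + j) := by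
  have hn : p - j ≠ 0 := by omega
  set q := w ^ (p - j) * e₁ + z * e₂ with hq_def
  have hq : Prime q := prime_of_maximalIdeal_eq_span_pair hdim
    (maximalIdeal_eq_span_pow_mul_add_mul hzw he₂ hn)
  have hdvd : q ∣ b - η * (z ^ p * w ^ (j * p)) := by
    rw [hb, add_sub_cancel_right, ha]
    exact ⟨h * w ^ j, by ring⟩
  have hqb : ¬ q ∣ b := fun hqb => not_pow_mul_add_mul_dvd_monomial hdim hzw he₁ he₂ hn p (j * p)
    (hη.dvd_mul_left.1 ((dvd_sub_right hqb).1 hdvd))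
  have of_associated {c d : S} {m n : ℕ} (hcd : maximalIdeal S = Ideal.span {c, d})
      (hqc : Associated q c) (hb' : b = ε₂ * c ^ m * d ^ n) :
      ∃ d' : S, b = ε₂ * d' ^ (p ^ 2) ∧ ¬ d' ^ (p ^ 2) ∣ z ^ p * w ^ (j * p + j) := by
    obtain rfl : m = 0 := by
      by_contra hm
      exact hqb (hb' ▸ ((hqc.dvd.trans (dvd_pow_self c hm)).mul_left _).mul_right _)
    rw [pow_zero, mul_one] at hb'
    have hqd : maximalIdeal S = Ideal.span {q, d} := by
      rw [hcd, Ideal.span_insert, Ideal.span_insert,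
        Ideal.span_singleton_eq_span_singleton.2 hqc]
    obtain rfl := exponent_eq_sq_of_dvd_sub hdim hzw hj he₁ he₂ hε₂ hη hq_def hqd (hb' ▸ hdvd)
    have hlt : (j + 1) * (p + 1) ≤ p * (p + 1) := Nat.mul_le_mul_right _ hj
    exact ⟨d, hb', not_pow_dvd_mul_pow hdim hzw (prime_of_maximalIdeal_eq_span_pair hdim
      (maximalIdeal_eq_span_pair_comm hcd)) (by nlinarith) (by nlinarith)⟩
  have hqa : q ∣ ε₁ * c ^ m₁₁ * d ^ m₁₂ := ha' ▸ ha ▸ dvd_mul_left q (w ^ j)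
  rcases associated_or_associated_of_prime_dvd_unit_mul hq
    (prime_of_maximalIdeal_eq_span_pair hdim hcd)
    (prime_of_maximalIdeal_eq_span_pair hdim (maximalIdeal_eq_span_pair_comm hcd)) hε₁ hqa
    with hqc | hqd
  · exact of_associated hcd hqc hb'
  · exact of_associated (m := m₂₂) (n := m₂₁) (maximalIdeal_eq_span_pair_comm hcd) hqd
      (by rw [hb']; ring)

end MonomialsInRegularLocalRing

section CenteredSubring

variable {k F : Type} [Field k] [Field F] [Algebra k F]
variable {Γ₀ : Type*} [LinearOrderedCommGroupWithZero Γ₀] {v : Valuation F Γ₀} {T : Subring F}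

theorem exists_eq_mul_X_add_mul_X {f : MvPolynomial (Fin 2) k} (hf : constantCoeff f = 0) :
    ∃ f₁ f₂, f₁ * X 0 + f₂ * X 1 = f := by
  rwa [← mem_idealOfVars_iff_constantCoeff, idealOfVars_fin_two_eq, Ideal.mem_span_pair] at hf

theorem aeval_pair_mem (hkT : ∀ c : k, algebraMap k F c ∈ T) {r s : F} (hr : r ∈ T) (hs : s ∈ T)
    (f : MvPolynomial (Fin 2) k) : aeval ![r, s] f ∈ T :=
  eval₂_mem (fun _ _ => hkT _) (Fin.forall_fin_two.2 ⟨hr, hs⟩)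

theorem valuation_mul_add_mul_lt_one {r s a b : F} (hr : v r < 1) (hs : v s < 1) (ha : v a ≤ 1)
    (hb : v b ≤ 1) : v (a * r + b * s) < 1 := by
  refine (v.map_add _ _).trans_lt (max_lt ?_ ?_) <;> rw [map_mul]
  · exact (mul_le_of_le_one_left' ha).trans_lt hr
  · exact (mul_le_of_le_one_left' hb).trans_lt hs

theorem valuation_add_eq_one {a b : F} (ha : v a = 1) (hb : v b < 1) : v (a + b) = 1 := by
  rw [v.map_add_eq_of_lt_left (by rwa [ha]), ha]

theorem ne_zero_of_valuation_eq_one {a : F} (ha : v a = 1) : a ≠ 0 :=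
  v.ne_zero_iff.1 (ha ▸ one_ne_zero)

section TrivialOnConstants

variable (hk : ∀ c : k, c ≠ 0 → v (algebraMap k F c) = 1) {r s : F} (hr : v r < 1) (hs : v s < 1)

include hk hr hs

theorem valuation_aeval_le_one (f : MvPolynomial (Fin 2) k) : v (aeval ![r, s] f) ≤ 1 := by
  have hconst (c : k) : v (algebraMap k F c) ≤ 1 := by
    obtain rfl | hc := eq_or_ne c 0
    · simp
    · exact (hk c hc).le
  exact aeval_pair_mem (T := v.integer) hconst hr.le hs.le f

theorem valuation_aeval_lt_one {f : MvPolynomial (Fin 2) k} (hf : constantCoeff f = 0) :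
    v (aeval ![r, s] f) < 1 := by
  obtain ⟨f₁, f₂, rfl⟩ := exists_eq_mul_X_add_mul_X hf
  simpa using valuation_mul_add_mul_lt_one hr hs (valuation_aeval_le_one hk hr hs f₁)
    (valuation_aeval_le_one hk hr hs f₂)

theorem valuation_aeval_eq_one {f : MvPolynomial (Fin 2) k} (hf : constantCoeff f ≠ 0) :
    v (aeval ![r, s] f) = 1 := by
  have hlt := valuation_aeval_lt_one hk hr hs (f := f - C (constantCoeff f)) (by simp)
  simpa [algHom_C] using valuation_add_eq_one (hk _ hf) hlt

end TrivialOnConstants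

/-- The valuation ring of `v` dominates the local ring `T`. -/
def IsCentered (v : Valuation F Γ₀) (T : Subring F) : Prop :=
  ∀ z ∈ T, v z ≤ 1 ∧ (v z = 1 → z⁻¹ ∈ T)

namespace IsCentered

theorem isUnit_iff (hT : IsCentered v T) (z : T) : IsUnit z ↔ v z = 1 := by
  constructor
  · intro h
    obtain ⟨w, hw⟩ := h.exists_right_inv
    have hvzw : v (z : F) * v (w : F) = 1 := by
      rw [← map_mul, ← Subring.coe_mul, hw, Subring.coe_one, map_one]
    exact eq_one_of_one_le_mul_left (hT z z.2).1 (hT w w.2).1 hvzw.ge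
  · intro h
    exact IsUnit.of_mul_eq_one ⟨_, (hT z z.2).2 h⟩
      (Subtype.ext (mul_inv_cancel₀ (ne_zero_of_valuation_eq_one h)))

theorem isLocalRing (hT : IsCentered v T) : IsLocalRing T := by
  refine IsLocalRing.of_nonunits_add fun a b ha hb => ?_
  rw [mem_nonunits_iff, hT.isUnit_iff] at *
  have ha' := lt_of_le_of_ne (hT a a.2).1 ha
  have hb' := lt_of_le_of_ne (hT b b.2).1 hb
  exact ((v.map_add _ _).trans_lt (max_lt ha' hb')).ne

theorem mem_maximalIdeal_iff [IsLocalRing T] (hT : IsCentered v T) (z : T) :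
    z ∈ IsLocalRing.maximalIdeal T ↔ v z < 1 := by
  rw [IsLocalRing.mem_maximalIdeal, mem_nonunits_iff, hT.isUnit_iff]
  exact (lt_iff_le_and_ne.trans (and_iff_right (hT z z.2).1)).symm

theorem maximalIdeal_eq_span_pair [IsLocalRing T] (hT : IsCentered v T) {c d : F} (hc : c ∈ T)
    (hd : d ∈ T) (hvc : v c < 1) (hvd : v d < 1)
    (h : ∀ z ∈ T, v z < 1 → ∃ h₁ ∈ T, ∃ h₂ ∈ T, z = h₁ * c + h₂ * d) :
    IsLocalRing.maximalIdeal T = Ideal.span {⟨c, hc⟩, ⟨d, hd⟩} := by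
  apply le_antisymm
  · intro z hz
    obtain ⟨h₁, hh₁, h₂, hh₂, e⟩ := h z z.2 ((hT.mem_maximalIdeal_iff z).1 hz)
    exact Ideal.mem_span_pair.2 ⟨⟨h₁, hh₁⟩, ⟨h₂, hh₂⟩, Subtype.ext e.symm⟩
  · rw [Ideal.span_le, Set.pair_subset_iff]
    exact ⟨(hT.mem_maximalIdeal_iff _).2 hvc, (hT.mem_maximalIdeal_iff _).2 hvd⟩

theorem div_mem (hT : IsCentered v T) {a b : F} (ha : a ∈ T) (hb : b ∈ T) (h : v b = 1) :
    a / b ∈ T := by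
  rw [div_eq_mul_inv]
  exact T.mul_mem ha ((hT b hb).2 h)

theorem pairLocal_le (hT : IsCentered v T) (hk : ∀ c : k, c ≠ 0 → v (algebraMap k F c) = 1)
    (hkT : ∀ c : k, algebraMap k F c ∈ T) {r s : F} (hr : r ∈ T) (hs : s ∈ T) (hvr : v r < 1)
    (hvs : v s < 1) : pairLocal k r s ≤ T := by
  intro z hz
  obtain ⟨f, g, hg, h⟩ := mem_pairLocal_iff.1 hz
  have hvg := valuation_aeval_eq_one hk hvr hvs hg
  rw [(eq_div_iff (ne_zero_of_valuation_eq_one hvg)).2 h]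
  exact hT.div_mem (aeval_pair_mem hkT hr hs f) (aeval_pair_mem hkT hr hs g) hvg

end IsCentered

theorem isCentered_valuationSubring (V : ValuationSubring F) :
    IsCentered V.valuation V.toSubring := by
  intro z hz
  refine ⟨(V.valuation_le_one_iff z).2 hz, fun h => ?_⟩
  rw [ValuationSubring.mem_toSubring, ← V.valuation_le_one_iff, map_inv₀, h, inv_one]

theorem Dominates.isCentered {V : ValuationSubring F} (h : Dominates V.toSubring T) :
    IsCentered V.valuation T := by
  obtain ⟨hle, h⟩ := h
  intro z hz
  refine ⟨(V.valuation_le_one_iff z).2 (hle hz), fun hvz => ?_⟩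
  have hu : IsUnit (⟨z, hz⟩ : T) := by
    rw [← not_not (a := IsUnit _), ← h z hz (hle hz), not_not,
      (isCentered_valuationSubring V).isUnit_iff]
    exact hvz
  obtain ⟨w, hw⟩ := hu.exists_right_inv
  rw [inv_eq_of_mul_eq_one_right (congrArg Subtype.val hw)]
  exact w.2

theorem IsCentered.dominates {V : ValuationSubring F} (h : IsCentered V.valuation T) :
    Dominates V.toSubring T := by
  refine ⟨fun z hz => (V.valuation_le_one_iff z).1 (h z hz).1, fun z hz hz' => ?_⟩
  rw [h.isUnit_iff, (isCentered_valuationSubring V).isUnit_iff]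

section PairLocal

variable (hk : ∀ c : k, c ≠ 0 → v (algebraMap k F c) = 1) {r s : F} (hr : v r < 1) (hs : v s < 1)

include hk hr hs

theorem isCentered_pairLocal : IsCentered v (pairLocal k r s) := by
  intro z hz
  obtain ⟨f, g, hg, h⟩ := mem_pairLocal_iff.1 hz
  have hvz : v z = v (aeval ![r, s] f) := by
    rw [← h, map_mul, valuation_aeval_eq_one hk hr hs hg, mul_one]
  refine ⟨hvz ▸ valuation_aeval_le_one hk hr hs f, fun hvz_one => ?_⟩
  have hf : constantCoeff f ≠ 0 := fun hf =>
    (valuation_aeval_lt_one hk hr hs hf).ne (hvz ▸ hvz_one)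
  refine mem_pairLocal_iff.2 ⟨g, f, hf, ?_⟩
  rw [← h, inv_mul_cancel_left₀ (ne_zero_of_valuation_eq_one hvz_one)]

theorem exists_eq_algebraMap_add_of_mem_pairLocal {z : F} (hz : z ∈ pairLocal k r s) :
    ∃ c : k, ∃ h₁ ∈ pairLocal k r s, ∃ h₂ ∈ pairLocal k r s,
      z = algebraMap k F c + (h₁ * r + h₂ * s) := by
  obtain ⟨f, g, hg, h⟩ := mem_pairLocal_iff.1 hz
  have hg0 := ne_zero_of_valuation_eq_one (valuation_aeval_eq_one hk hr hs hg)
  have hinv := inv_aeval_mem_pairLocal hg hg0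
  let c := constantCoeff f / constantCoeff g
  obtain ⟨f₁, f₂, hsub⟩ := exists_eq_mul_X_add_mul_X (f := f - C c * g) (by simp [c, hg])
  refine ⟨c, _, Subring.mul_mem _ (aeval_mem_pairLocal r s f₁) hinv, _,
    Subring.mul_mem _ (aeval_mem_pairLocal r s f₂) hinv, ?_⟩
  have hsub' := congrArg (aeval ![r, s]) hsub
  simp only [map_add, map_mul, map_sub, algHom_C, aeval_X, Matrix.cons_val_zero,
    Matrix.cons_val_one] at hsub'
  field_simp
  linear_combination h - hsub'

theorem exists_eq_mul_add_mul_of_mem_pairLocal {z : F} (hz : z ∈ pairLocal k r s)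
    (hvz : v z < 1) :
    ∃ h₁ ∈ pairLocal k r s, ∃ h₂ ∈ pairLocal k r s, z = h₁ * r + h₂ * s := by
  obtain ⟨c, h₁, hh₁, h₂, hh₂, rfl⟩ := exists_eq_algebraMap_add_of_mem_pairLocal hk hr hs hz
  have hcen := isCentered_pairLocal hk hr hs
  have hc : c = 0 := by
    by_contra hc
    exact hvz.ne (valuation_add_eq_one (hk c hc)
      (valuation_mul_add_mul_lt_one hr hs (hcen _ hh₁).1 (hcen _ hh₂).1))
  exact ⟨h₁, hh₁, h₂, hh₂, by rw [hc, map_zero, zero_add]⟩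

theorem maximalIdeal_pairLocal_eq [IsLocalRing (pairLocal k r s)] :
    IsLocalRing.maximalIdeal (pairLocal k r s) =
      Ideal.span {⟨r, left_mem_pairLocal r s⟩, ⟨s, right_mem_pairLocal r s⟩} :=
  (isCentered_pairLocal hk hr hs).maximalIdeal_eq_span_pair _ _ hr hs fun _ hz hvz =>
    exists_eq_mul_add_mul_of_mem_pairLocal hk hr hs hz hvz

end PairLocal

theorem derivation_aeval_pair (D : Derivation k F F) (r s : F) (f : MvPolynomial (Fin 2) k) :
    D (aeval ![r, s] f) =
      aeval ![r, s] (pderiv 0 f) * D r + aeval ![r, s] (pderiv 1 f) * D s := by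
  induction f using MvPolynomial.induction_on with
  | C c => simp
  | add f g hf hg => simp only [map_add, hf, hg]; ring
  | mul_X f i hf => fin_cases i <;> simp [hf, pderiv_X] <;> ring

theorem exists_derivation_eq_of_mem_pairLocal
    (hk : ∀ c : k, c ≠ 0 → v (algebraMap k F c) = 1) {r s : F} (hr : v r < 1) (hs : v s < 1)
    {z : F} (hz : z ∈ pairLocal k r s) :
    ∃ z₁ ∈ pairLocal k r s, ∃ z₂ ∈ pairLocal k r s, ∀ D : Derivation k F F,
      D z = z₁ * D r + z₂ * D s := by
  obtain ⟨f, g, hg, h⟩ := mem_pairLocal_iff.1 hz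
  have hg0 := ne_zero_of_valuation_eq_one (valuation_aeval_eq_one hk hr hs hg)
  have hmem (i : Fin 2) :
      (aeval ![r, s] (pderiv i f) - z * aeval ![r, s] (pderiv i g)) * (aeval ![r, s] g)⁻¹ ∈
        pairLocal k r s :=
    Subring.mul_mem _ (Subring.sub_mem _ (aeval_mem_pairLocal _ _ _)
      (Subring.mul_mem _ hz (aeval_mem_pairLocal _ _ _))) (inv_aeval_mem_pairLocal hg hg0)
  refine ⟨_, hmem 0, _, hmem 1, fun D => ?_⟩
  have hD := congrArg D h
  rw [D.leibniz, derivation_aeval_pair, derivation_aeval_pair, smul_eq_mul, smul_eq_mul] at hD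
  field_simp
  linear_combination hD

end CenteredSubring

section ParameterChange

open IsLocalRing

variable {S : Type*} [CommRing S] [IsLocalRing S] [IsNoetherianRing S]

theorem mem_maximalIdeal_of_mul_add_mul_eq_zero (hdim : ringKrullDim S = 2) {r s e f : S}
    (hrs : maximalIdeal S = Ideal.span {r, s}) (h : e * r + f * s = 0) : e ∈ maximalIdeal S := by
  intro he
  refine not_dvd_of_maximalIdeal_eq_span_pair hdim (maximalIdeal_eq_span_pair_comm hrs) ?_
  rw [← (show IsUnit e from he).dvd_mul_left, eq_neg_of_add_eq_zero_left h, dvd_neg]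
  exact dvd_mul_left s f

theorem isUnit_det_of_maximalIdeal_eq_span_pair (hdim : ringKrullDim S = 2) {r s α β γ δ : S}
    (hrs : maximalIdeal S = Ideal.span {r, s})
    (hab : maximalIdeal S = Ideal.span {α * r + β * s, γ * r + δ * s}) :
    IsUnit (α * δ - β * γ) := by
  have hrel {e f : S} (h : e * r + f * s = 0) : residue S e = 0 ∧ residue S f = 0 := by
    simp only [residue_eq_zero_iff]
    exact ⟨mem_maximalIdeal_of_mul_add_mul_eq_zero hdim hrs h,
      mem_maximalIdeal_of_mul_add_mul_eq_zero hdim (maximalIdeal_eq_span_pair_comm hrs)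
        (by rwa [add_comm])⟩
  obtain ⟨a, b, hr⟩ : ∃ a b, a * (α * r + β * s) + b * (γ * r + δ * s) = r := by
    rw [← Ideal.mem_span_pair, ← hab, hrs]
    exact Ideal.subset_span (by simp)
  obtain ⟨c, d, hs⟩ : ∃ c d, c * (α * r + β * s) + d * (γ * r + δ * s) = s := by
    rw [← Ideal.mem_span_pair, ← hab, hrs]
    exact Ideal.subset_span (by simp)
  obtain ⟨h₁₁, h₁₂⟩ := hrel (e := a * α + b * γ - 1) (f := a * β + b * δ)
    (by linear_combination hr)
  obtain ⟨h₂₁, h₂₂⟩ := hrel (e := c * α + d * γ) (f := c * β + d * δ - 1)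
    (by linear_combination hs)
  simp only [map_sub, map_add, map_mul, map_one] at h₁₁ h₁₂ h₂₁ h₂₂
  rw [← residue_ne_zero_iff_isUnit]
  have hinv : residue S (a * d - b * c) * residue S (α * δ - β * γ) = 1 := by
    simp only [map_sub, map_mul]
    linear_combination (residue S c * residue S β + residue S d * residue S δ) * h₁₁ -
      (residue S c * residue S α + residue S d * residue S γ) * h₁₂ + h₂₂
  exact right_ne_zero_of_mul_eq_one hinv

end ParameterChange

section MonomialPair

variable {k F : Type} [Field k] [Field F] [Algebra k F]
variable {Γ₀ : Type*} [LinearOrderedCommGroupWithZero Γ₀] {v : Valuation F Γ₀} {T : Subring F}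

variable (v T) in
/-- `z` is the monomial `c ^ m * d ^ n` up to a unit of the local ring `T` centered at `v`. -/
def IsUnitMonomial (c d : F) (m n : ℕ) (z : F) : Prop :=
  ∃ ε ∈ T, v ε = 1 ∧ z = ε * c ^ m * d ^ n

namespace IsUnitMonomial

theorem div (hT : IsCentered v T) {c d z w : F} {m n i j : ℕ}
    (hz : IsUnitMonomial v T c d (m + i) (n + j) z) (hw : IsUnitMonomial v T c d m n w)
    (hw0 : w ≠ 0) : IsUnitMonomial v T c d i j (z / w) := by
  obtain ⟨ε, hε, hvε, rfl⟩ := hz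
  obtain ⟨η, hη, hvη, rfl⟩ := hw
  refine ⟨ε / η, hT.div_mem hε hη hvη, by rw [map_div₀, hvε, hvη, div_one], ?_⟩
  rw [div_eq_iff hw0]
  field_simp [ne_zero_of_valuation_eq_one hvη]
  ring

theorem exponent_le [IsLocalRing T] [IsNoetherianRing T] (hT : IsCentered v T)
    (hdim : ringKrullDim T = 2) {c d : T}
    (hcd : IsLocalRing.maximalIdeal T = Ideal.span {c, d}) {z w q : F} {m n m' n' : ℕ}
    (hz : IsUnitMonomial v T c d m n z) (hw : IsUnitMonomial v T c d m' n' w) (hq : q ∈ T)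
    (h : z = q * w) : m' ≤ m ∧ n' ≤ n := by
  obtain ⟨ε, hε, hvε, rfl⟩ := hz
  obtain ⟨η, hη, -, rfl⟩ := hw
  have hu : IsUnit (⟨ε, hε⟩ : T) := (hT.isUnit_iff _).2 hvε
  have hmul : (⟨ε, hε⟩ : T) * c ^ m * d ^ n = ⟨q * η, T.mul_mem hq hη⟩ * (c ^ m' * d ^ n') :=
    Subtype.ext (by push_cast; rw [h]; ring)
  exact ⟨exponent_le_of_unit_mul_pow_eq hdim hcd hu hmul,
    exponent_le_of_unit_mul_pow_eq hdim (maximalIdeal_eq_span_pair_comm hcd) hu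
      (by rw [mul_right_comm, hmul, mul_comm (c ^ m')])⟩

theorem exponent_le_and_valuation_lt_one [IsLocalRing T] [IsNoetherianRing T]
    (hT : IsCentered v T) (hdim : ringKrullDim T = 2) {c d : T}
    (hcd : IsLocalRing.maximalIdeal T = Ideal.span {c, d}) {a b s : F} {m n m' n' : ℕ}
    (ha : a ∈ T) (hva : v a = 1) (hb : b ∈ T) (has : IsUnitMonomial v T c d m n (a * s))
    (hbs : IsUnitMonomial v T c d m' n' (b * s)) (hne : ¬ (m = m' ∧ n = n')) :
    (m ≤ m' ∧ n ≤ n') ∧ v b < 1 := by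
  have ha0 := ne_zero_of_valuation_eq_one hva
  have hle := exponent_le hT hdim hcd hbs has (hT.div_mem hb ha hva) (by field_simp)
  refine ⟨hle, (hT b hb).1.lt_of_ne fun hvb => hne ?_⟩
  have hb0 := ne_zero_of_valuation_eq_one hvb
  have hle' := exponent_le hT hdim hcd has hbs (hT.div_mem ha hb hvb) (by field_simp)
  exact ⟨hle.1.antisymm hle'.1, hle.2.antisymm hle'.2⟩

end IsUnitMonomial

variable (k v T) in
/-- The linear combinations of `r` and `s` with coefficient matrix `(α, β; γ, δ)`, invertible over
`k[r, s]` localized at the origin, are up to units of `T` the monomials in `c` and `d` with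
exponent matrix `(m₁₁, m₁₂; m₂₁, m₂₂)` of nonzero determinant. -/
structure IsMonomialSystem (c d r s α β γ δ : F) (m₁₁ m₁₂ m₂₁ m₂₂ : ℕ) : Prop where
  α_mem : α ∈ pairLocal k r s
  β_mem : β ∈ pairLocal k r s
  γ_mem : γ ∈ pairLocal k r s
  δ_mem : δ ∈ pairLocal k r s
  valuation_det : v (α * δ - β * γ) = 1
  det_exponents_ne : m₁₁ * m₂₂ ≠ m₁₂ * m₂₁
  left : IsUnitMonomial v T c d m₁₁ m₁₂ (α * r + β * s)
  right : IsUnitMonomial v T c d m₂₁ m₂₂ (γ * r + δ * s)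

variable (k v T) in
/-- Some invertible linear combinations of `r` and `s` over `k[r, s]` localized at the origin are
independent monomials in `c` and `d` up to units of `T`. -/
def IsMonomialPair (c d r s : F) : Prop :=
  ∃ α β γ δ m₁₁ m₁₂ m₂₁ m₂₂, IsMonomialSystem k v T c d r s α β γ δ m₁₁ m₁₂ m₂₁ m₂₂

theorem valuation_mul_sub_mul_lt_one {r s a b : F} (ha : v a ≤ 1) (hb : v b ≤ 1) (hr : v r < 1)
    (hs : v s < 1) : v (a * r - b * s) < 1 := by
  rw [sub_eq_add_neg, ← neg_mul]
  exact valuation_mul_add_mul_lt_one hr hs ha (by rwa [Valuation.map_neg])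

theorem IsMonomialSystem.swap {c d r s α β γ δ : F} {m₁₁ m₁₂ m₂₁ m₂₂ : ℕ}
    (h : IsMonomialSystem k v T c d r s α β γ δ m₁₁ m₁₂ m₂₁ m₂₂) :
    IsMonomialSystem k v T c d r s γ δ α β m₂₁ m₂₂ m₁₁ m₁₂ where
  α_mem := h.γ_mem
  β_mem := h.δ_mem
  γ_mem := h.α_mem
  δ_mem := h.β_mem
  valuation_det := by
    rw [v.map_sub_swap, mul_comm δ, mul_comm γ]
    exact h.valuation_det
  det_exponents_ne := fun heq => h.det_exponents_ne (by linarith)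
  left := h.right
  right := h.left

namespace IsMonomialPair

theorem comm {c d r s : F} (h : IsMonomialPair k v T c d r s) : IsMonomialPair k v T c d s r := by
  obtain ⟨α, β, γ, δ, m₁₁, m₁₂, m₂₁, m₂₂, h⟩ := h
  refine ⟨β, α, δ, γ, m₁₁, m₁₂, m₂₁, m₂₂, ?_⟩
  constructor
  case valuation_det => rw [v.map_sub_swap, h.valuation_det]
  case det_exponents_ne => exact h.det_exponents_ne
  case left => exact add_comm (α * r) _ ▸ h.left
  case right => exact add_comm (γ * r) _ ▸ h.right
  all_goals rw [pairLocal_comm]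
  exacts [h.β_mem, h.α_mem, h.δ_mem, h.γ_mem]

-- A vector that is nonzero in the residue field is not killed by an invertible matrix.
theorem exists_isMonomialSystem {c d r s : F} (h : IsMonomialPair k v T c d r s)
    (hrs : IsCentered v (pairLocal k r s)) {τ : F} (hτ : v τ ≤ 1) :
    ∃ α β γ δ m₁₁ m₁₂ m₂₁ m₂₂, IsMonomialSystem k v T c d r s α β γ δ m₁₁ m₁₂ m₂₁ m₂₂ ∧
      v (α * τ + β) = 1 := by
  obtain ⟨α, β, γ, δ, m₁₁, m₁₂, m₂₁, m₂₂, h⟩ := h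
  have hle {a b : F} (ha : a ∈ pairLocal k r s) (hb : b ∈ pairLocal k r s) : v (a * τ + b) ≤ 1 :=
    v.integer.add_mem (v.integer.mul_mem (hrs a ha).1 hτ) (hrs b hb).1
  by_cases hαβ : v (α * τ + β) = 1
  · exact ⟨α, β, γ, δ, m₁₁, m₁₂, m₂₁, m₂₂, h, hαβ⟩
  refine ⟨γ, δ, α, β, m₂₁, m₂₂, m₁₁, m₁₂, h.swap, ?_⟩
  by_contra hγδ
  refine h.valuation_det.not_lt ?_
  rw [show α * δ - β * γ = α * (γ * τ + δ) - γ * (α * τ + β) by ring]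
  exact valuation_mul_sub_mul_lt_one (hrs α h.α_mem).1 (hrs γ h.γ_mem).1
    ((hle h.γ_mem h.δ_mem).lt_of_ne hγδ) ((hle h.α_mem h.β_mem).lt_of_ne hαβ)

end IsMonomialPair

theorem isMonomialPair_of_maximalIdeal_eq (hk : ∀ c : k, c ≠ 0 → v (algebraMap k F c) = 1)
    {r s : F} (hr : v r < 1) (hs : v s < 1) [IsLocalRing (pairLocal k r s)]
    [IsNoetherianRing (pairLocal k r s)] (hdim : ringKrullDim (pairLocal k r s) = 2)
    {a b : pairLocal k r s}
    (hab : IsLocalRing.maximalIdeal (pairLocal k r s) = Ideal.span {a, b}) {c d : F}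
    {m₁₁ m₁₂ m₂₁ m₂₂ : ℕ} (hm : m₁₁ * m₂₂ ≠ m₁₂ * m₂₁)
    (ha : IsUnitMonomial v T c d m₁₁ m₁₂ a) (hb : IsUnitMonomial v T c d m₂₁ m₂₂ b) :
    IsMonomialPair k v T c d r s := by
  have hrs := maximalIdeal_pairLocal_eq hk hr hs
  obtain ⟨α, β, rfl⟩ : ∃ α β, α * _ + β * _ = a := by
    rw [← Ideal.mem_span_pair, ← hrs, hab]
    exact Ideal.subset_span (by simp)
  obtain ⟨γ, δ, rfl⟩ : ∃ γ δ, γ * _ + δ * _ = b := by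
    rw [← Ideal.mem_span_pair, ← hrs, hab]
    exact Ideal.subset_span (by simp)
  have hdet := isUnit_det_of_maximalIdeal_eq_span_pair hdim hrs hab
  exact ⟨α, β, γ, δ, m₁₁, m₁₂, m₂₁, m₂₂, α.2, β.2, γ.2, δ.2,
    ((isCentered_pairLocal hk hr hs).isUnit_iff _).1 hdet, hm, ha, hb⟩

section Blowup

theorem pairLocal_mul_add_le (μ : k) (s t : F) :
    pairLocal k (s * (algebraMap k F μ + t)) s ≤ pairLocal k s t :=
  pairLocal_le_pairLocal (f := X 0 * (C μ + X 1)) (g := X 0) (by simp) (by simp)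
    (by simp [algHom_C]) (by simp)

variable (hk : ∀ c : k, c ≠ 0 → v (algebraMap k F c) = 1) {s t : F} (hs : v s < 1) (ht : v t < 1)
  (μ : k)

include hk hs ht

theorem valuation_mul_algebraMap_add_lt_one : v (s * (algebraMap k F μ + t)) < 1 := by
  have hμt : v (algebraMap k F μ + t) ≤ 1 := (isCentered_pairLocal hk hs ht _ <|
    add_mem (algebraMap_mem_pairLocal s t μ) (right_mem_pairLocal s t)).1
  rw [map_mul]
  exact (mul_le_of_le_one_right' hμt).trans_lt hs

theorem exists_eq_algebraMap_add_mul_of_mem_pairLocal {f : F}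
    (hf : f ∈ pairLocal k (s * (algebraMap k F μ + t)) s) :
    ∃ c : k, ∃ h ∈ pairLocal k s t, f = algebraMap k F c + h * s := by
  obtain ⟨c, h₁, hh₁, h₂, hh₂, rfl⟩ := exists_eq_algebraMap_add_of_mem_pairLocal hk
    (valuation_mul_algebraMap_add_lt_one hk hs ht μ) hs hf
  have hle := pairLocal_mul_add_le μ s t
  refine ⟨c, h₁ * (algebraMap k F μ + t) + h₂, ?_, by ring⟩
  exact add_mem (mul_mem (hle hh₁) (add_mem (algebraMap_mem_pairLocal s t μ)
    (right_mem_pairLocal s t))) (hle hh₂)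

theorem exists_mul_add_eq_mul_add_mul {γ δ : F}
    (hγ : γ ∈ pairLocal k (s * (algebraMap k F μ + t)) s)
    (hδ : δ ∈ pairLocal k (s * (algebraMap k F μ + t)) s) (hunit : ¬ (v γ < 1 ∧ v δ < 1))
    (h : v (γ * (algebraMap k F μ + t) + δ) < 1) :
    ∃ γ₀ : k, γ₀ ≠ 0 ∧ ∃ g ∈ pairLocal k s t,
      γ * (algebraMap k F μ + t) + δ = g * s + algebraMap k F γ₀ * t := by
  obtain ⟨γ₀, γ₁, hγ₁, rfl⟩ := exists_eq_algebraMap_add_mul_of_mem_pairLocal hk hs ht μ hγ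
  obtain ⟨δ₀, δ₁, hδ₁, rfl⟩ := exists_eq_algebraMap_add_mul_of_mem_pairLocal hk hs ht μ hδ
  have hcen := isCentered_pairLocal hk hs ht
  have hg : γ₁ * (algebraMap k F μ + t) + δ₁ ∈ pairLocal k s t := add_mem (mul_mem hγ₁
    (add_mem (algebraMap_mem_pairLocal s t μ) (right_mem_pairLocal s t))) hδ₁
  have hγ₀t := (hcen _ (algebraMap_mem_pairLocal s t γ₀)).1
  have hexpand : (algebraMap k F γ₀ + γ₁ * s) * (algebraMap k F μ + t) +
      (algebraMap k F δ₀ + δ₁ * s) = algebraMap k F (γ₀ * μ + δ₀) +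
        ((γ₁ * (algebraMap k F μ + t) + δ₁) * s + algebraMap k F γ₀ * t) := by
    rw [map_add, map_mul]
    ring
  have hconst : γ₀ * μ + δ₀ = 0 := by
    by_contra hne
    rw [hexpand] at h
    exact h.ne (valuation_add_eq_one (hk _ hne)
      (valuation_mul_add_mul_lt_one hs ht (hcen _ hg).1 hγ₀t))
  refine ⟨γ₀, ?_, _, hg, by rw [hexpand, hconst, map_zero, zero_add]⟩
  rintro rfl
  obtain rfl : δ₀ = 0 := by simpa using hconst
  simp only [map_zero, zero_add, map_mul] at hunit
  exact hunit ⟨(mul_le_of_le_one_left' (hcen _ hγ₁).1).trans_lt hs,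
    (mul_le_of_le_one_left' (hcen _ hδ₁).1).trans_lt hs⟩

end Blowup

theorem IsMonomialSystem.exponents_ne {c d r s α β γ δ : F} {m₁₁ m₁₂ m₂₁ m₂₂ : ℕ}
    (h : IsMonomialSystem k v T c d r s α β γ δ m₁₁ m₁₂ m₂₁ m₂₂) :
    ¬ (m₁₁ = m₂₁ ∧ m₁₂ = m₂₂) := by
  rintro ⟨rfl, rfl⟩
  exact h.det_exponents_ne (mul_comm _ _)

theorem IsMonomialPair.blowup [IsLocalRing T] [IsNoetherianRing T] (hT : IsCentered v T)
    (hdim : ringKrullDim T = 2) {c d : T}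
    (hcd : IsLocalRing.maximalIdeal T = Ideal.span {c, d})
    (hk : ∀ c : k, c ≠ 0 → v (algebraMap k F c) = 1) (hkT : ∀ c : k, algebraMap k F c ∈ T)
    {r s t : F} (hs : s ∈ T) (ht : t ∈ T) (hvs : v s < 1) (hvt : v t < 1) (hs0 : s ≠ 0) (μ : k)
    (hr : r = s * (algebraMap k F μ + t)) (h : IsMonomialPair k v T c d r s) :
    IsMonomialPair k v T c d s t := by
  subst hr
  have hL := isCentered_pairLocal hk hvs hvt
  have hLT := hT.pairLocal_le hk hkT hs ht hvs hvt
  have hle := pairLocal_mul_add_le μ s t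
  have hvr := valuation_mul_algebraMap_add_lt_one hk hvs hvt μ
  have hτ : algebraMap k F μ + t ∈ pairLocal k s t :=
    add_mem (algebraMap_mem_pairLocal s t μ) (right_mem_pairLocal s t)
  obtain ⟨α, β, γ, δ, m₁₁, m₁₂, m₂₁, m₂₂, h, hva⟩ :=
    h.exists_isMonomialSystem (isCentered_pairLocal hk hvr hvs) (hL _ hτ).1
  have ha := add_mem (mul_mem (hle h.α_mem) hτ) (hle h.β_mem)
  have hb := add_mem (mul_mem (hle h.γ_mem) hτ) (hle h.δ_mem)
  set a := α * (algebraMap k F μ + t) + β with ha_def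
  set b := γ * (algebraMap k F μ + t) + δ with hb_def
  have ha0 := ne_zero_of_valuation_eq_one hva
  have has : IsUnitMonomial v T c d m₁₁ m₁₂ (a * s) := by
    convert h.left using 1
    rw [ha_def]
    ring
  have hbs : IsUnitMonomial v T c d m₂₁ m₂₂ (b * s) := by
    convert h.right using 1
    rw [hb_def]
    ring
  obtain ⟨⟨h₁, h₂⟩, hvb⟩ := IsUnitMonomial.exponent_le_and_valuation_lt_one hT hdim hcd (hLT ha)
    hva (hLT hb) has hbs h.exponents_ne
  have hunit : ¬ (v γ < 1 ∧ v δ < 1) := fun ⟨hγ, hδ⟩ => h.valuation_det.not_lt <|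
    valuation_mul_sub_mul_lt_one (hL _ (hle h.α_mem)).1 (hL _ (hle h.β_mem)).1 hδ hγ
  obtain ⟨γ₀, hγ₀, g, hg, hbg⟩ :=
    exists_mul_add_eq_mul_add_mul hk hvs hvt μ h.γ_mem h.δ_mem hunit hvb
  obtain ⟨n₁, rfl⟩ := Nat.exists_eq_add_of_le h₁
  obtain ⟨n₂, rfl⟩ := Nat.exists_eq_add_of_le h₂
  refine ⟨a, 0, g / a, algebraMap k F γ₀ / a, m₁₁, m₁₂, n₁, n₂, ha, zero_mem _,
    hL.div_mem hg ha hva, hL.div_mem (algebraMap_mem_pairLocal s t γ₀) ha hva, ?_, ?_, ?_, ?_⟩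
  · rw [zero_mul, sub_zero, mul_div_cancel₀ _ ha0, hk γ₀ hγ₀]
  · intro heq
    exact h.det_exponents_ne (by linarith)
  · rwa [zero_mul, add_zero]
  · convert hbs.div hT has (mul_ne_zero ha0 hs0) using 1
    rw [hb_def.trans hbg]
    field_simp

end MonomialPair

section Jacobian

variable {k F : Type} [Field k] [Field F] [Algebra k F] {D₁ D₂ : Derivation k F F}

/-- The Jacobian determinant of `f` and `g` with respect to two derivations. -/
def jacobian (D₁ D₂ : Derivation k F F) (f g : F) : F := D₁ f * D₂ g - D₂ f * D₁ g

theorem jacobian_eq_mul {f g r s f₁ f₂ g₁ g₂ : F}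
    (hf : ∀ D : Derivation k F F, D f = f₁ * D r + f₂ * D s)
    (hg : ∀ D : Derivation k F F, D g = g₁ * D r + g₂ * D s) :
    jacobian D₁ D₂ f g = (f₁ * g₂ - f₂ * g₁) * jacobian D₁ D₂ r s := by
  simp only [jacobian, hf, hg]
  ring

theorem derivation_pow_eq_zero (D : Derivation k F F) (f : F) {n : ℕ} (hn : (n : F) = 0) :
    D (f ^ n) = 0 := by
  rw [D.leibniz_pow, nsmul_eq_mul, hn, zero_mul]

theorem jacobian_mul_pow (f g h : F) {n : ℕ} (hn : (n : F) = 0) :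
    jacobian D₁ D₂ f (g * h ^ n) = h ^ n * jacobian D₁ D₂ f g := by
  simp only [jacobian, Derivation.leibniz, derivation_pow_eq_zero _ _ hn, smul_eq_mul]
  ring

theorem jacobian_mul_pow_self (f g : F) (j : ℕ) :
    jacobian D₁ D₂ (f * g ^ j) g = g ^ j * jacobian D₁ D₂ f g := by
  simp only [jacobian, Derivation.leibniz, Derivation.leibniz_pow, smul_eq_mul, nsmul_eq_mul]
  ring

variable {Γ₀ : Type*} [LinearOrderedCommGroupWithZero Γ₀] {v : Valuation F Γ₀}
  (hk : ∀ c : k, c ≠ 0 → v (algebraMap k F c) = 1) {r s : F} (hr : v r < 1) (hs : v s < 1)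

include hk hr hs

theorem exists_jacobian_eq_mul {f g : F} (hf : f ∈ pairLocal k r s) (hg : g ∈ pairLocal k r s) :
    ∃ q ∈ pairLocal k r s, jacobian D₁ D₂ f g = q * jacobian D₁ D₂ r s := by
  obtain ⟨f₁, hf₁, f₂, hf₂, hDf⟩ := exists_derivation_eq_of_mem_pairLocal hk hr hs hf
  obtain ⟨g₁, hg₁, g₂, hg₂, hDg⟩ := exists_derivation_eq_of_mem_pairLocal hk hr hs hg
  exact ⟨_, sub_mem (mul_mem hf₁ hg₂) (mul_mem hf₂ hg₁), jacobian_eq_mul hDf hDg⟩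

theorem exists_derivation_mul_add_mul_eq {α β : F} (hα : α ∈ pairLocal k r s)
    (hβ : β ∈ pairLocal k r s) :
    ∃ a ∈ pairLocal k r s, ∃ b ∈ pairLocal k r s, v (a - α) < 1 ∧ v (b - β) < 1 ∧
      ∀ D : Derivation k F F, D (α * r + β * s) = a * D r + b * D s := by
  have hL := isCentered_pairLocal hk hr hs
  have hrL := left_mem_pairLocal (k := k) r s
  have hsL := right_mem_pairLocal (k := k) r s
  obtain ⟨α₁, hα₁, α₂, hα₂, hDα⟩ := exists_derivation_eq_of_mem_pairLocal hk hr hs hα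
  obtain ⟨β₁, hβ₁, β₂, hβ₂, hDβ⟩ := exists_derivation_eq_of_mem_pairLocal hk hr hs hβ
  refine ⟨α + (α₁ * r + β₁ * s), add_mem hα (add_mem (mul_mem hα₁ hrL) (mul_mem hβ₁ hsL)),
    β + (α₂ * r + β₂ * s), add_mem hβ (add_mem (mul_mem hα₂ hrL) (mul_mem hβ₂ hsL)), ?_, ?_,
    fun D => ?_⟩
  · rw [add_sub_cancel_left]
    exact valuation_mul_add_mul_lt_one hr hs (hL _ hα₁).1 (hL _ hβ₁).1
  · rw [add_sub_cancel_left]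
    exact valuation_mul_add_mul_lt_one hr hs (hL _ hα₂).1 (hL _ hβ₂).1
  · simp only [map_add, D.leibniz, smul_eq_mul, hDα, hDβ]
    ring

theorem exists_jacobian_eq_unit_mul {α β γ δ : F} (hα : α ∈ pairLocal k r s)
    (hβ : β ∈ pairLocal k r s) (hγ : γ ∈ pairLocal k r s) (hδ : δ ∈ pairLocal k r s)
    (hdet : v (α * δ - β * γ) = 1) (D₁ D₂ : Derivation k F F) :
    ∃ H ∈ pairLocal k r s, v H = 1 ∧
      jacobian D₁ D₂ (α * r + β * s) (γ * r + δ * s) = H * jacobian D₁ D₂ r s := by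
  have hL := isCentered_pairLocal hk hr hs
  obtain ⟨a, ha, b, hb, hva, hvb, hDa⟩ := exists_derivation_mul_add_mul_eq hk hr hs hα hβ
  obtain ⟨c, hc, d, hd, hvc, hvd, hDc⟩ := exists_derivation_mul_add_mul_eq hk hr hs hγ hδ
  refine ⟨_, sub_mem (mul_mem ha hd) (mul_mem hb hc), ?_, jacobian_eq_mul hDa hDc⟩
  rw [show a * d - b * c = α * δ - β * γ +
    ((d * (a - α) - c * (b - β)) + (α * (d - δ) - β * (c - γ))) by ring]
  exact valuation_add_eq_one hdet (v.map_add_lt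
    (valuation_mul_sub_mul_lt_one (hL _ hd).1 (hL _ hc).1 hva hvb)
    (valuation_mul_sub_mul_lt_one (hL _ hα).1 (hL _ hβ).1 hvd hvc))

end Jacobian

section JumpShape

variable {k F : Type} [Field k] [Field F] [Algebra k F]
variable {Γ₀ : Type*} [LinearOrderedCommGroupWithZero Γ₀] {v : Valuation F Γ₀}

/-- The shape of a pair `(u, w)` in terms of parameters `(x, y)`: with unit coefficients in the
local ring `L` centered at `v`, `u = x ^ p * G` and `w = y ^ p * τ + x * σ`, and the Jacobian of
`(u, w)` is `ε * x ^ p` times that of `(x, y)`. -/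
structure IsJumpShape (v : Valuation F Γ₀) (L : Subring F) (p : ℕ) (D₁ D₂ : Derivation k F F)
    (x y u w G τ σ ε : F) : Prop where
  G_mem : G ∈ L
  τ_mem : τ ∈ L
  σ_mem : σ ∈ L
  ε_mem : ε ∈ L
  valuation_G : v G = 1
  valuation_τ : v τ = 1
  valuation_σ : v σ = 1
  valuation_ε : v ε = 1
  eq_left : u = x ^ p * G
  eq_right : w = y ^ p * τ + x * σ
  jacobian_eq : jacobian D₁ D₂ u w = ε * x ^ p * jacobian D₁ D₂ x y

namespace IsJumpShape

variable {p : ℕ} {D₁ D₂ : Derivation k F F}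

section

variable {L : Subring F} {x y u w G τ σ ε : F} (h : IsJumpShape v L p D₁ D₂ x y u w G τ σ ε)

include h

theorem mono {L' : Subring F} (hle : L ≤ L') : IsJumpShape v L' p D₁ D₂ x y u w G τ σ ε where
  __ := h
  G_mem := hle h.G_mem
  τ_mem := hle h.τ_mem
  σ_mem := hle h.σ_mem
  ε_mem := hle h.ε_mem

theorem left_mem (hx : x ∈ L) : u ∈ L := h.eq_left ▸ mul_mem (pow_mem hx p) h.G_mem

theorem right_mem (hx : x ∈ L) (hy : y ∈ L) : w ∈ L :=
  h.eq_right ▸ add_mem (mul_mem (pow_mem hy p) h.τ_mem) (mul_mem hx h.σ_mem)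

theorem valuation_left : v u = v x ^ p := by
  rw [h.eq_left, map_mul, map_pow, h.valuation_G, mul_one]

theorem valuation_left_lt_one (hp : p ≠ 0) (hx : v x < 1) : v u < 1 :=
  h.valuation_left ▸ pow_lt_one₀ zero_le hx hp

theorem valuation_right_lt_one (hp : p ≠ 0) (hx : v x < 1) (hy : v y < 1) : v w < 1 := by
  rw [h.eq_right, mul_comm, mul_comm x]
  exact valuation_mul_add_mul_lt_one (v.map_pow y p ▸ pow_lt_one₀ zero_le hy hp) hx
    h.valuation_τ.le h.valuation_σ.le

end

section Obstruction

variable (hk : ∀ c : k, c ≠ 0 → v (algebraMap k F c) = 1) {z w : F} (hz : v z < 1) (hw : v w < 1)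
  {j : ℕ} {u t G τ σ ε : F}
  (h : IsJumpShape v (pairLocal k z w) p D₁ D₂ (z * w ^ j) w u t G τ σ ε)

include hk hz hw h

theorem pairLocal_le (hp : 1 < p) :
    v u < 1 ∧ v t < 1 ∧ pairLocal k u t ≤ pairLocal k z w := by
  have hL := isCentered_pairLocal hk hz hw
  have hwL := right_mem_pairLocal (k := k) z w
  have hx := mul_mem (left_mem_pairLocal (k := k) z w) (pow_mem hwL j)
  have hvx : v (z * w ^ j) < 1 := by
    rw [map_mul]
    exact (mul_le_of_le_one_right' (hL _ (pow_mem hwL j)).1).trans_lt hz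
  have hvu := h.valuation_left_lt_one (by omega) hvx
  have hvt := h.valuation_right_lt_one (by omega) hvx hw
  exact ⟨hvu, hvt, hL.pairLocal_le hk (algebraMap_mem_pairLocal z w) (h.left_mem hx)
    (h.right_mem hx hwL) hvu hvt⟩

theorem exists_mul_add_mul_eq (hp : 1 < p) (hj : j < p) {α β : F} (hα : α ∈ pairLocal k z w)
    (hβ : β ∈ pairLocal k z w) (hvβ : v β = 1) :
    ∃ e₁ ∈ pairLocal k z w, ∃ e₂ ∈ pairLocal k z w, v e₁ = 1 ∧ v e₂ = 1 ∧
      α * u + β * t = w ^ j * (w ^ (p - j) * e₁ + z * e₂) := by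
  have hL := isCentered_pairLocal hk hz hw
  obtain ⟨m, rfl⟩ := Nat.exists_eq_add_of_lt hj
  have hX : z ^ (j + m) * w ^ (j * (j + m)) * (α * G) ∈ pairLocal k z w :=
    mul_mem (mul_mem (pow_mem (left_mem_pairLocal z w) _) (pow_mem (right_mem_pairLocal z w) _))
      (mul_mem hα h.G_mem)
  have hvX : v (z ^ (j + m) * w ^ (j * (j + m)) * (α * G)) < 1 := by
    have hvz := pow_lt_one₀ (n := j + m) zero_le hz (by omega)
    rw [mul_assoc, map_mul, map_pow]
    refine (mul_le_of_le_one_right' (hL _ ?_).1).trans_lt hvz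
    exact mul_mem (pow_mem (right_mem_pairLocal z w) _) (mul_mem hα h.G_mem)
  refine ⟨_, mul_mem hβ h.τ_mem, _, add_mem (mul_mem hβ h.σ_mem) hX,
    by rw [map_mul, hvβ, h.valuation_τ, one_mul],
    valuation_add_eq_one (by rw [map_mul, hvβ, h.valuation_σ, one_mul]) hvX, ?_⟩
  rw [h.eq_left, h.eq_right, show j + m + 1 - j = m + 1 by omega]
  ring

theorem div_notMem (hp : 1 < p) (hj : j < p) [IsLocalRing (pairLocal k z w)]
    [IsNoetherianRing (pairLocal k z w)] (hdim : ringKrullDim (pairLocal k z w) = 2)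
    (ht : t ≠ 0) : u / t ∉ pairLocal k z w := by
  intro hmem
  have hL := isCentered_pairLocal hk hz hw
  have hwL := right_mem_pairLocal (k := k) z w
  obtain ⟨e₁, he₁, e₂, he₂, hve₁, hve₂, hcurve⟩ :=
    h.exists_mul_add_mul_eq hk hz hw hp hj (zero_mem _) (one_mem _) v.map_one
  rw [zero_mul, one_mul, zero_add] at hcurve
  refine not_pow_mul_add_mul_dvd_monomial hdim (maximalIdeal_pairLocal_eq hk hz hw)
    (e₁ := ⟨e₁, he₁⟩) (e₂ := ⟨e₂, he₂⟩) ((hL.isUnit_iff _).2 hve₁) ((hL.isUnit_iff _).2 hve₂)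
    (n := p - j) (by omega) p (j * p) ⟨⟨w ^ j * (u / t) / G,
      hL.div_mem (mul_mem (pow_mem hwL j) hmem) h.G_mem h.valuation_G⟩, Subtype.ext ?_⟩
  push_cast
  rw [mul_div_assoc', mul_left_comm, ← mul_assoc, ← hcurve, mul_div_cancel₀ _ ht, h.eq_left,
    mul_div_cancel_right₀ _ (ne_zero_of_valuation_eq_one h.valuation_G)]
  ring

theorem exists_mul_pow_sq_eq (hp : 1 < p) (hj : j < p) [IsLocalRing (pairLocal k z w)]
    [IsNoetherianRing (pairLocal k z w)] (hdim : ringKrullDim (pairLocal k z w) = 2)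
    {c d : pairLocal k z w}
    (hcd : IsLocalRing.maximalIdeal (pairLocal k z w) = Ideal.span {c, d})
    {α β γ δ : F} {m₁₁ m₁₂ m₂₁ m₂₂ : ℕ}
    (hs : IsMonomialSystem k v (pairLocal k z w) c d u t α β γ δ m₁₁ m₁₂ m₂₁ m₂₂)
    (hvβ : v β = 1) :
    ∃ ε' ∈ pairLocal k z w, ∃ d' : F, γ * u + δ * t = ε' * d' ^ (p ^ 2) ∧
      ∀ q ∈ pairLocal k z w, z ^ p * w ^ (j * p + j) ≠ d' ^ (p ^ 2) * q := by
  have hL := isCentered_pairLocal hk hz hw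
  obtain ⟨-, -, hle⟩ := h.pairLocal_le hk hz hw hp
  have hα := hle hs.α_mem
  have hβ := hle hs.β_mem
  have hγ := hle hs.γ_mem
  have hδ := hle hs.δ_mem
  have hβ0 := ne_zero_of_valuation_eq_one hvβ
  obtain ⟨e₁, he₁, e₂, he₂, hve₁, hve₂, hab⟩ := h.exists_mul_add_mul_eq hk hz hw hp hj hα hβ hvβ
  obtain ⟨ε₁, hε₁, hvε₁, ha⟩ := hs.left
  obtain ⟨ε₂, hε₂, hvε₂, hb⟩ := hs.right
  have hη : (γ * β - δ * α) / β * G ∈ pairLocal k z w := mul_mem (hL.div_mem (sub_mem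
    (mul_mem hγ hβ) (mul_mem hδ hα)) hβ hvβ) h.G_mem
  have hvη : v ((γ * β - δ * α) / β * G) = 1 := by
    rw [map_mul, map_div₀, hvβ, h.valuation_G, div_one, mul_one, v.map_sub_swap, mul_comm δ,
      mul_comm γ, hs.valuation_det]
  have hcomb : γ * u + δ * t = δ / β * (α * u + β * t) +
      (γ * β - δ * α) / β * G * (z ^ p * w ^ (j * p)) := by
    rw [h.eq_left]
    field_simp
    ring
  obtain ⟨d', hd', hndvd⟩ := exists_eq_unit_mul_pow_sq_of_monomial_curve hdim
    (maximalIdeal_pairLocal_eq hk hz hw) hcd hp hj (a := ⟨_, hε₁⟩ * c ^ m₁₁ * d ^ m₁₂)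
    (b := ⟨_, hε₂⟩ * c ^ m₂₁ * d ^ m₂₂) (e₁ := ⟨_, he₁⟩) (e₂ := ⟨_, he₂⟩)
    (h := ⟨_, hL.div_mem hδ hβ hvβ⟩) (η := ⟨_, hη⟩)
    ((hL.isUnit_iff _).2 hve₁) ((hL.isUnit_iff _).2 hve₂) ((hL.isUnit_iff _).2 hvη)
    ((hL.isUnit_iff _).2 hvε₁) ((hL.isUnit_iff _).2 hvε₂)
    (Subtype.ext (ha.symm.trans hab))
    (Subtype.ext (by push_cast; rw [← hb, ← ha, hcomb])) rfl rfl
  refine ⟨ε₂, hε₂, d', hb.trans (congrArg Subtype.val hd'), fun q hq hzw => ?_⟩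
  exact hndvd ⟨⟨q, hq⟩, Subtype.ext hzw⟩

theorem not_isMonomialPair (hp : 1 < p) (hj : j < p) [CharP F p] [IsLocalRing (pairLocal k z w)]
    [IsNoetherianRing (pairLocal k z w)] (hdim : ringKrullDim (pairLocal k z w) = 2)
    {c d : pairLocal k z w}
    (hcd : IsLocalRing.maximalIdeal (pairLocal k z w) = Ideal.span {c, d})
    (hJ : jacobian D₁ D₂ z w ≠ 0) :
    ¬ IsMonomialPair k v (pairLocal k z w) c d u t := by
  intro hmon
  have hL := isCentered_pairLocal hk hz hw
  obtain ⟨hvu, hvt, hle⟩ := h.pairLocal_le hk hz hw hp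
  obtain ⟨α, β, γ, δ, m₁₁, m₁₂, m₂₁, m₂₂, hs, hvβ⟩ :=
    hmon.exists_isMonomialSystem (isCentered_pairLocal hk hvu hvt) (τ := 0) (by simp)
  rw [mul_zero, zero_add] at hvβ
  obtain ⟨ε', hε', d', hb, hne⟩ :=
    h.exists_mul_pow_sq_eq hk hz hw hp hj hdim hcd hs hvβ
  obtain ⟨H, hH, hvH, hJH⟩ := exists_jacobian_eq_unit_mul hk hvu hvt hs.α_mem hs.β_mem hs.γ_mem
    hs.δ_mem hs.valuation_det D₁ D₂
  have ha : α * u + β * t ∈ pairLocal k z w := hle (add_mem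
    (mul_mem hs.α_mem (left_mem_pairLocal u t)) (mul_mem hs.β_mem (right_mem_pairLocal u t)))
  obtain ⟨q, hq, hJq⟩ := exists_jacobian_eq_mul (D₁ := D₁) (D₂ := D₂) hk hz hw ha hε'
  have hHε : v (H * ε) = 1 := by rw [map_mul, hvH, h.valuation_ε, one_mul]
  have hHε0 := ne_zero_of_valuation_eq_one hHε
  have heq : H * ε * (z ^ p * w ^ (j * p + j)) = d' ^ (p ^ 2) * q := by
    apply mul_right_cancel₀ hJ
    rw [mul_assoc (d' ^ p ^ 2), ← hJq, ← jacobian_mul_pow _ _ _ (by simp), ← hb, hJH,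
      h.jacobian_eq, jacobian_mul_pow_self]
    ring
  refine hne (q / (H * ε)) (hL.div_mem hq (mul_mem (hle hH) h.ε_mem) hHε) ?_
  rw [mul_div_assoc', eq_div_iff hHε0, ← heq, mul_comm]

end Obstruction

end IsJumpShape

end JumpShape

/-- The leading coefficients of an expansion `u = x ^ p * (g + κ * y + …)`,
`w = t * y ^ p + s * x + …`, see `IsJumpForm`. -/
structure JumpCoeff (k : Type) where
  g : k
  κ : k
  t : k
  s : k

namespace JumpCoeff

variable {k : Type} [Field k] {p : ℕ} {α : k}

/-- The leading coefficients after the substitution `x = y ^ p * (α + z)`, when `(x, y)` is replaced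
by `(y, z)` and `(u, w)` by `(w, u / w ^ p - c)` with `c` the residue of `u / w ^ p`. -/
def next (p : ℕ) (α : k) (a : JumpCoeff k) : JumpCoeff k where
  g := a.t + α * a.s
  κ := a.s
  t := a.g * a.t ^ p / (a.t + α * a.s) ^ (2 * p)
  s := a.κ * α ^ p / (a.t + α * a.s) ^ p

/-- The residue of `u / w ^ p` when `u`, `w` have leading coefficients `a`
and `x = y ^ p * (α + z)`. -/
def residue (p : ℕ) (α : k) (a : JumpCoeff k) : k := a.g * α ^ p / (a.t + α * a.s) ^ p

/-- All leading coefficients are nonzero. -/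
structure IsNondegenerate (a : JumpCoeff k) : Prop where
  g_ne_zero : a.g ≠ 0
  κ_ne_zero : a.κ ≠ 0
  t_ne_zero : a.t ≠ 0
  s_ne_zero : a.s ≠ 0

theorem IsNondegenerate.next {a : JumpCoeff k} (ha : a.IsNondegenerate) (hα : α ≠ 0)
    (h : a.t + α * a.s ≠ 0) : (a.next p α).IsNondegenerate where
  g_ne_zero := h
  κ_ne_zero := ha.s_ne_zero
  t_ne_zero := div_ne_zero (mul_ne_zero ha.g_ne_zero (pow_ne_zero _ ha.t_ne_zero))
    (pow_ne_zero _ h)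
  s_ne_zero := div_ne_zero (mul_ne_zero ha.κ_ne_zero (pow_ne_zero _ hα)) (pow_ne_zero _ h)

theorem IsNondegenerate.residue_ne_zero {a : JumpCoeff k} (ha : a.IsNondegenerate) (hα : α ≠ 0)
    (h : a.t + α * a.s ≠ 0) : a.residue p α ≠ 0 :=
  div_ne_zero (mul_ne_zero ha.g_ne_zero (pow_ne_zero _ hα)) (pow_ne_zero _ h)

end JumpCoeff

section CharP

variable {F : Type} [Field F] {p : ℕ} [Fact p.Prime] [CharP F p]

theorem div_pow_sub_eq_mul_add_mul {x y z θ G g κ c α t s H : F} (hx : x = y ^ p * (α + z))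
    (hy : y ≠ 0) (hμ : t + α * s ≠ 0) (hθ : θ = t + α * s + s * z + H * y) (hθ0 : θ ≠ 0)
    (hG : G = g + κ * y + c * y ^ 2) :
    x ^ p * G / (y ^ p * θ) ^ p - g * α ^ p / (t + α * s) ^ p =
      z ^ p * (t ^ p * (G / θ ^ p) / (t + α * s) ^ p) +
        y * (α ^ p * (κ + (c - y ^ (p - 2) * (G / θ ^ p * H ^ p)) * y) / (t + α * s) ^ p) := by
  have hp := (Fact.out : p.Prime).two_le
  have hμp : (t + α * s) ^ p = t ^ p + α ^ p * s ^ p := by rw [add_pow_char, mul_pow]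
  have hθp : θ ^ p = (t + α * s) ^ p + s ^ p * z ^ p + H ^ p * y ^ p := by
    rw [hθ, add_pow_char, add_pow_char, mul_pow, mul_pow]
  have hyp : y ^ p = y ^ (p - 2) * y ^ 2 := by rw [← pow_add, Nat.sub_add_cancel hp]
  have hθp0 := pow_ne_zero p hθ0
  have hquot : x ^ p * G / (y ^ p * θ) ^ p = (α ^ p + z ^ p) * (G / θ ^ p) := by
    have := pow_ne_zero p (pow_ne_zero p hy)
    rw [hx, mul_pow, mul_pow, add_pow_char]
    field_simp
  have hGθ : G / θ ^ p * θ ^ p = G := div_mul_cancel₀ G hθp0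
  have hμp0 := pow_ne_zero p hμ
  rw [hquot]
  generalize G / θ ^ p = Q at *
  field_simp
  rw [hyp] at hθp
  linear_combination (z ^ p * Q) * hμp + α ^ p * (hGθ + hG - Q * hθp)

variable {Γ₀ : Type*} [LinearOrderedCommGroupWithZero Γ₀] {v : Valuation F Γ₀}

theorem valuation_mul_div_pow_sub_lt_one {G θ g μ f : F} (hf : v f ≤ 1) (hg : v g ≤ 1)
    (hμ : v μ = 1) (hθ : v θ = 1) (hGg : v (G - g) < 1) (hθμ : v (θ - μ) < 1) :
    v (f * (G / θ ^ p) / μ ^ p - g * f / μ ^ (2 * p)) < 1 := by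
  have hθp : v (θ ^ p) = 1 := by rw [map_pow, hθ, one_pow]
  have hμp : v (μ ^ p) = 1 := by rw [map_pow, hμ, one_pow]
  have hθp0 := ne_zero_of_valuation_eq_one hθp
  have hμp0 := ne_zero_of_valuation_eq_one hμp
  have hpow : v (θ ^ p - μ ^ p) < 1 := by
    rw [← sub_pow_char, map_pow]
    exact pow_lt_one₀ zero_le hθμ (Fact.out : p.Prime).ne_zero
  rw [show f * (G / θ ^ p) / μ ^ p - g * f / μ ^ (2 * p) =
      f * (μ ^ p * (G - g) - g * (θ ^ p - μ ^ p)) / (θ ^ p * (μ ^ p * μ ^ p)) by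
        rw [pow_mul']; field_simp; ring,
    map_div₀, map_mul, map_mul v (θ ^ p), map_mul v (μ ^ p), hθp, hμp, mul_one, mul_one, div_one]
  exact (mul_le_of_le_one_left' hf).trans_lt (valuation_mul_sub_mul_lt_one hμp.le hg hGg hpow)

end CharP

section JumpForm

variable {k F : Type} [Field k] [Field F] [Algebra k F]
variable {Γ₀ : Type*} [LinearOrderedCommGroupWithZero Γ₀] {v : Valuation F Γ₀}

/-- The jump shape `u = x ^ p * G`, `w = y ^ p * τ + x * σ` over the local ring of `(x, y)`, with
leading coefficients `a`: `G ≡ g + κ * y` modulo `(x, y ^ 2)`, and `τ`, `σ` have residues `t`,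
`s`. -/
def IsJumpForm (v : Valuation F Γ₀) (p : ℕ) (D₁ D₂ : Derivation k F F) (x y u w : F)
    (a : JumpCoeff k) : Prop :=
  ∃ G τ σ ε, IsJumpShape v (pairLocal k x y) p D₁ D₂ x y u w G τ σ ε ∧
    v (τ - algebraMap k F a.t) < 1 ∧ v (σ - algebraMap k F a.s) < 1 ∧
    ∃ h ∈ pairLocal k x y, ∃ c ∈ pairLocal k x y,
      G = algebraMap k F a.g + algebraMap k F a.κ * y + (h * x + c * y ^ 2)

/-- The expansion of `(u, w)` of the form `a` over the local ring of `(y, z)`, after the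
substitution `x = y ^ p * (α + z)`. -/
structure IsJumpExpansion (v : Valuation F Γ₀) (p : ℕ) (α : k) (D₁ D₂ : Derivation k F F)
    (x y z u w : F) (a : JumpCoeff k) (G θ ε H c : F) : Prop where
  G_mem : G ∈ pairLocal k y z
  θ_mem : θ ∈ pairLocal k y z
  ε_mem : ε ∈ pairLocal k y z
  H_mem : H ∈ pairLocal k y z
  c_mem : c ∈ pairLocal k y z
  valuation_ε : v ε = 1
  eq_left : u = x ^ p * G
  eq_right : w = y ^ p * θ
  jacobian_eq : jacobian D₁ D₂ u w = ε * x ^ p * jacobian D₁ D₂ x y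
  θ_eq : θ = algebraMap k F a.t + algebraMap k F α * algebraMap k F a.s +
    algebraMap k F a.s * z + H * y
  G_eq : G = algebraMap k F a.g + algebraMap k F a.κ * y + c * y ^ 2

theorem jacobian_pow_mul_add {p : ℕ} [CharP F p] {D₁ D₂ : Derivation k F F} (y z : F) (α : k) :
    jacobian D₁ D₂ (y ^ p * (algebraMap k F α + z)) y = -(y ^ p * jacobian D₁ D₂ y z) := by
  simp only [jacobian, Derivation.leibniz, derivation_pow_eq_zero _ _ (CharP.cast_eq_zero F p),
    map_add, Derivation.map_algebraMap, smul_eq_mul]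
  ring

theorem jacobian_div_pow_sub {p : ℕ} [CharP F p] {D₁ D₂ : Derivation k F F} {u w : F} (hw : w ≠ 0)
    (c : k) :
    jacobian D₁ D₂ w (u / w ^ p - algebraMap k F c) = -(jacobian D₁ D₂ u w / w ^ p) := by
  have hwp := pow_ne_zero p hw
  have hu : jacobian D₁ D₂ w u = w ^ p * jacobian D₁ D₂ w (u / w ^ p) := by
    rw [← jacobian_mul_pow _ _ _ (CharP.cast_eq_zero F p), div_mul_cancel₀ u hwp]
  have hsub : jacobian D₁ D₂ w (u / w ^ p - algebraMap k F c) = jacobian D₁ D₂ w (u / w ^ p) := by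
    simp only [jacobian, map_sub, Derivation.map_algebraMap, sub_zero]
  rw [hsub, ← neg_div, eq_div_iff hwp, mul_comm, ← hu, jacobian, jacobian]
  ring

variable (hk : ∀ c : k, c ≠ 0 → v (algebraMap k F c) = 1)

include hk

theorem valuation_eq_one_of_sub_algebraMap {f : F} {c : k} (hc : c ≠ 0)
    (h : v (f - algebraMap k F c) < 1) : v f = 1 := by
  rw [← add_sub_cancel (algebraMap k F c) f]
  exact valuation_add_eq_one (hk c hc) h

theorem isJumpForm_of_isNondegenerate {p : ℕ} {D₁ D₂ : Derivation k F F} {x y u w τ σ ε h c : F}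
    {a : JumpCoeff k} (ha : a.IsNondegenerate) (hx : v x < 1) (hy : v y < 1)
    (hτL : τ ∈ pairLocal k x y) (hσL : σ ∈ pairLocal k x y) (hεL : ε ∈ pairLocal k x y)
    (hh : h ∈ pairLocal k x y) (hc : c ∈ pairLocal k x y)
    (hu : u = x ^ p * (algebraMap k F a.g + algebraMap k F a.κ * y + (h * x + c * y ^ 2)))
    (hw : w = y ^ p * τ + x * σ) (hτ : v (τ - algebraMap k F a.t) < 1)
    (hσ : v (σ - algebraMap k F a.s) < 1) (hε : v ε = 1)
    (hJ : jacobian D₁ D₂ u w = ε * x ^ p * jacobian D₁ D₂ x y) :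
    IsJumpForm v p D₁ D₂ x y u w a := by
  have hL := isCentered_pairLocal hk hx hy
  have hkL := algebraMap_mem_pairLocal (k := k) x y
  have hyL := right_mem_pairLocal (k := k) x y
  have hκ : algebraMap k F a.κ + c * y ∈ pairLocal k x y := add_mem (hkL _) (mul_mem hc hyL)
  have hG : algebraMap k F a.g + algebraMap k F a.κ * y + (h * x + c * y ^ 2) =
      algebraMap k F a.g + (h * x + (algebraMap k F a.κ + c * y) * y) := by ring
  exact ⟨_, τ, σ, ε, {
    G_mem := hG ▸ add_mem (hkL _)
      (add_mem (mul_mem hh (left_mem_pairLocal x y)) (mul_mem hκ hyL))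
    τ_mem := hτL
    σ_mem := hσL
    ε_mem := hεL
    valuation_G := hG ▸ valuation_add_eq_one (hk _ ha.g_ne_zero)
      (valuation_mul_add_mul_lt_one hx hy (hL _ hh).1 (hL _ hκ).1)
    valuation_τ := valuation_eq_one_of_sub_algebraMap hk ha.t_ne_zero hτ
    valuation_σ := valuation_eq_one_of_sub_algebraMap hk ha.s_ne_zero hσ
    valuation_ε := hε
    eq_left := hu
    eq_right := hw
    jacobian_eq := hJ }, hτ, hσ, h, hh, c, hc, rfl⟩

variable {p : ℕ} {α : k} {x y z : F} (hvy : v y < 1) (hvz : v z < 1)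
  (hx : x = y ^ p * (algebraMap k F α + z))

include hvy hvz hx

theorem valuation_lt_one_and_pairLocal_le_of_eq_pow_mul (hp : p ≠ 0) :
    v x < 1 ∧ pairLocal k x y ≤ pairLocal k y z := by
  have hL := isCentered_pairLocal hk hvy hvz
  have hyL := left_mem_pairLocal (k := k) y z
  have hαz := add_mem (algebraMap_mem_pairLocal y z α) (right_mem_pairLocal (k := k) y z)
  have hvx : v x < 1 := by
    rw [hx, map_mul, map_pow]
    exact (mul_le_of_le_one_right' (hL _ hαz).1).trans_lt (pow_lt_one₀ zero_le hvy hp)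
  exact ⟨hvx, hL.pairLocal_le hk (algebraMap_mem_pairLocal y z)
    (hx ▸ mul_mem (pow_mem hyL p) hαz) hyL hvx hvy⟩

theorem exists_eq_algebraMap_add_mul (hp : p ≠ 0) {f : F} {c : k} (hf : f ∈ pairLocal k x y)
    (hfc : v (f - algebraMap k F c) < 1) :
    ∃ A ∈ pairLocal k y z, f = algebraMap k F c + A * y := by
  obtain ⟨hvx, hle⟩ := valuation_lt_one_and_pairLocal_le_of_eq_pow_mul hk hvy hvz hx hp
  obtain ⟨A, hA, B, hB, hAB⟩ := exists_eq_mul_add_mul_of_mem_pairLocal hk hvx hvy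
    (sub_mem hf (algebraMap_mem_pairLocal x y c)) hfc
  have hyL := left_mem_pairLocal (k := k) y z
  have hαz := add_mem (algebraMap_mem_pairLocal y z α) (right_mem_pairLocal (k := k) y z)
  refine ⟨A * (y ^ (p - 1) * (algebraMap k F α + z)) + B,
    add_mem (mul_mem (hle hA) (mul_mem (pow_mem hyL _) hαz)) (hle hB), ?_⟩
  rw [hx, ← mul_pow_sub_one hp y] at hAB
  linear_combination hAB

theorem IsJumpForm.exists_expansion (hp : 2 ≤ p) {D₁ D₂ : Derivation k F F} {u w : F}
    {a : JumpCoeff k} (h : IsJumpForm v p D₁ D₂ x y u w a) :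
    ∃ G θ ε H c, IsJumpExpansion v p α D₁ D₂ x y z u w a G θ ε H c := by
  obtain ⟨G, τ, σ, ε, hS, hτ, hσ, h₀, hh₀, c, hc, hG⟩ := h
  have hp0 : p ≠ 0 := by omega
  obtain ⟨-, hle⟩ := valuation_lt_one_and_pairLocal_le_of_eq_pow_mul hk hvy hvz hx hp0
  obtain ⟨A, hA, hτA⟩ := exists_eq_algebraMap_add_mul hk hvy hvz hx hp0 hS.τ_mem hτ
  obtain ⟨B, hB, hσB⟩ := exists_eq_algebraMap_add_mul hk hvy hvz hx hp0 hS.σ_mem hσ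
  have hyL := left_mem_pairLocal (k := k) y z
  have hαz := add_mem (algebraMap_mem_pairLocal y z α) (right_mem_pairLocal (k := k) y z)
  exact ⟨G, τ + (algebraMap k F α + z) * σ, ε, A + (algebraMap k F α + z) * B,
    h₀ * (y ^ (p - 2) * (algebraMap k F α + z)) + c, {
      G_mem := hle hS.G_mem
      θ_mem := add_mem (hle hS.τ_mem) (mul_mem hαz (hle hS.σ_mem))
      ε_mem := hle hS.ε_mem
      H_mem := add_mem hA (mul_mem hαz hB)
      c_mem := add_mem (mul_mem (hle hh₀) (mul_mem (pow_mem hyL _) hαz)) (hle hc)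
      valuation_ε := hS.valuation_ε
      eq_left := hS.eq_left
      eq_right := by rw [hS.eq_right, hx]; ring
      jacobian_eq := hS.jacobian_eq
      θ_eq := by rw [hτA, hσB]; ring
      G_eq := by
        rw [hG, hx, show y ^ p = y ^ (p - 2) * y ^ 2 by rw [← pow_add, Nat.sub_add_cancel hp]]
        ring }⟩

omit hx

namespace IsJumpExpansion

variable {D₁ D₂ : Derivation k F F} {u w G θ ε H c : F} {a : JumpCoeff k}
  (h : IsJumpExpansion v p α D₁ D₂ x y z u w a G θ ε H c)

include h

theorem valuation_G_sub_lt_one : v (G - algebraMap k F a.g) < 1 := by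
  have hL := isCentered_pairLocal hk hvy hvz
  rw [h.G_eq, add_assoc, add_sub_cancel_left, sq, ← mul_assoc]
  exact valuation_mul_add_mul_lt_one hvy hvy (hL _ (algebraMap_mem_pairLocal y z _)).1
    (hL _ (mul_mem h.c_mem (left_mem_pairLocal y z))).1

theorem valuation_θ_sub_lt_one :
    v (θ - (algebraMap k F a.t + algebraMap k F α * algebraMap k F a.s)) < 1 := by
  have hL := isCentered_pairLocal hk hvy hvz
  rw [h.θ_eq, add_assoc, add_sub_cancel_left, add_comm]
  exact valuation_mul_add_mul_lt_one hvy hvz (hL _ h.H_mem).1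
    (hL _ (algebraMap_mem_pairLocal y z _)).1

theorem valuation_θ (hμ : a.t + α * a.s ≠ 0) : v θ = 1 :=
  valuation_eq_one_of_sub_algebraMap hk hμ <| by
    rw [map_add, map_mul]
    exact h.valuation_θ_sub_lt_one hk hvy hvz

theorem isJumpForm_next [Fact p.Prime] [CharP F p]
    (hx : x = y ^ p * (algebraMap k F α + z)) (hy : y ≠ 0) (ha : a.IsNondegenerate) (hα : α ≠ 0)
    (hμ : a.t + α * a.s ≠ 0) :
    IsJumpForm v p D₁ D₂ y z w (u / w ^ p - algebraMap k F (a.residue p α)) (a.next p α) := by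
  have hL := isCentered_pairLocal hk hvy hvz
  have hkL := algebraMap_mem_pairLocal (k := k) y z
  have hyL := left_mem_pairLocal (k := k) y z
  have hGg := h.valuation_G_sub_lt_one hk hvy hvz
  have hθμ := h.valuation_θ_sub_lt_one hk hvy hvz
  have hvθ := h.valuation_θ hk hvy hvz hμ
  have hθ0 := ne_zero_of_valuation_eq_one hvθ
  set μ := algebraMap k F a.t + algebraMap k F α * algebraMap k F a.s with hμe
  have hμk : algebraMap k F (a.t + α * a.s) = μ := by rw [hμe, map_add, map_mul]
  have hvμ : v μ = 1 := hμk ▸ hk _ hμ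
  have hdiv : ∀ f ∈ pairLocal k y z, f / μ ^ p ∈ pairLocal k y z := fun f hf =>
    hL.div_mem hf (pow_mem (hμk ▸ hkL _) p) (by rw [map_pow, hvμ, one_pow])
  have hdivθ : ∀ f ∈ pairLocal k y z, f / θ ^ p ∈ pairLocal k y z := fun f hf =>
    hL.div_mem hf (pow_mem h.θ_mem p) (by rw [map_pow, hvθ, one_pow])
  have hq := sub_mem h.c_mem
    (mul_mem (pow_mem hyL (p - 2)) (mul_mem (hdivθ G h.G_mem) (pow_mem h.H_mem p)))
  have hαz := add_mem (hkL α) (right_mem_pairLocal y z)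
  refine isJumpForm_of_isNondegenerate hk (ha.next hα hμ) hvy hvz
    (hdiv _ (mul_mem (pow_mem (hkL a.t) p) (hdivθ G h.G_mem)))
    (hdiv _ (mul_mem (pow_mem (hkL α) p) (add_mem (hkL a.κ) (mul_mem hq hyL))))
    (mul_mem h.ε_mem (hdivθ _ (pow_mem hαz p))) h.H_mem (zero_mem _) ?_ ?_ ?_ ?_ ?_ ?_
  · simp only [JumpCoeff.next, hμk]
    rw [h.eq_right, h.θ_eq]
    ring
  · rw [JumpCoeff.residue, map_div₀, map_mul, map_pow, map_pow, hμk, h.eq_left, h.eq_right]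
    exact div_pow_sub_eq_mul_add_mul hx hy (ne_zero_of_valuation_eq_one hvμ) h.θ_eq hθ0 h.G_eq
  · simp only [JumpCoeff.next, map_div₀, map_mul, map_pow, hμk]
    exact valuation_mul_div_pow_sub_lt_one (hL _ (pow_mem (hkL _) p)).1 (hL _ (hkL _)).1 hvμ hvθ
      hGg hθμ
  · simp only [JumpCoeff.next, map_div₀, map_mul, map_pow, hμk]
    rw [mul_comm (algebraMap k F a.κ), ← sub_div, ← mul_sub, add_sub_cancel_left, ← mul_assoc,
      mul_div_right_comm, map_mul]
    exact (mul_le_of_le_one_left' (hL _ (hdiv _ (mul_mem (pow_mem (hkL α) p) hq))).1).trans_lt hvy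
  · rw [map_mul, h.valuation_ε, map_div₀, map_pow, map_pow, hvθ,
      valuation_add_eq_one (hk α hα) hvz, div_self (pow_ne_zero p one_ne_zero), one_mul]
  · have hyp := pow_ne_zero p (pow_ne_zero p hy)
    have hw0 : w ≠ 0 := h.eq_right ▸ mul_ne_zero (pow_ne_zero p hy) hθ0
    rw [jacobian_div_pow_sub hw0, h.jacobian_eq, hx, jacobian_pow_mul_add, h.eq_right, mul_pow,
      mul_pow]
    field_simp

end IsJumpExpansion

/-- Dividing `u` by `w ^ p` trades the jump `x = y ^ p * (α + z)` of the parameters for a jump of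
`(w, u / w ^ p - c)` over `(y, z)` of the same form, so the monomial shape never improves. -/
theorem IsJumpForm.next [Fact p.Prime] [CharP F p] (hx : x = y ^ p * (algebraMap k F α + z))
    (hy : y ≠ 0) {D₁ D₂ : Derivation k F F} {u w : F} {a : JumpCoeff k} (ha : a.IsNondegenerate)
    (hα : α ≠ 0) (hμ : a.t + α * a.s ≠ 0) (h : IsJumpForm v p D₁ D₂ x y u w a) :
    w ≠ 0 ∧ IsJumpForm v p D₁ D₂ y z w (u / w ^ p - algebraMap k F (a.residue p α))
      (a.next p α) := by
  obtain ⟨G, θ, ε, H, c, hE⟩ :=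
    h.exists_expansion hk hvy hvz hx (Fact.out : p.Prime).two_le
  exact ⟨hE.eq_right ▸ mul_ne_zero (pow_ne_zero p hy)
    (ne_zero_of_valuation_eq_one (hE.valuation_θ hk hvy hvz hμ)),
    hE.isJumpForm_next hk hvy hvz hx hy ha hα hμ⟩

end JumpForm

section ChainCenter

variable {k F : Type} [Field k] [Field F] [Algebra k F]

theorem exists_aeval_of_mem_adjoin_pair {r s z : F} (hz : z ∈ IntermediateField.adjoin k {r, s}) :
    ∃ P Q : MvPolynomial (Fin 2) k, aeval ![r, s] Q ≠ 0 ∧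
      z * aeval ![r, s] Q = aeval ![r, s] P := by
  rw [← Matrix.range_cons_cons_empty r s ![], IntermediateField.mem_adjoin_range_iff] at hz
  obtain ⟨P, Q, rfl⟩ := hz
  by_cases hQ : aeval ![r, s] Q = 0
  · exact ⟨0, 1, by simp [hQ]⟩
  · exact ⟨P, Q, hQ, div_mul_cancel₀ _ hQ⟩

theorem adjoin_pair_le_adjoin_div_pow {r s : F} (hs : s ≠ 0) (j : ℕ) :
    IntermediateField.adjoin k {r, s} ≤ IntermediateField.adjoin k {r / s ^ j, s} := by
  have hrs := IntermediateField.mem_adjoin_pair_left k (r / s ^ j) s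
  have hs' := IntermediateField.mem_adjoin_pair_right k (r / s ^ j) s
  rw [IntermediateField.adjoin_le_iff, Set.pair_subset_iff]
  have hr := mul_mem hrs (pow_mem hs' j)
  rw [div_mul_cancel₀ r (pow_ne_zero j hs)] at hr
  exact ⟨hr, hs'⟩

variable {Γ₀ : Type*} [LinearOrderedCommGroupWithZero Γ₀] {v : Valuation F Γ₀} {S : Subring F}

theorem IsCentered.eq_pairLocal [IsNoetherianRing S] [IsLocalRing S] (hS : IsCentered v S)
    (hdim : ringKrullDim S = 2) {c d : S}
    (hcd : IsLocalRing.maximalIdeal S = Ideal.span {c, d})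
    (hk : ∀ c : k, c ≠ 0 → v (algebraMap k F c) = 1) (hkS : ∀ c : k, algebraMap k F c ∈ S)
    {r s : F} (hr : r ∈ S) (hs : s ∈ S) (hr0 : r ≠ 0) (hs0 : s ≠ 0) (hvr : v r < 1) (hvs : v s < 1)
    (hle : v r ≤ v s) (hrs : r / s ∉ S) (hfrac : ∀ z ∈ S, z ∈ IntermediateField.adjoin k {r, s}) :
    S = pairLocal k r s := by
  have := uniqueFactorizationMonoid_of_maximalIdeal_eq_span_pair hdim hcd
  refine le_antisymm ?_ (hS.pairLocal_le hk hkS hr hs hvr hvs)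
  obtain ⟨e, he⟩ | ⟨e, he⟩ | h := dvd_or_dvd_or_exists_constantCoeff_ne_zero (S := S)
    (φ := (aeval ![r, s] : MvPolynomial (Fin 2) k →ₐ[k] F).toRingHom.codRestrict S
      (aeval_pair_mem hkS hr hs))
    ((hS.mem_maximalIdeal_iff _).2 (by simpa using hvr))
    ((hS.mem_maximalIdeal_iff _).2 (by simpa using hvs))
    (fun z => by
      obtain ⟨P, Q, hQ, h⟩ := exists_aeval_of_mem_adjoin_pair (hfrac z z.2)
      exact ⟨P, Q, fun h => hQ (congrArg Subtype.val h), Subtype.ext h⟩)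
  · replace he : s = r * e := by simpa using congrArg Subtype.val he
    have hve : v (e : F) = 1 := by
      refine (hS e e.2).1.antisymm (le_of_mul_le_mul_left ?_ (zero_lt_iff.2 (v.ne_zero_iff.2 hr0)))
      rwa [mul_one, ← map_mul, ← he]
    refine absurd ((hS e e.2).2 hve) ?_
    rwa [he, div_mul_cancel_left₀ hr0] at hrs
  · replace he : r = s * e := by simpa using congrArg Subtype.val he
    exact absurd (by rw [he, mul_div_cancel_left₀ _ hs0]; exact e.2) hrs
  · exact fun z hz => let ⟨P, Q, hQ, h⟩ := h ⟨z, hz⟩; ⟨P, Q, hQ, congrArg Subtype.val h⟩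

namespace IsQuadraticChain

variable {p : ℕ} {α : ℕ → k} {Z : ℕ → F} (hZ : IsQuadraticChain p α Z)

include hZ

theorem div_pow_sub (n : ℕ) : Z n / Z (n + 1) ^ p - algebraMap k F (α n) = Z (n + 2) := by
  rw [hZ.eq_mul n, mul_div_cancel_left₀ _ (pow_ne_zero p (hZ.ne_zero (n + 1))), add_sub_cancel_left]

theorem adjoin_le (n : ℕ) :
    IntermediateField.adjoin k {Z 0, Z 1} ≤ IntermediateField.adjoin k {Z n, Z (n + 1)} := by
  induction n with
  | zero => exact le_rfl
  | succ n ih =>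
    have h₁ := IntermediateField.mem_adjoin_pair_left k (Z (n + 1)) (Z (n + 2))
    have h₂ := IntermediateField.mem_adjoin_pair_right k (Z (n + 1)) (Z (n + 2))
    refine ih.trans (IntermediateField.adjoin_le_iff.2 (Set.pair_subset_iff.2 ⟨?_, h₁⟩))
    rw [hZ.eq_mul n]
    exact mul_mem (pow_mem h₁ p) (add_mem (IntermediateField.algebraMap_mem _ _) h₂)

variable (hk : ∀ c : k, c ≠ 0 → v (algebraMap k F c) = 1) (hv : ∀ n, v (Z n) < 1)

theorem exists_notMem [IsNoetherianRing S] (hS : IsCentered v S)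
    (hkS : ∀ c : k, algebraMap k F c ∈ S) (hv : ∀ n, v (Z n) < 1) : ∃ n, Z n ∉ S := by
  by_contra! hmem
  have := hS.isLocalRing
  have hfactor : ∀ n, ∃ b ∈ IsLocalRing.maximalIdeal S,
      (⟨Z n, hmem n⟩ : S) = ⟨Z (n + 1), hmem (n + 1)⟩ * b := fun n => by
    refine ⟨⟨Z (n + 1), hmem _⟩ ^ (p - 1) * (⟨_, hkS (α n)⟩ + ⟨Z (n + 2), hmem _⟩),
      Ideal.mul_mem_right _ _ (Ideal.pow_mem_of_mem _ ((hS.mem_maximalIdeal_iff _).2 (hv _)) _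
        (Nat.sub_pos_of_lt hZ.one_lt)), Subtype.ext ?_⟩
    push_cast
    rw [← mul_assoc, mul_pow_sub_one (Nat.ne_zero_of_lt hZ.one_lt)]
    exact hZ.eq_mul n
  have hpow : ∀ i n, (⟨Z n, hmem n⟩ : S) ∈ IsLocalRing.maximalIdeal S ^ i := by
    intro i
    induction i with
    | zero => simp
    | succ i ih =>
      intro n
      obtain ⟨b, hb, hn⟩ := hfactor n
      rw [hn, pow_succ]
      exact Ideal.mul_mem_mul (ih _) hb
  have h0 : (⟨Z 0, hmem 0⟩ : S) ∈ (⨅ i, IsLocalRing.maximalIdeal S ^ i : Ideal S) :=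
    (Submodule.mem_iInf _).2 fun i => hpow i 0
  rw [Ideal.iInf_pow_eq_bot_of_isLocalRing _ (IsLocalRing.maximalIdeal.isMaximal S).ne_top,
    Submodule.mem_bot] at h0
  exact hZ.ne_zero 0 (congrArg Subtype.val h0)

include hk hv

theorem valuation_eq_pow (n : ℕ) : v (Z n) = v (Z (n + 1)) ^ p := by
  rw [hZ.eq_mul n, map_mul, map_pow,
    valuation_add_eq_one (hk _ (hZ.coeff_ne_zero n)) (hv (n + 2)), mul_one]

theorem valuation_div_pow {n j : ℕ} (hj : j ≤ p) :
    v (Z n / Z (n + 1) ^ j) = v (Z (n + 1)) ^ (p - j) := by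
  rw [map_div₀, map_pow, hZ.valuation_eq_pow hk hv n,
    div_eq_iff (pow_ne_zero _ (v.ne_zero_iff.2 (hZ.ne_zero _))), ← pow_add, Nat.sub_add_cancel hj]

theorem valuation_div_pow_lt_one {n j : ℕ} (hj : j < p) : v (Z n / Z (n + 1) ^ j) < 1 := by
  rw [hZ.valuation_div_pow hk hv hj.le]
  exact pow_lt_one₀ zero_le (hv _) (by omega)

theorem not_isPrincipal_maximalIdeal [IsNoetherianRing S] [IsLocalRing S] (hS : IsCentered v S)
    (hkS : ∀ c : k, algebraMap k F c ∈ S) (h0 : Z 0 ∈ S) (h1 : Z 1 ∈ S) :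
    ¬ (IsLocalRing.maximalIdeal S).IsPrincipal := by
  intro hprin
  have hval : ValuationRing S :=
    ((tfae_of_isNoetherianRing_of_isLocalRing_of_isDomain S).out 4 1).1 hprin
  obtain ⟨n, hn⟩ := hZ.exists_notMem hS hkS hv
  suffices ∀ n, Z n ∈ S ∧ Z (n + 1) ∈ S from hn (this n).1
  intro n
  induction n with
  | zero => exact ⟨h0, h1⟩
  | succ n ih =>
    refine ⟨ih.2, hZ.div_pow_sub n ▸ sub_mem ?_ (hkS _)⟩
    have hne := pow_ne_zero p (hZ.ne_zero (n + 1))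
    obtain ⟨e, he⟩ | ⟨e, he⟩ := ValuationRing.dvd_total (⟨Z n, ih.1⟩ : S) (⟨Z (n + 1), ih.2⟩ ^ p)
    · replace he : Z (n + 1) ^ p = Z n * e := congrArg Subtype.val he
      have hve : v (e : F) = 1 := by
        rw [← mul_eq_left₀ (v.ne_zero_iff.2 (hZ.ne_zero n)), ← map_mul, ← he, map_pow,
          hZ.valuation_eq_pow hk hv n]
      rw [he, div_mul_cancel_left₀ (hZ.ne_zero n)]
      exact (hS e e.2).2 hve
    · replace he : Z n = Z (n + 1) ^ p * e := congrArg Subtype.val he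
      rw [he, mul_div_cancel_left₀ _ hne]
      exact e.2

omit hk in
theorem exists_mem_notMem_add_two [IsNoetherianRing S] (hS : IsCentered v S)
    (hkS : ∀ c : k, algebraMap k F c ∈ S) (h0 : Z 0 ∈ S) (h1 : Z 1 ∈ S) :
    ∃ n, Z n ∈ S ∧ Z (n + 1) ∈ S ∧ Z (n + 2) ∉ S := by
  by_contra! h
  obtain ⟨n, hn⟩ := hZ.exists_notMem hS hkS hv
  have hmem : ∀ n, Z n ∈ S ∧ Z (n + 1) ∈ S :=
    Nat.rec ⟨h0, h1⟩ fun n ih => ⟨ih.2, h n ih.1 ih.2⟩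
  exact hn (hmem n).1

omit hk hv in
theorem exists_div_pow_mem (hkS : ∀ c : k, algebraMap k F c ∈ S) {n : ℕ} (hn : Z n ∈ S)
    (hn2 : Z (n + 2) ∉ S) :
    ∃ j < p, Z n / Z (n + 1) ^ j ∈ S ∧ Z n / Z (n + 1) ^ (j + 1) ∉ S := by
  by_contra! h
  have hmem : ∀ j ≤ p, Z n / Z (n + 1) ^ j ∈ S :=
    Nat.rec (by simpa using hn) fun j ih hj => h j hj (ih (Nat.le_of_succ_le hj))
  exact hn2 (hZ.div_pow_sub n ▸ sub_mem (hmem p le_rfl) (hkS _))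

theorem exists_eq_pairLocal [IsNoetherianRing S] [IsLocalRing S] (hS : IsCentered v S)
    (hkS : ∀ c : k, algebraMap k F c ∈ S) (h0 : Z 0 ∈ S) (h1 : Z 1 ∈ S)
    (hdim : ringKrullDim S = 2) {c d : S}
    (hcd : IsLocalRing.maximalIdeal S = Ideal.span {c, d})
    (hfrac : ∀ z ∈ S, z ∈ IntermediateField.adjoin k {Z 0, Z 1}) :
    ∃ n j, j < p ∧ S = pairLocal k (Z n / Z (n + 1) ^ j) (Z (n + 1)) := by
  obtain ⟨n, hn, hn1, hn2⟩ := hZ.exists_mem_notMem_add_two hv hS hkS h0 h1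
  obtain ⟨j, hj, hjS, hjS'⟩ := hZ.exists_div_pow_mem hkS hn hn2
  have hs0 := hZ.ne_zero (n + 1)
  have hle : v (Z n / Z (n + 1) ^ j) ≤ v (Z (n + 1)) :=
    hZ.valuation_div_pow hk hv hj.le ▸ pow_le_of_le_one zero_le (hv _).le (by omega)
  rw [pow_succ, ← div_div] at hjS'
  exact ⟨n, j, hj, hS.eq_pairLocal hdim hcd hk hkS hjS hn1
    (div_ne_zero (hZ.ne_zero n) (pow_ne_zero j hs0)) hs0 (hZ.valuation_div_pow_lt_one hk hv hj)
    (hv _) hle hjS' fun z hz =>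
      adjoin_pair_le_adjoin_div_pow hs0 j (hZ.adjoin_le n (hfrac z hz))⟩

end IsQuadraticChain

end ChainCenter

section JumpTower

variable {k F : Type} [Field k] [Field F] [Algebra k F]
variable {Γ₀ : Type*} [LinearOrderedCommGroupWithZero Γ₀] {v : Valuation F Γ₀} {T : Subring F}

theorem mem_pairLocal_div_pow {x y : F} (hy : y ≠ 0) (j : ℕ) : x ∈ pairLocal k (x / y ^ j) y := by
  have := mul_mem (left_mem_pairLocal (k := k) (x / y ^ j) y)
    (pow_mem (right_mem_pairLocal (k := k) (x / y ^ j) y) j)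
  rwa [div_mul_cancel₀ x (pow_ne_zero j hy)] at this

namespace IsQuadraticChain

variable {p : ℕ} {α : ℕ → k} {Z : ℕ → F} (hZ : IsQuadraticChain p α Z)
  (hkT : ∀ c : k, algebraMap k F c ∈ T)

include hZ hkT

theorem mem_of_le {m n : ℕ} (h : Z m ∈ T) (h' : Z (m + 1) ∈ T) (hn : n ≤ m + 1) : Z n ∈ T := by
  induction m generalizing n with
  | zero =>
    obtain rfl | rfl := Nat.le_one_iff_eq_zero_or_eq_one.1 hn
    exacts [h, h']
  | succ m ih =>
    obtain rfl | hn := hn.eq_or_lt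
    · exact h'
    · refine ih ?_ h (Nat.le_of_lt_succ hn)
      rw [hZ.eq_mul m]
      exact mul_mem (pow_mem h p) (add_mem (hkT _) h')

theorem div_pow_mem {n i : ℕ} (h : Z (n + 1) ∈ T) (h' : Z (n + 2) ∈ T) (hi : i ≤ p) :
    Z n / Z (n + 1) ^ i ∈ T := by
  have hdvd : Z n / Z (n + 1) ^ i = Z (n + 1) ^ (p - i) * (algebraMap k F (α n) + Z (n + 2)) := by
    rw [div_eq_iff (pow_ne_zero _ (hZ.ne_zero _)), mul_right_comm, ← pow_add,
      Nat.sub_add_cancel hi]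
    exact hZ.eq_mul n
  rw [hdvd]
  exact mul_mem (pow_mem h _) (add_mem (hkT _) h')

theorem lt_or_eq_and_eq_zero_of_div_notMem {m n i : ℕ}
    (hle : pairLocal k (Z n / Z (n + 1) ^ i) (Z (n + 1)) ≤ T) (h : Z m / Z (m + 1) ∉ T) :
    n < m ∨ n = m ∧ i = 0 := by
  by_contra! hnm
  obtain ⟨hmn, hi⟩ := hnm
  have hr := hle (left_mem_pairLocal (k := k) (Z n / Z (n + 1) ^ i) (Z (n + 1)))
  have hs := hle (right_mem_pairLocal (k := k) (Z n / Z (n + 1) ^ i) (Z (n + 1)))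
  have hmem {l : ℕ} (hl : l ≤ n + 1) : Z l ∈ T :=
    hZ.mem_of_le hkT (hle (mem_pairLocal_div_pow (hZ.ne_zero (n + 1)) i)) hs hl
  apply h
  obtain hlt | rfl := hmn.lt_or_eq
  · rw [← pow_one (Z (m + 1))]
    exact hZ.div_pow_mem hkT (hmem (by omega)) (hmem (by omega)) hZ.one_lt.le
  · obtain ⟨i, rfl⟩ := Nat.exists_eq_succ_of_ne_zero (hi rfl)
    have hne := hZ.ne_zero (m + 1)
    have hdiv : Z m / Z (m + 1) = Z m / Z (m + 1) ^ (i + 1) * Z (m + 1) ^ i := by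
      rw [pow_succ]
      field_simp
    rw [hdiv]
    exact mul_mem hr (pow_mem hs i)

variable (hk : ∀ c : k, c ≠ 0 → v (algebraMap k F c) = 1) (hv : ∀ n, v (Z n) < 1)
  [IsLocalRing T] [IsNoetherianRing T] (hT : IsCentered v T) (hdim : ringKrullDim T = 2) {c d : T}
  (hcd : IsLocalRing.maximalIdeal T = Ideal.span {c, d})

include hk hv hT hdim hcd

theorem isMonomialPair_succ {n i : ℕ} (hi : i < p) (h₁ : Z (n + 1) ∈ T) (h₂ : Z (n + 2) ∈ T)
    (h : IsMonomialPair k v T c d (Z n / Z (n + 1) ^ i) (Z (n + 1))) :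
    IsMonomialPair k v T c d (Z (n + 1)) (Z (n + 2)) := by
  have hs0 := hZ.ne_zero (n + 1)
  have hmul (i : ℕ) : Z n / Z (n + 1) ^ i = Z (n + 1) * (Z n / Z (n + 1) ^ (i + 1)) := by
    rw [pow_succ]
    field_simp
  have hlast : IsMonomialPair k v T c d (Z n / Z (n + 1) ^ (p - 1)) (Z (n + 1)) := by
    suffices ∀ j ≥ i, j < p → IsMonomialPair k v T c d (Z n / Z (n + 1) ^ j) (Z (n + 1)) from
      this (p - 1) (by omega) (by omega)
    intro j hij
    induction j, hij using Nat.le_induction with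
    | base => exact fun _ => h
    | succ j _ ih =>
      intro hj
      refine ((ih (by omega)).blowup hT hdim hcd hk hkT h₁ (hZ.div_pow_mem hkT h₁ h₂ hj.le) (hv _)
        (hZ.valuation_div_pow_lt_one hk hv hj) hs0 0 ?_).comm
      rw [map_zero, zero_add]
      exact hmul j
  refine hlast.blowup hT hdim hcd hk hkT h₁ h₂ (hv _) (hv _) hs0 (α n) ?_
  rw [hmul, Nat.sub_add_cancel hZ.one_lt.le, ← hZ.div_pow_sub n, add_sub_cancel]

theorem isMonomialPair_of_le {m n i : ℕ} (hi : i < p) (hm : Z m ∈ T) (hm' : Z (m + 1) ∈ T)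
    (hnm : n < m ∨ n = m ∧ i = 0)
    (h : IsMonomialPair k v T c d (Z n / Z (n + 1) ^ i) (Z (n + 1))) :
    IsMonomialPair k v T c d (Z m) (Z (m + 1)) := by
  obtain hnm | ⟨rfl, rfl⟩ := hnm
  · have hmem {l : ℕ} (hl : l ≤ m + 1) : Z l ∈ T := hZ.mem_of_le hkT hm hm' hl
    suffices ∀ l, n + 1 ≤ l → l ≤ m → IsMonomialPair k v T c d (Z l) (Z (l + 1)) from
      this m hnm le_rfl
    intro l hl
    induction l, hl using Nat.le_induction with
    | base =>
      exact fun _ => hZ.isMonomialPair_succ hkT hk hv hT hdim hcd hi (hmem (by omega))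
        (hmem (by omega)) h
    | succ l _ ih =>
      intro hlm
      refine hZ.isMonomialPair_succ hkT hk hv hT hdim hcd (i := 0) (by omega) (hmem (by omega))
        (hmem (by omega)) ?_
      rw [pow_zero, div_one]
      exact ih (by omega)
  · rwa [pow_zero, div_one] at h

end IsQuadraticChain

variable {p : ℕ} {D₁ D₂ : Derivation k F F} {α β : ℕ → k} {Z U : ℕ → F}

/-- Two quadratic chains `Z` and `U` along the same valuation such that at every stage the
parameters `U n`, `U (n + 1)` have the shape `IsJumpShape` in terms of `Z n`, `Z (n + 1)`. -/
structure IsJumpTower (v : Valuation F Γ₀) (p : ℕ) (D₁ D₂ : Derivation k F F) (α β : ℕ → k)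
    (Z U : ℕ → F) : Prop where
  top : IsQuadraticChain p α Z
  base : IsQuadraticChain p β U
  valuation_algebraMap : ∀ c : k, c ≠ 0 → v (algebraMap k F c) = 1
  valuation_lt_one : ∀ n, v (Z n) < 1
  jacobian_ne_zero : ∀ n, jacobian D₁ D₂ (Z n) (Z (n + 1)) ≠ 0
  isJumpShape : ∀ n, ∃ G τ σ ε, IsJumpShape v (pairLocal k (Z n) (Z (n + 1))) p D₁ D₂
    (Z n) (Z (n + 1)) (U n) (U (n + 1)) G τ σ ε

namespace IsJumpTower

variable (h : IsJumpTower v p D₁ D₂ α β Z U)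

include h

theorem valuation_base (n : ℕ) : v (U n) = v (Z n) ^ p :=
  let ⟨_, _, _, _, hn⟩ := h.isJumpShape n
  hn.valuation_left

theorem valuation_base_lt_one (n : ℕ) : v (U n) < 1 := by
  rw [h.valuation_base]
  exact pow_lt_one₀ zero_le (h.valuation_lt_one n) (Nat.ne_zero_of_lt h.top.one_lt)

theorem exists_isJumpShape_div_pow {m j : ℕ} (hj : j < p) :
    ∃ G τ σ ε, IsJumpShape v (pairLocal k (Z m / Z (m + 1) ^ j) (Z (m + 1))) p D₁ D₂
      (Z m / Z (m + 1) ^ j * Z (m + 1) ^ j) (Z (m + 1)) (U m) (U (m + 1)) G τ σ ε := by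
  have hk := h.valuation_algebraMap
  have hv := h.valuation_lt_one
  have hne := h.top.ne_zero (m + 1)
  obtain ⟨G, τ, σ, ε, hm⟩ := h.isJumpShape m
  refine ⟨G, τ, σ, ε, ?_⟩
  rw [div_mul_cancel₀ _ (pow_ne_zero j hne)]
  exact hm.mono ((isCentered_pairLocal hk (h.top.valuation_div_pow_lt_one hk hv hj)
    (hv _)).pairLocal_le hk (algebraMap_mem_pairLocal _ _) (mem_pairLocal_div_pow hne j)
    (right_mem_pairLocal _ _) (hv m) (hv _))

theorem jacobian_div_pow_ne_zero (m j : ℕ) :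
    jacobian D₁ D₂ (Z m / Z (m + 1) ^ j) (Z (m + 1)) ≠ 0 := by
  intro h0
  refine h.jacobian_ne_zero m ?_
  rw [← div_mul_cancel₀ (Z m) (pow_ne_zero j (h.top.ne_zero (m + 1))), jacobian_mul_pow_self, h0,
    mul_zero]

/-- `U m / U (m + 1) ∉ B` bounds the stage of `U` at which `A` is reached, so that blowing up
carries a monomial form of the parameters of `A` to one of `U m` and `U (m + 1)`. -/
theorem not_isUnitMonomial [CharP F p] {A B : Subring F}
    [IsNoetherianRing A] [IsNoetherianRing B] [IsLocalRing A] [IsLocalRing B]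
    (hA : IsCentered v A) (hB : IsCentered v B) (hAB : A ≤ B)
    (hkA : ∀ c : k, algebraMap k F c ∈ A) (hU0 : U 0 ∈ A) (hU1 : U 1 ∈ A) (hZ0 : Z 0 ∈ B)
    (hZ1 : Z 1 ∈ B) (hdimA : ringKrullDim A = 2) (hdimB : ringKrullDim B = 2)
    (hfracA : ∀ z ∈ A, z ∈ IntermediateField.adjoin k {U 0, U 1})
    (hfracB : ∀ z ∈ B, z ∈ IntermediateField.adjoin k {Z 0, Z 1}) {a b : A} {c d : B}
    (hab : IsLocalRing.maximalIdeal A = Ideal.span {a, b})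
    (hcd : IsLocalRing.maximalIdeal B = Ideal.span {c, d}) {m₁₁ m₁₂ m₂₁ m₂₂ : ℕ}
    (hm : m₁₁ * m₂₂ ≠ m₁₂ * m₂₁) (ha : IsUnitMonomial v B c d m₁₁ m₁₂ a) :
    ¬ IsUnitMonomial v B c d m₂₁ m₂₂ b := by
  intro hb
  have hk := h.valuation_algebraMap
  have hv := h.valuation_lt_one
  have hvU := h.valuation_base_lt_one
  have hkB (c : k) : algebraMap k F c ∈ B := hAB (hkA c)
  have hp := h.top.one_lt
  obtain ⟨m, j, hj, rfl⟩ := h.top.exists_eq_pairLocal hk hv hB hkB hZ0 hZ1 hdimB hcd hfracB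
  obtain ⟨n, i, hi, rfl⟩ := h.base.exists_eq_pairLocal hk hvU hA hkA hU0 hU1 hdimA hab hfracA
  obtain ⟨G, τ, σ, ε, hUm⟩ := h.exists_isJumpShape_div_pow (m := m) hj
  have hvz := h.top.valuation_div_pow_lt_one hk hv hj (n := m)
  have hzL := left_mem_pairLocal (k := k) (Z m / Z (m + 1) ^ j) (Z (m + 1))
  have hwL := right_mem_pairLocal (k := k) (Z m / Z (m + 1) ^ j) (Z (m + 1))
  have hxL := mul_mem hzL (pow_mem hwL j)
  have hnm := h.base.lt_or_eq_and_eq_zero_of_div_notMem hkB hAB <|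
    hUm.div_notMem hk hvz (hv _) hp hj hdimB (h.base.ne_zero _)
  have hmon := isMonomialPair_of_maximalIdeal_eq hk
    (h.base.valuation_div_pow_lt_one hk hvU hi) (hvU _) hdimA hab hm ha hb
  refine hUm.not_isMonomialPair hk hvz (hv _) hp hj hdimB hcd (h.jacobian_div_pow_ne_zero m j) ?_
  exact h.base.isMonomialPair_of_le hkB hk hvU hB hdimB hcd hi (hUm.left_mem hxL)
    (hUm.right_mem hxL hwL) hnm hmon

end IsJumpTower

end JumpTower

section Construction

variable {k F : Type} [Field k] [Field F] [Algebra k F]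

theorem exists_seq_div_pow_sub (p : ℕ) (α : ℕ → k) (r s : F) : ∃ Z : ℕ → F, Z 0 = r ∧ Z 1 = s ∧
    ∀ n, Z (n + 2) = Z n / Z (n + 1) ^ p - algebraMap k F (α n) := by
  let q (n : ℕ) : F × F :=
    Nat.rec (r, s) (fun n q => (q.2, q.1 / q.2 ^ p - algebraMap k F (α n))) n
  exact ⟨fun n => (q n).1, rfl, rfl, fun _ => rfl⟩

theorem exists_isQuadraticChain {p : ℕ} (hp : 1 < p) {α : ℕ → k} (hα : ∀ n, α n ≠ 0)
    (htr : 2 ≤ Algebra.trdeg k F) {r s : F} (h : IntermediateField.adjoin k {r, s} = ⊤) :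
    ∃ Z : ℕ → F, Z 0 = r ∧ Z 1 = s ∧ IsQuadraticChain p α Z ∧
      ∀ n, AlgebraicIndependent k ![Z n, Z (n + 1)] := by
  obtain ⟨Z, rfl, rfl, hZ⟩ := exists_seq_div_pow_sub p α r s
  suffices hgen : ∀ n, IntermediateField.adjoin k {Z n, Z (n + 1)} = ⊤ by
    have hind n := algebraicIndependent_pair_of_adjoin_eq_top htr (hgen n)
    have hne n : Z n ≠ 0 := (hind n).ne_zero 0
    refine ⟨Z, rfl, rfl, ⟨hp, hα, hne, fun n => ?_⟩, hind⟩
    rw [hZ n, add_sub_cancel, mul_div_cancel₀ _ (pow_ne_zero _ (hne (n + 1)))]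
  intro n
  induction n with
  | zero => exact h
  | succ n ih =>
    have hne : Z (n + 1) ≠ 0 := (algebraicIndependent_pair_of_adjoin_eq_top htr ih).ne_zero 1
    have h₁ := IntermediateField.mem_adjoin_pair_left k (Z (n + 1)) (Z (n + 2))
    have h₂ := IntermediateField.mem_adjoin_pair_right k (Z (n + 1)) (Z (n + 2))
    have hdiv := add_mem h₂ (algebraMap_mem _ (α n))
    rw [hZ n, sub_add_cancel, ← hZ n] at hdiv
    rw [eq_top_iff, ← ih]
    refine (adjoin_pair_le_adjoin_div_pow hne p).trans ?_
    rw [IntermediateField.adjoin_le_iff, Set.pair_subset_iff]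
    exact ⟨hdiv, h₁⟩

/-- The leading coefficients `a n` of a sequence of jump forms along the quadratic chain with
coefficients `α`; `add_ne_zero` keeps them nondegenerate. -/
structure IsJumpCoeff (p : ℕ) (α : ℕ → k) (a : ℕ → JumpCoeff k) : Prop where
  ne_zero : ∀ n, α n ≠ 0
  isNondegenerate : ∀ n, (a n).IsNondegenerate
  add_ne_zero : ∀ n, (a n).t + α n * (a n).s ≠ 0
  succ : ∀ n, a (n + 1) = (a n).next p (α n)

theorem exists_ne_zero_add_mul_ne_zero (hcard : 3 ≤ Cardinal.mk k) (t : k) {s : k} (hs : s ≠ 0) :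
    ∃ α : k, α ≠ 0 ∧ t + α * s ≠ 0 := by
  by_contra! h
  have hsub : (Set.univ : Set k) ⊆ {0, -t / s} := by
    intro a _
    refine or_iff_not_imp_left.2 fun ha => Set.mem_singleton_iff.2 ?_
    rw [eq_div_iff hs]
    linear_combination h a ha
  have hle : Cardinal.mk k ≤ 2 := by
    rw [← Cardinal.mk_univ]
    refine (Cardinal.mk_le_mk_of_subset hsub).trans (Cardinal.mk_insert_le.trans ?_)
    rw [Cardinal.mk_singleton, one_add_one_eq_two]
  exact absurd (hcard.trans hle) (by norm_cast)

theorem exists_isJumpCoeff (hcard : 3 ≤ Cardinal.mk k) (p : ℕ) {a₀ : JumpCoeff k}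
    (h₀ : a₀.IsNondegenerate) : ∃ α a, IsJumpCoeff p α a ∧ a 0 = a₀ := by
  choose! c hc hc' using fun (a : JumpCoeff k) (ha : a.IsNondegenerate) =>
    exists_ne_zero_add_mul_ne_zero hcard a.t ha.s_ne_zero
  let a (n : ℕ) : JumpCoeff k := Nat.rec a₀ (fun _ a => a.next p (c a)) n
  have ha n : (a n).IsNondegenerate := by
    induction n with
    | zero => exact h₀
    | succ n ih => exact ih.next (hc _ ih) (hc' _ ih)
  exact ⟨fun n => c (a n), a, ⟨fun n => hc _ (ha n), ha, fun n => hc' _ (ha n), fun _ => rfl⟩, rfl⟩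

variable {Γ₀ : Type*} [LinearOrderedCommGroupWithZero Γ₀] {v : Valuation F Γ₀}
variable {p : ℕ} [CharP F p] {D₁ D₂ : Derivation k F F} {α : ℕ → k} {Z : ℕ → F}

theorem IsQuadraticChain.jacobian_ne_zero (hZ : IsQuadraticChain p α Z)
    (hJ : jacobian D₁ D₂ (Z 0) (Z 1) ≠ 0) (n : ℕ) : jacobian D₁ D₂ (Z n) (Z (n + 1)) ≠ 0 := by
  induction n with
  | zero => exact hJ
  | succ n ih =>
    rw [hZ.eq_mul n, jacobian_pow_mul_add] at ih
    exact right_ne_zero_of_mul (neg_ne_zero.1 ih)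

theorem IsJumpCoeff.exists_isJumpTower [Fact p.Prime] {a : ℕ → JumpCoeff k}
    (ha : IsJumpCoeff p α a) (hk : ∀ c : k, c ≠ 0 → v (algebraMap k F c) = 1)
    (hZ : IsQuadraticChain p α Z) (hv : ∀ n, v (Z n) < 1)
    (hJ : jacobian D₁ D₂ (Z 0) (Z 1) ≠ 0) {u w : F} (hu : u ≠ 0)
    (h₀ : IsJumpForm v p D₁ D₂ (Z 0) (Z 1) u w (a 0)) :
    ∃ β U, U 0 = u ∧ U 1 = w ∧ IsJumpTower v p D₁ D₂ α β Z U := by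
  obtain ⟨U, rfl, rfl, hU⟩ := exists_seq_div_pow_sub p (fun n => (a n).residue p (α n)) u w
  have hnext {n : ℕ} (h : IsJumpForm v p D₁ D₂ (Z n) (Z (n + 1)) (U n) (U (n + 1)) (a n)) :=
    h.next hk (hv (n + 1)) (hv (n + 2)) (hZ.eq_mul n) (hZ.ne_zero _) (ha.isNondegenerate n)
      (ha.ne_zero n) (ha.add_ne_zero n)
  have hform n : IsJumpForm v p D₁ D₂ (Z n) (Z (n + 1)) (U n) (U (n + 1)) (a n) := by
    induction n with
    | zero => exact h₀
    | succ n ih =>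
      rw [ha.succ, hU]
      exact (hnext ih).2
  have hU0 : ∀ n, U n ≠ 0
    | 0 => hu
    | n + 1 => (hnext (hform n)).1
  refine ⟨fun n => (a n).residue p (α n), U, rfl, rfl, {
    top := hZ
    base := ⟨hZ.one_lt, fun n => (ha.isNondegenerate n).residue_ne_zero (ha.ne_zero n)
      (ha.add_ne_zero n), hU0, fun n => ?_⟩
    valuation_algebraMap := hk
    valuation_lt_one := hv
    jacobian_ne_zero := hZ.jacobian_ne_zero hJ
    isJumpShape := fun n => ?_ }⟩
  · rw [hU n, add_sub_cancel, mul_div_cancel₀ _ (pow_ne_zero _ (hU0 _))]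
  · obtain ⟨G, τ, σ, ε, hS, -⟩ := hform n
    exact ⟨G, τ, σ, ε, hS⟩

theorem isJumpForm_pow_mul_one_add (hk : ∀ c : k, c ≠ 0 → v (algebraMap k F c) = 1) {x y : F}
    (hx : v x < 1) (hy : v y < 1) :
    IsJumpForm v p D₁ D₂ x y (x ^ p * (1 + y)) (y ^ p + x) (⟨1, 1, 1, 1⟩ : JumpCoeff k) := by
  refine isJumpForm_of_isNondegenerate (τ := 1) (σ := 1) (ε := -1) (h := 0) (c := 0) hk
    ⟨one_ne_zero, one_ne_zero, one_ne_zero, one_ne_zero⟩ hx hy (one_mem _) (one_mem _)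
    (neg_mem (one_mem _)) (zero_mem _) (zero_mem _) (by simp) (by simp) (by simp) (by simp)
    (by simp) ?_
  simp only [jacobian, Derivation.leibniz, map_add,
    derivation_pow_eq_zero _ _ (CharP.cast_eq_zero F p), Derivation.map_one_eq_zero, smul_eq_mul]
  ring

end Construction

section ChainValuation

variable {k F : Type} [Field k] [Field F] [Algebra k F] {p : ℕ} {α : ℕ → k} {Z : ℕ → F}

theorem IsQuadraticChain.mem_adjoin (hZ : IsQuadraticChain p α Z) (n : ℕ) :
    Z n ∈ IntermediateField.adjoin k {Z 0, Z 1} := by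
  induction n using Nat.twoStepInduction with
  | zero => exact IntermediateField.mem_adjoin_pair_left k _ _
  | one => exact IntermediateField.mem_adjoin_pair_right k _ _
  | more n ih₀ ih₁ =>
    rw [← hZ.div_pow_sub n]
    exact sub_mem (div_mem ih₀ (pow_mem ih₁ p)) (algebraMap_mem _ (α n))

/-- `ν` is the additive valuation along the quadratic chain `Z`, normalized by `ν (Z 0) = 1`. -/
structure IsChainValuation (p : ℕ) (α : ℕ → k) (Z : ℕ → F) (ν : F → ℝ) : Prop extends
    IsQuadraticChain p α Z, IsAdditiveValuation ν where
  exists_isPowMulUnit : ∀ f, f ≠ 0 → ∃ N m, IsPowMulUnit k Z f N m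
  eq_div : ∀ f N m, IsPowMulUnit k Z f N m → ν f = m / p ^ N

theorem IsQuadraticChain.exists_isChainValuation (hZ : IsQuadraticChain p α Z)
    (hind : ∀ n, AlgebraicIndependent k ![Z n, Z (n + 1)])
    (hgen : IntermediateField.adjoin k {Z 0, Z 1} = ⊤) : ∃ ν, IsChainValuation p α Z ν := by
  have hex (f : F) (hf : f ≠ 0) : ∃ N m, IsPowMulUnit k Z f N m :=
    hZ.exists_isPowMulUnit hind
      (fun _ => exists_aeval_of_mem_adjoin_pair (hgen ▸ IntermediateField.mem_top)) hf
  obtain ⟨ν, hν, hdiv⟩ := hZ.exists_isAdditiveValuation hind hex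
  exact ⟨ν, ⟨hZ, hν, hex, hdiv⟩⟩

namespace IsChainValuation

variable {ν : F → ℝ} (h : IsChainValuation p α Z ν)

include h

theorem map_algebraMap {c : k} (hc : c ≠ 0) : ν (algebraMap k F c) = 0 := by
  have hunit : IsPowMulUnit k Z (algebraMap k F c) 0 0 := by
    refine ⟨algebraMap k F c, algebraMap_mem_pairLocal _ _ c, by simpa using hc, ?_, by simp⟩
    rw [← map_inv₀]
    exact algebraMap_mem_pairLocal _ _ c⁻¹
  simpa using h.eq_div _ _ _ hunit

theorem map_apply (n : ℕ) : ν (Z n) = 1 / p ^ n := by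
  simpa using h.eq_div _ _ _ (IsPowMulUnit.self_zpow n 1)

theorem exists_map_eq_div {z : F} (hz : z ≠ 0) : ∃ (m : ℤ) (j : ℕ), ν z = m / p ^ j := by
  obtain ⟨N, m, hf⟩ := h.exists_isPowMulUnit z hz
  exact ⟨m, N, h.eq_div _ _ _ hf⟩

theorem valuation_algebraMap (c : k) (hc : c ≠ 0) :
    h.valuationSubring.valuation (algebraMap k F c) = 1 := by
  have hc' : algebraMap k F c ≠ 0 := by simpa using hc
  refine le_antisymm ((ValuationSubring.valuation_le_one_iff _ _).2 ?_) (not_lt.1 ?_)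
  · exact h.mem_valuationSubring_iff.2 (Or.inr ⟨hc', (h.map_algebraMap hc).ge⟩)
  · simp [h.valuation_lt_one_iff, h.map_algebraMap hc, hc]

theorem valuation_apply_lt_one (n : ℕ) : h.valuationSubring.valuation (Z n) < 1 := by
  have hp := h.one_lt
  rw [h.valuation_lt_one_iff, h.map_apply]
  exact Or.inr ⟨h.ne_zero n, by positivity⟩

theorem isCentered (n : ℕ) :
    IsCentered h.valuationSubring.valuation (pairLocal k (Z n) (Z (n + 1))) :=
  isCentered_pairLocal h.valuation_algebraMap (h.valuation_apply_lt_one n)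
    (h.valuation_apply_lt_one (n + 1))

theorem isValuationSubring : IsValuationSubring h.valuationSubring.toSubring := by
  refine ⟨fun htop => ?_, fun z _ => h.valuationSubring.mem_or_inv_mem z⟩
  have hmem : (Z 0)⁻¹ ∈ h.valuationSubring.toSubring := htop ▸ Subring.mem_top _
  have hlt := h.valuation_apply_lt_one 0
  rw [ValuationSubring.mem_toSubring, ← ValuationSubring.valuation_le_one_iff, map_inv₀,
    inv_le_one₀ ((Valuation.pos_iff _).2 (h.ne_zero 0))] at hmem
  exact hmem.not_gt hlt

theorem exists_valuation_sub_algebraMap_lt_one {z : F} (hz : z ∈ h.valuationSubring) :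
    ∃ c : k, h.valuationSubring.valuation (z - algebraMap k F c) < 1 := by
  obtain rfl | ⟨hz0, hνz⟩ := h.mem_valuationSubring_iff.1 hz
  · exact ⟨0, by simp⟩
  obtain ⟨N, m, hf⟩ := h.exists_isPowMulUnit z hz0
  have hp : (0 : ℝ) < p := by exact_mod_cast zero_lt_one.trans h.one_lt
  have hm : 0 ≤ m := by
    rw [h.eq_div _ _ _ hf, le_div_iff₀ (pow_pos hp N), zero_mul] at hνz
    exact_mod_cast hνz
  lift m to ℕ using hm
  obtain ⟨ε, hε, -, -, rfl⟩ := hf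
  have hmem : Z N ^ (m : ℤ) * ε ∈ pairLocal k (Z N) (Z (N + 1)) := by
    rw [zpow_natCast]
    exact mul_mem (pow_mem (left_mem_pairLocal _ _) m) hε
  obtain ⟨c, a, ha, b, hb, hc⟩ := exists_eq_algebraMap_add_of_mem_pairLocal
    h.valuation_algebraMap (h.valuation_apply_lt_one N) (h.valuation_apply_lt_one (N + 1)) hmem
  refine ⟨c, ?_⟩
  rw [hc, add_sub_cancel_left]
  exact valuation_mul_add_mul_lt_one (h.valuation_apply_lt_one N)
    (h.valuation_apply_lt_one (N + 1)) (h.isCentered N a ha).1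
    (h.isCentered N b hb).1

theorem setOf_map_eq_of_forall_exists {L : IntermediateField k F}
    (hL : ∀ j : ℕ, ∃ a ∈ L, a ≠ 0 ∧ ν a = 1 / p ^ j) :
    {r : ℝ | ∃ z, z ∈ L ∧ z ≠ 0 ∧ ν z = r} = {r | ∃ (m : ℤ) (j : ℕ), r = m / (p : ℝ) ^ j} := by
  ext r
  constructor
  · rintro ⟨z, -, hz, rfl⟩
    exact h.exists_map_eq_div hz
  · rintro ⟨m, j, rfl⟩
    obtain ⟨a, haL, ha, hνa⟩ := hL j
    refine ⟨a ^ m, zpow_mem haL m, zpow_ne_zero m ha, ?_⟩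
    rw [h.map_zpow ha, hνa, mul_one_div]

theorem setOf_map_eq :
    {r : ℝ | ∃ z, z ≠ 0 ∧ ν z = r} = {r | ∃ (m : ℤ) (j : ℕ), r = m / (p : ℝ) ^ j} := by
  simpa using h.setOf_map_eq_of_forall_exists (L := ⊤) fun j =>
    ⟨Z j, IntermediateField.mem_top, h.ne_zero j, h.map_apply j⟩

end IsChainValuation

namespace IsJumpTower

variable {Γ₀ : Type*} [LinearOrderedCommGroupWithZero Γ₀] {v : Valuation F Γ₀}
variable {D₁ D₂ : Derivation k F F} {β : ℕ → k} {U : ℕ → F} {ν : F → ℝ}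

theorem isPowMulUnit (hT : IsJumpTower v p D₁ D₂ α β Z U) (n : ℕ) :
    IsPowMulUnit k Z (U n) n p := by
  obtain ⟨G, τ, σ, ε, hU⟩ := hT.isJumpShape n
  have hcenter := isCentered_pairLocal hT.valuation_algebraMap (hT.valuation_lt_one n)
    (hT.valuation_lt_one (n + 1))
  exact ⟨G, hU.G_mem, ne_zero_of_valuation_eq_one hU.valuation_G,
    (hcenter G hU.G_mem).2 hU.valuation_G, by rw [hU.eq_left, zpow_natCast]⟩

theorem map_base (hT : IsJumpTower v p D₁ D₂ α β Z U) (h : IsChainValuation p α Z ν) (n : ℕ) :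
    ν (U n) = p / p ^ n := by
  simpa using h.eq_div _ _ _ (hT.isPowMulUnit n)

theorem map_base_succ (hT : IsJumpTower v p D₁ D₂ α β Z U) (h : IsChainValuation p α Z ν)
    (n : ℕ) : ν (U (n + 1)) = 1 / p ^ n := by
  have hp : (p : ℝ) ≠ 0 := by exact_mod_cast (zero_lt_one.trans h.one_lt).ne'
  rw [hT.map_base h, pow_succ', ← div_div, div_self hp]

theorem setOf_map_adjoin_eq (hT : IsJumpTower v p D₁ D₂ α β Z U)
    (h : IsChainValuation p α Z ν) :
    {r : ℝ | ∃ z, z ∈ IntermediateField.adjoin k {U 0, U 1} ∧ z ≠ 0 ∧ ν z = r} =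
      {r | ∃ (m : ℤ) (j : ℕ), r = m / (p : ℝ) ^ j} :=
  h.setOf_map_eq_of_forall_exists fun j =>
    ⟨U (j + 1), hT.base.mem_adjoin _, hT.base.ne_zero _, hT.map_base_succ h j⟩

end IsJumpTower

theorem exists_isChainValuation_isJumpTower [Fact p.Prime] [CharP F p]
    (hcard : 3 ≤ Cardinal.mk k) (htr : 2 ≤ Algebra.trdeg k F) {x y : F}
    (hgen : IntermediateField.adjoin k {x, y} = ⊤) {D₁ D₂ : Derivation k F F}
    (hJ : jacobian D₁ D₂ x y ≠ 0) :
    ∃ (α β : ℕ → k) (Z U : ℕ → F) (ν : F → ℝ) (h : IsChainValuation p α Z ν),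
      Z 0 = x ∧ Z 1 = y ∧ U 0 = x ^ p * (1 + y) ∧ U 1 = y ^ p + x ∧
        IsJumpTower h.valuationSubring.valuation p D₁ D₂ α β Z U := by
  obtain ⟨α, a, ha, ha0⟩ := exists_isJumpCoeff hcard p (a₀ := ⟨1, 1, 1, 1⟩)
    ⟨one_ne_zero, one_ne_zero, one_ne_zero, one_ne_zero⟩
  obtain ⟨Z, rfl, rfl, hZ, hind⟩ :=
    exists_isQuadraticChain (Fact.out (p := p.Prime)).one_lt ha.ne_zero htr hgen
  obtain ⟨ν, h⟩ := hZ.exists_isChainValuation hind hgen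
  have hk := h.valuation_algebraMap
  have hv := h.valuation_apply_lt_one
  have hu : Z 0 ^ p * (1 + Z 1) ≠ 0 := mul_ne_zero (pow_ne_zero _ (hZ.ne_zero 0))
    (ne_zero_of_valuation_eq_one (valuation_add_eq_one (map_one _) (hv 1)))
  obtain ⟨β, U, hU0, hU1, hT⟩ := ha.exists_isJumpTower hk hZ hv hJ hu
    (ha0 ▸ isJumpForm_pow_mul_one_add hk (hv 0) (hv 1))
  exact ⟨α, β, Z, U, ν, h, rfl, rfl, hU0, hU1, hT⟩

end ChainValuation

section NonMonomialization

variable {k F : Type} [Field k] [Field F] [Algebra k F]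

theorem IsCentered.of_dominates {Γ₀ : Type*} [LinearOrderedCommGroupWithZero Γ₀]
    {v : Valuation F Γ₀} {S T : Subring F} (hS : IsCentered v S) (h : Dominates S T) :
    IsCentered v T := by
  obtain ⟨hle, h⟩ := h
  refine fun z hz => ⟨(hS z (hle hz)).1, fun hvz => ?_⟩
  have hunit : IsUnit (⟨z, hz⟩ : T) :=
    (not_iff_not.1 (h z hz (hle hz))).1 ((hS.isUnit_iff _).2 hvz)
  obtain ⟨w, hw⟩ := hunit.exists_right_inv
  rw [inv_eq_of_mul_eq_one_right (congrArg Subtype.val hw)]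
  exact w.2

theorem maximalIdeal_eq_of_mem_iff {R : Type*} [CommRing R] [IsLocalRing R] {I : Ideal R}
    (h : ∀ z, z ∈ I ↔ ¬ IsUnit z) : IsLocalRing.maximalIdeal R = I := by
  ext z
  rw [h, IsLocalRing.mem_maximalIdeal, mem_nonunits_iff]

theorem IsAlgebraicLocalRingOf.ringKrullDim_le {L : IntermediateField k F} {A : Subring F}
    (hA : IsAlgebraicLocalRingOf k L A) {d : ℕ} (hd : Algebra.trdeg k F ≤ d) :
    ringKrullDim A ≤ d := by
  obtain ⟨-, -, -, C, hC, hCA, h⟩ := hA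
  exact ringKrullDim_le_of_essFiniteType A C hC hCA h hd

theorem IsRegularLocalOfDim.eq_two {A : Subring F} [IsLocalRing A] {n : ℕ}
    (hA : IsRegularLocalOfDim A n) (hdim : ringKrullDim A ≤ 2)
    (hprin : ¬ (IsLocalRing.maximalIdeal A).IsPrincipal) : n = 2 := by
  obtain ⟨-, -, hn, s, hs⟩ := hA
  rw [maximalIdeal_eq_of_mem_iff hs] at hprin
  have hle : n ≤ 2 := by
    rw [hn] at hdim
    exact_mod_cast hdim
  interval_cases n
  · rw [Set.range_eq_empty, Ideal.span_empty] at hprin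
    exact (hprin bot_isPrincipal).elim
  · rw [Set.range_unique] at hprin
    exact (hprin ⟨_, rfl⟩).elim
  · rfl

theorem range_fin_two {R : Type*} (f : Fin 2 → R) : Set.range f = {f 0, f 1} := by
  ext z
  simp [Fin.exists_fin_two, eq_comm]

theorem exists_isUnitMonomial_of_isMonomialExtension {V : ValuationSubring F} {A B : Subring F}
    [IsLocalRing A] [IsLocalRing B] (hB : IsCentered V.valuation B)
    (hdim : ringKrullDim B ≤ 2) (hprin : ¬ (IsLocalRing.maximalIdeal B).IsPrincipal)
    (h : IsMonomialExtension A B) :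
    ringKrullDim A = 2 ∧ ringKrullDim B = 2 ∧ ∃ (a b : A) (c d : B) (m₁₁ m₁₂ m₂₁ m₂₂ : ℕ),
      IsLocalRing.maximalIdeal A = Ideal.span {a, b} ∧
      IsLocalRing.maximalIdeal B = Ideal.span {c, d} ∧ m₁₁ * m₂₂ ≠ m₁₂ * m₂₁ ∧
      IsUnitMonomial V.valuation B (c : F) d m₁₁ m₁₂ a ∧
      IsUnitMonomial V.valuation B (c : F) d m₂₁ m₂₂ b := by
  obtain ⟨n, hAB, hA, hBreg, xs, ys, δ, M, hxs, hys, hδ, hM, heq⟩ := h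
  obtain rfl := hBreg.eq_two hdim hprin
  have hmonomial i : IsUnitMonomial V.valuation B (ys 0 : F) (ys 1) (M i 0) (M i 1) (xs i) := by
    refine ⟨δ i, (δ i).2, (hB.isUnit_iff _).1 (hδ i), ?_⟩
    simpa [Fin.prod_univ_two, mul_assoc] using congrArg Subtype.val (heq i)
  refine ⟨hA.2.2.1, hBreg.2.2.1, xs 0, xs 1, ys 0, ys 1, M 0 0, M 0 1, M 1 0, M 1 1,
    range_fin_two xs ▸ maximalIdeal_eq_of_mem_iff hxs,
    range_fin_two ys ▸ maximalIdeal_eq_of_mem_iff hys, fun hdet => hM ?_,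
    hmonomial 0, hmonomial 1⟩
  rw [Matrix.det_fin_two, sub_eq_zero]
  simp only [Matrix.map_apply]
  exact_mod_cast hdet

theorem IsJumpTower.not_isMonomialExtension {V : ValuationSubring F} {p : ℕ} [CharP F p]
    {D₁ D₂ : Derivation k F F} {α β : ℕ → k} {Z U : ℕ → F}
    (h : IsJumpTower V.valuation p D₁ D₂ α β Z U) (htr : Algebra.trdeg k F ≤ 2)
    (hgen : IntermediateField.adjoin k {Z 0, Z 1} = ⊤) {A B : Subring F}
    (hA : IsAlgebraicLocalRingOf k (IntermediateField.adjoin k {U 0, U 1}) A)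
    (hB : IsAlgebraicLocalRingOf k ⊤ B) (hVB : Dominates V.toSubring B) (hBA : Dominates B A)
    (hUA : pairLocal k (U 0) (U 1) ≤ A) (hZB : pairLocal k (Z 0) (Z 1) ≤ B) :
    ¬ IsMonomialExtension A B := by
  intro hmon
  obtain ⟨-, hAB, ⟨hnoethA, hlocalA, -⟩, ⟨hnoethB, hlocalB, -⟩, -⟩ := id hmon
  have hcB := hVB.isCentered
  have hkA (c : k) : algebraMap k F c ∈ A := hUA (algebraMap_mem_pairLocal _ _ c)
  have hZ0 := hZB (left_mem_pairLocal _ _)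
  have hZ1 := hZB (right_mem_pairLocal _ _)
  have hprin := h.top.not_isPrincipal_maximalIdeal h.valuation_algebraMap h.valuation_lt_one hcB
    (fun c => hAB (hkA c)) hZ0 hZ1
  obtain ⟨hdimA, hdimB, a, b, c, d, m₁₁, m₁₂, m₂₁, m₂₂, hab, hcd, hdet, ha, hb⟩ :=
    exists_isUnitMonomial_of_isMonomialExtension hcB (hB.ringKrullDim_le htr) hprin hmon
  exact h.not_isUnitMonomial (hcB.of_dominates hBA) hcB hAB hkA (hUA (left_mem_pairLocal _ _))
    (hUA (right_mem_pairLocal _ _)) hZ0 hZ1 hdimA hdimB (fun z hz => hA.1 hz)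
    (fun _ _ => hgen ▸ IntermediateField.mem_top) hab hcd hdet ha hb

end NonMonomialization

section RationalFunctions

section IsFractionRing

variable {k F : Type} [Field k] [Field F] [Algebra k F] [Algebra (MvPolynomial (Fin 2) k) F]
variable [IsScalarTower k (MvPolynomial (Fin 2) k) F] {x y : F}
variable (hx : x = algebraMap (MvPolynomial (Fin 2) k) F (X 0))
variable (hy : y = algebraMap (MvPolynomial (Fin 2) k) F (X 1))

include hx hy

theorem aeval_pair_eq_algebraMap (f : MvPolynomial (Fin 2) k) :
    aeval ![x, y] f = algebraMap (MvPolynomial (Fin 2) k) F f := by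
  suffices aeval ![x, y] = IsScalarTower.toAlgHom k (MvPolynomial (Fin 2) k) F from
    DFunLike.congr_fun this f
  ext i
  fin_cases i <;> simp [hx, hy]

theorem localSubring_algebraMap_eq_pairLocal :
    localSubring (algebraMap (MvPolynomial (Fin 2) k) F) = pairLocal k x y :=
  congrArg localSubring (RingHom.ext (aeval_pair_eq_algebraMap hx hy)).symm

theorem adjoin_pair_eq_top [IsFractionRing (MvPolynomial (Fin 2) k) F] :
    IntermediateField.adjoin k {x, y} = ⊤ := by
  refine eq_top_iff.2 fun z _ => ?_
  obtain ⟨f, g, -, rfl⟩ := IsFractionRing.div_surjective (A := MvPolynomial (Fin 2) k) z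
  rw [← aeval_pair_eq_algebraMap hx hy, ← aeval_pair_eq_algebraMap hx hy,
    ← Matrix.range_cons_cons_empty x y ![], IntermediateField.mem_adjoin_range_iff]
  exact ⟨f, g, rfl⟩

end IsFractionRing

open TensorProduct in
theorem exists_derivation_fractionRing {k σ : Type*} [Field k]
    (a : σ → FractionRing (MvPolynomial σ k)) :
    ∃ D : Derivation k (FractionRing (MvPolynomial σ k)) (FractionRing (MvPolynomial σ k)),
      ∀ i, D (algebraMap (MvPolynomial σ k) _ (X i)) = a i := by
  have := Algebra.FormallyEtale.of_isLocalization (Rₘ := FractionRing (MvPolynomial σ k))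
    (nonZeroDivisors (MvPolynomial σ k))
  let l := (LinearMap.liftBaseChange (FractionRing (MvPolynomial σ k))
    (mkDerivation k a).liftKaehlerDifferential) ∘ₗ
      (KaehlerDifferential.tensorKaehlerEquivOfFormallyEtale k (MvPolynomial σ k)
        (FractionRing (MvPolynomial σ k))).symm.toLinearMap
  refine ⟨l.compDer (KaehlerDifferential.D k (FractionRing (MvPolynomial σ k))), fun i => ?_⟩
  simp [l, KaehlerDifferential.tensorKaehlerEquivOfFormallyEtale_symm_D_algebraMap,
    mkDerivation_X]

theorem exists_jacobian_ne_zero {k : Type} [Field k] {x y : FractionRing (MvPolynomial (Fin 2) k)}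
    (hx : x = algebraMap (MvPolynomial (Fin 2) k) _ (X 0))
    (hy : y = algebraMap (MvPolynomial (Fin 2) k) _ (X 1)) :
    ∃ D₁ D₂ : Derivation k (FractionRing (MvPolynomial (Fin 2) k))
      (FractionRing (MvPolynomial (Fin 2) k)), jacobian D₁ D₂ x y ≠ 0 := by
  obtain ⟨D₁, hD₁⟩ := exists_derivation_fractionRing (k := k) ![1, 0]
  obtain ⟨D₂, hD₂⟩ := exists_derivation_fractionRing (k := k) ![0, 1]
  exact ⟨D₁, D₂, by simp [jacobian, hx, hy, hD₁, hD₂]⟩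

end RationalFunctions

/-- Let `k` be a field of characteristic `p > 0` with at
least 3 elements, `K* = k(x,y)`, `u = x^p(1+y)`, `v = y^p + x`,
`K = k(u,v)`, `B = k[x,y]_(x,y)`, `A = k[u,v]_(u,v)`.  Then there exists an
additive valuation `ν* : (K*)ˣ → ℝ`, trivial on `kˣ`, with `ν*(x) = 1`,
value group `ℤ[1/p]`, whose valuation ring `V*` dominates `B` and has
residue field `k`, such that `ν*(u) = p`, `ν*(Kˣ) = ℤ[1/p]`, and there do
not exist regular algebraic local rings `A'` of `K` over `k` and `B'` of
`K*` over `k` with `V*` dominating `B'`, `B'` dominating `A'`, `A'`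
dominating `A`, `B'` dominating `B`, and `A' → B'` a monomial extension. -/
theorem stmt2 (k : Type) [Field k] (p : ℕ) (hp : p.Prime) [CharP k p]
    (hcard : 3 ≤ Cardinal.mk k)
    (x y u v : FractionRing (MvPolynomial (Fin 2) k))
    (hx : x = algebraMap (MvPolynomial (Fin 2) k) _ (X 0))
    (hy : y = algebraMap (MvPolynomial (Fin 2) k) _ (X 1))
    (huv : u = x ^ p * (1 + y)) (hvv : v = y ^ p + x)
    (K : IntermediateField k (FractionRing (MvPolynomial (Fin 2) k)))
    (hK : K = IntermediateField.adjoin k {u, v})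
    (B : Subring (FractionRing (MvPolynomial (Fin 2) k)))
    (hB : B = localSubring
      (algebraMap (MvPolynomial (Fin 2) k) (FractionRing (MvPolynomial (Fin 2) k))))
    (A : Subring (FractionRing (MvPolynomial (Fin 2) k)))
    (hA : A = localSubring
      ((MvPolynomial.aeval ![u, v] :
        MvPolynomial (Fin 2) k →ₐ[k] FractionRing (MvPolynomial (Fin 2) k)).toRingHom)) :
    ∃ (ν : FractionRing (MvPolynomial (Fin 2) k) → ℝ)
      (V : Subring (FractionRing (MvPolynomial (Fin 2) k))),
      -- `ν` is an additive valuation on `K*`: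
      (∀ a b : FractionRing (MvPolynomial (Fin 2) k), a ≠ 0 → b ≠ 0 →
        ν (a * b) = ν a + ν b) ∧
      (∀ a b : FractionRing (MvPolynomial (Fin 2) k), a ≠ 0 → b ≠ 0 → a + b ≠ 0 →
        min (ν a) (ν b) ≤ ν (a + b)) ∧
      -- `ν` is trivial on `kˣ`:
      (∀ c : k, c ≠ 0 → ν (algebraMap k (FractionRing (MvPolynomial (Fin 2) k)) c) = 0) ∧
      -- `ν(x) = 1`:
      ν x = 1 ∧
      -- the value group of `ν` is `ℤ[1/p]`:
      {r : ℝ | ∃ z : FractionRing (MvPolynomial (Fin 2) k), z ≠ 0 ∧ ν z = r}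
        = {r : ℝ | ∃ (m : ℤ) (j : ℕ), r = (m : ℝ) / (p : ℝ) ^ j} ∧
      -- `V` is the valuation ring of `ν`:
      (∀ z : FractionRing (MvPolynomial (Fin 2) k),
        z ∈ V ↔ z = 0 ∨ (z ≠ 0 ∧ 0 ≤ ν z)) ∧
      IsValuationSubring V ∧
      -- `V` dominates `B`:
      Dominates V B ∧
      -- the residue field of `V` is `k`:
      (∀ z ∈ V, ∃ c : k,
        z - algebraMap k (FractionRing (MvPolynomial (Fin 2) k)) c = 0 ∨
        (z - algebraMap k (FractionRing (MvPolynomial (Fin 2) k)) c ≠ 0 ∧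
          0 < ν (z - algebraMap k (FractionRing (MvPolynomial (Fin 2) k)) c))) ∧
      -- the restriction of `ν` to `K` satisfies `ν(u) = p`:
      ν u = (p : ℝ) ∧
      -- the value group of the restriction of `ν` to `K` is `ℤ[1/p]`:
      {r : ℝ | ∃ z : FractionRing (MvPolynomial (Fin 2) k), z ∈ K ∧ z ≠ 0 ∧ ν z = r}
        = {r : ℝ | ∃ (m : ℤ) (j : ℕ), r = (m : ℝ) / (p : ℝ) ^ j} ∧
      -- no (weak) local monomialization of `A → B` along `V`:
      ¬ ∃ A' B' : Subring (FractionRing (MvPolynomial (Fin 2) k)),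
          IsAlgebraicLocalRingOf k K A' ∧
          IsAlgebraicLocalRingOf k
            (⊤ : IntermediateField k (FractionRing (MvPolynomial (Fin 2) k))) B' ∧
          (∃ m, IsRegularLocalOfDim A' m) ∧
          (∃ m, IsRegularLocalOfDim B' m) ∧
          Dominates V B' ∧ Dominates B' A' ∧
          Dominates A' A ∧ Dominates B' B ∧
          IsMonomialExtension A' B' := by
  have : Fact p.Prime := ⟨hp⟩
  have := charP_of_injective_algebraMap
    (algebraMap k (FractionRing (MvPolynomial (Fin 2) k))).injective p
  have htr := trdeg_fractionRing_mvPolynomial_fin_two (k := k)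
  have hgen : IntermediateField.adjoin k {x, y} = ⊤ := adjoin_pair_eq_top hx hy
  replace hB : B = pairLocal k x y := hB.trans (localSubring_algebraMap_eq_pairLocal hx hy)
  replace hA : A = pairLocal k u v := hA
  obtain ⟨D₁, D₂, hJ⟩ := exists_jacobian_ne_zero hx hy
  obtain ⟨α, β, Z, U, ν, h, rfl, rfl, hU0, hU1, hT⟩ :=
    exists_isChainValuation_isJumpTower hcard htr.ge hgen hJ (p := p)
  obtain rfl : U 0 = u := hU0.trans huv.symm
  obtain rfl : U 1 = v := hU1.trans hvv.symm
  refine ⟨ν, h.valuationSubring.toSubring, h.map_mul, h.min_le_map_add,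
    fun _ => h.map_algebraMap, by simpa using h.map_apply 0, h.setOf_map_eq,
    fun _ => h.mem_valuationSubring_iff, h.isValuationSubring, hB ▸ (h.isCentered 0).dominates,
    fun z hz => (h.exists_valuation_sub_algebraMap_lt_one hz).imp fun _ => h.valuation_lt_one_iff.1,
    by simpa using hT.map_base h 0, hK ▸ hT.setOf_map_adjoin_eq h, ?_⟩
  rintro ⟨A', B', hA', hB', -, -, hVB, hBA, ⟨hAA, -⟩, ⟨hBB, -⟩, hmon⟩
  exact hT.not_isMonomialExtension htr.le hgen (hK ▸ hA') hB' hVB hBA (hA ▸ hAA) (hB ▸ hBB) hmon
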